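/- arXiv:1310.2105 — 2 statements merged into one kernel-verified Lean document; each statement's English description precedes it below -/
import Mathlib

section
/- Let N ≥ 3, a > 0, ω² = 1+2a, μ = a/ω² < 1/2, let τ be the N×N cyclic permutation matrix and A = ω²(I − μ(τ + τᵀ)). Then A is a symmetric positive-definite circulant matrix; the linear change of coordinates q = A^{1/4}x, p = A^{−1/4}y is canonical and transforms H0(x,y) = ½ y·y + ½ x·Ax into H_Ω + Z0 with {H_Ω, Z0} = 0, where Ω is the average of the square roots of the eigenvalues of A, H_Ω = (Ω/2) Σ_{j=1}^N (q_j² + p_j²), and Z0 = ½ p·Bp + ½ q·Bq with B = A^{1/2} − Ω I. Moreover the first row of A^{1/4} satisfies |(A^{1/4})_{1,j}| ≤ 2√ω (2μ)^{j−1} for 1 ≤ j ≤ ⌊N/2⌋ + 1. -/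
open Matrix

/-- Poisson bracket of two functions on the phase space `ℝ^N × ℝ^N` (coordinates
`(q,p)`), defined through the Fréchet derivative:
`{F,G}(z) = Σ_l (∂F/∂q_l ∂G/∂p_l − ∂F/∂p_l ∂G/∂q_l)(z)`. -/
noncomputable def pb (N : ℕ) (F G : (Fin N → ℝ) × (Fin N → ℝ) → ℝ)
    (z : (Fin N → ℝ) × (Fin N → ℝ)) : ℝ :=
  ∑ l : Fin N,
    (fderiv ℝ F z (Pi.single l 1, 0) * fderiv ℝ G z (0, Pi.single l 1) -
      fderiv ℝ F z (0, Pi.single l 1) * fderiv ℝ G z (Pi.single l 1, 0))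


/-- the cyclic permutation matrix -/
def tauM (N : ℕ) : Matrix (Fin N) (Fin N) ℝ :=
  Matrix.of fun i j : Fin N => if i = finRotate N j then (1 : ℝ) else 0

/-- the symmetric neighbour matrix -/
def SM (N : ℕ) : Matrix (Fin N) (Fin N) ℝ := tauM N + (tauM N)ᵀ

lemma SM_symm (N : ℕ) : (SM N)ᵀ = SM N := by
  simp [SM, add_comm]

lemma mul_SM (N : ℕ) (M : Matrix (Fin N) (Fin N) ℝ) (i j : Fin N) :
    (M * SM N) i j = M i (finRotate N j) + M i ((finRotate N).symm j) := by
  simp only [SM, tauM, Matrix.mul_apply, Matrix.add_apply, Matrix.transpose_apply, Matrix.of_apply,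
    mul_add, Finset.sum_add_distrib, mul_ite, mul_one, mul_zero]
  congr 1
  · simp
  · simp only [← Equiv.symm_apply_eq]
    rw [Finset.sum_eq_single ((finRotate N).symm j)] <;> simp +contextual [eq_comm]

lemma SM_mulVec (N : ℕ) (x : Fin N → ℝ) (j : Fin N) :
    (SM N *ᵥ x) j = x (finRotate N j) + x ((finRotate N).symm j) := by
  simp only [SM, tauM, Matrix.mulVec, dotProduct, Matrix.add_apply, Matrix.transpose_apply,
    Matrix.of_apply, add_mul, Finset.sum_add_distrib, ite_mul, one_mul, zero_mul]
  rw [add_comm]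
  congr 1
  · simp
  · simp only [← Equiv.symm_apply_eq]
    simp

lemma SM_quad (N : ℕ) (x : Fin N → ℝ) :
    x ⬝ᵥ (SM N *ᵥ x) = 2 * ∑ j, x j * x (finRotate N j) := by
  simp only [dotProduct, SM_mulVec, mul_add, Finset.sum_add_distrib]
  rw [two_mul]
  congr 1
  rw [← Equiv.sum_comp (finRotate N)]
  refine Finset.sum_congr rfl fun j _ => ?_
  rw [Equiv.symm_apply_apply, mul_comm]

lemma SM_quad_le (N : ℕ) (x : Fin N → ℝ) : |x ⬝ᵥ (SM N *ᵥ x)| ≤ 2 * (x ⬝ᵥ x) := by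
  rw [SM_quad, abs_mul, abs_two]
  have h2 : ∑ j, x (finRotate N j) * x (finRotate N j) = x ⬝ᵥ x :=
    Equiv.sum_comp (finRotate N) (fun j => x j * x j)
  have h3 : x ⬝ᵥ x = ∑ j, (x j * x j + x (finRotate N j) * x (finRotate N j)) / 2 := by
    rw [← Finset.sum_div, Finset.sum_add_distrib, h2]
    simp only [dotProduct]
    ring
  rw [h3]
  gcongr
  refine (Finset.abs_sum_le_sum_abs _ _).trans (Finset.sum_le_sum fun j _ => ?_)
  rw [abs_le]
  constructor <;> nlinarith [sq_nonneg (x j - x (finRotate N j)), sq_nonneg (x j + x (finRotate N j))]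

lemma posDef_one_sub (N : ℕ) (c : ℝ) (hc : |c| < 1 / 2) :
    ((1 : Matrix (Fin N) (Fin N) ℝ) - c • SM N).PosDef := by
  apply Matrix.PosDef.of_dotProduct_mulVec_pos
  · simp [Matrix.IsHermitian, Matrix.conjTranspose_eq_transpose_of_trivial, SM_symm]
  · intro x hx
    have hpos : 0 < x ⬝ᵥ x := by
      have := Matrix.dotProduct_star_self_pos_iff (v := x)
      simpa using this.2 hx
    simp only [star_trivial, Matrix.sub_mulVec, Matrix.one_mulVec, dotProduct_sub,
      Matrix.smul_mulVec, dotProduct_smul, smul_eq_mul]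
    have h1 := SM_quad_le N x
    have h2 : c * (x ⬝ᵥ (SM N *ᵥ x)) ≤ |c| * (2 * (x ⬝ᵥ x)) := by
      refine (le_abs_self _).trans ?_
      rw [abs_mul]
      gcongr
    nlinarith

lemma SM_pow_bound (N : ℕ) (k : ℕ) (i j : Fin N) : |(SM N ^ k) i j| ≤ 2 ^ k := by
  induction k generalizing j with
  | zero => simp [Matrix.one_apply]; split_ifs <;> simp
  | succ k ih =>
    rw [pow_succ, mul_SM, pow_succ]
    refine (abs_add_le _ _).trans ?_
    linarith [ih (finRotate N j), ih ((finRotate N).symm j)]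

lemma SM_pow_zero (n : ℕ) (k : ℕ) (j : Fin (n + 1)) (h1 : k < j.val) (h2 : k < n + 1 - j.val) :
    (SM (n + 1) ^ k) 0 j = 0 := by
  induction k generalizing j with
  | zero =>
    rw [pow_zero, Matrix.one_apply_ne]
    rintro rfl
    simp at h1
  | succ k ih =>
    have hj : j ≠ 0 := by rintro rfl; simp at h1
    have e2 : ((finRotate (n + 1)).symm j : ℕ) = j - 1 := coe_finRotate_symm_of_ne_zero hj
    have hl : j ≠ Fin.last n := by rintro rfl; simp at h2
    have e1 : (finRotate (n + 1) j : ℕ) = j + 1 := coe_finRotate_of_ne_last hl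
    rw [pow_succ, mul_SM, ih _ (by omega) (by omega), ih _ (by omega) (by omega), add_zero]

/-- binomial coefficients of exponent 1/4 -/
noncomputable def cc (k : ℕ) : ℝ := Ring.choose (1 / 4 : ℝ) k

lemma cc_zero : cc 0 = 1 := by simp [cc]

lemma cc_succ (k : ℕ) : ((k : ℝ) + 1) * cc (k + 1) = (1 / 4 - k) * cc k := by
  have h1 := Ring.descPochhammer_eq_factorial_smul_choose (1 / 4 : ℝ) (k + 1)
  have h0 := Ring.descPochhammer_eq_factorial_smul_choose (1 / 4 : ℝ) k
  rw [descPochhammer_succ_right, Polynomial.smeval_mul, h0] at h1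
  simp only [Polynomial.smeval_sub, Polynomial.smeval_X, Polynomial.smeval_natCast, pow_one,
    pow_zero, nsmul_eq_mul, Nat.factorial_succ, Nat.cast_mul, mul_one] at h1
  have hf : (k.factorial : ℝ) ≠ 0 := by positivity
  apply mul_left_cancel₀ hf
  simp only [cc]
  push_cast at h1
  linarith

lemma cc_sum (n : ℕ) :
    ∑ k ∈ Finset.range (n + 2), |cc k| + (4 * (n + 1 : ℝ) - 1) * |cc (n + 1)| = 2 := by
  induction n with
  | zero =>
    have := cc_succ 0
    norm_num [cc_zero] at this
    norm_num [Finset.sum_range_succ, cc_zero, this]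
  | succ n ih =>
    rw [Finset.sum_range_succ]
    have h := congrArg abs (cc_succ (n + 1))
    rw [abs_mul, abs_mul, abs_of_nonneg (by positivity), abs_of_nonpos (a := 1 / 4 - _)] at h
    · push_cast at h ⊢
      linarith
    · push_cast
      have : (0 : ℝ) ≤ n := by positivity
      linarith

lemma cc_sum_le (n : ℕ) : ∑ k ∈ Finset.range n, |cc k| ≤ 2 := by
  have h : ∑ k ∈ Finset.range n, |cc k| ≤ ∑ k ∈ Finset.range (n + 2), |cc k| :=
    Finset.sum_le_sum_of_subset_of_nonneg (Finset.range_mono (by omega)) (fun _ _ _ => abs_nonneg _)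
  have h2 := cc_sum n
  have : 0 ≤ (4 * (n + 1 : ℝ) - 1) * |cc (n + 1)| := by
    apply mul_nonneg _ (abs_nonneg _)
    have : (0 : ℝ) ≤ n := by positivity
    linarith
  linarith

lemma cc_hasSum (s : ℝ) (hs : |s| < 1) :
    HasSum (fun k => cc k * (-1) ^ k * s ^ k) ((1 - s) ^ (1 / 4 : ℝ)) := by
  have h := (Real.one_add_rpow_hasFPowerSeriesOnBall_zero (a := 1 / 4)).hasSum (y := -s)
    (by simpa [← ofReal_norm] using hs)
  simp only [binomialSeries_apply, zero_add, List.ofFn_const, List.prod_replicate, smul_eq_mul,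
    ← sub_eq_add_neg, zero_sub] at h
  have e : (fun k => cc k * (-1) ^ k * s ^ k) = fun n => Ring.choose (1 / 4 : ℝ) n * (-s) ^ n := by
    funext k
    rw [neg_pow s, cc, mul_assoc]
  rw [e]
  exact h

lemma spectral (N : ℕ) (R : Matrix (Fin N) (Fin N) ℝ) (hR : R.PosDef) :
    ∃ (U : Matrix (Fin N) (Fin N) ℝ) (r : Fin N → ℝ), (∀ i, 0 < r i) ∧ Uᵀ * U = 1 ∧ U * Uᵀ = 1 ∧
      R = U * diagonal r * Uᵀ := by
  refine ⟨hR.1.eigenvectorUnitary, hR.1.eigenvalues, hR.eigenvalues_pos, ?_, ?_, ?_⟩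
  · have := Unitary.coe_star_mul_self hR.1.eigenvectorUnitary
    simpa [Matrix.star_eq_conjTranspose, Matrix.conjTranspose_eq_transpose_of_trivial] using this
  · have := Unitary.coe_mul_star_self hR.1.eigenvectorUnitary
    simpa [Matrix.star_eq_conjTranspose, Matrix.conjTranspose_eq_transpose_of_trivial] using this
  · have := hR.1.spectral_theorem
    rw [Unitary.conjStarAlgAut_apply] at this
    simpa [Matrix.star_eq_conjTranspose, Matrix.conjTranspose_eq_transpose_of_trivial,
      Function.comp_def] using this

lemma orth_conj_pow {N : ℕ} (U : Matrix (Fin N) (Fin N) ℝ) (hU : Uᵀ * U = 1) (hU' : U * Uᵀ = 1)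
    (d : Fin N → ℝ) (k : ℕ) :
    (U * diagonal d * Uᵀ) ^ k = U * diagonal (fun i => d i ^ k) * Uᵀ := by
  induction k with
  | zero => simp [hU']
  | succ k ih =>
    rw [pow_succ, ih]
    calc _ = U * diagonal (fun i => d i ^ k) * (Uᵀ * U) * diagonal d * Uᵀ := by
          simp only [Matrix.mul_assoc]
      _ = _ := by
          rw [hU, Matrix.mul_one, Matrix.mul_assoc U, Matrix.diagonal_mul_diagonal]
          simp only [pow_succ]

lemma orth_conj_apply {N : ℕ} (U : Matrix (Fin N) (Fin N) ℝ) (d : Fin N → ℝ) (i j : Fin N) :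
    (U * diagonal d * Uᵀ) i j = ∑ l, U i l * d l * U j l := by
  simp [Matrix.mul_apply (M := U * diagonal d), Matrix.mul_diagonal]

lemma root_hasSum (N : ℕ) (w μ : ℝ) (hw : 0 < w) (hμ : |μ| < 1 / 2)
    (R : Matrix (Fin N) (Fin N) ℝ) (hR : R.PosDef)
    (h4 : R ^ 4 = (w ^ 4) • ((1 : Matrix (Fin N) (Fin N) ℝ) - μ • SM N)) (i j : Fin N) :
    HasSum (fun k => cc k * (-1) ^ k * (μ ^ k * (SM N ^ k) i j)) (w⁻¹ * R i j) := by
  obtain ⟨U, r, hr, hU, hU', hRU⟩ := spectral N R hR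
  have hS : μ • SM N = U * diagonal (fun l => 1 - (r l / w) ^ 4) * Uᵀ := by
    have e1 : (fun l => 1 - (r l / w) ^ 4) = fun l => 1 - (w ^ 4)⁻¹ * r l ^ 4 := by
      funext l; field_simp
    have e2 : (diagonal (fun l => 1 - (w ^ 4)⁻¹ * r l ^ 4) : Matrix (Fin N) (Fin N) ℝ)
        = 1 - (w ^ 4)⁻¹ • diagonal (fun l => r l ^ 4) := by
      rw [← diagonal_one, ← diagonal_smul, ← diagonal_sub]
      rfl
    rw [e1, e2, Matrix.mul_sub, Matrix.sub_mul, Matrix.mul_one, hU', Matrix.mul_smul,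
      Matrix.smul_mul, ← orth_conj_pow U hU hU', ← hRU, h4, smul_smul, inv_mul_cancel₀ (by positivity)]
    simp
  have hs : ∀ l, |1 - (r l / w) ^ 4| < 1 := by
    intro l
    have p := (posDef_one_sub N (-μ) (by simpa using hμ)).conjTranspose_mul_mul_same
      (B := U) (by
        intro x y hxy
        have := congrArg (fun v => Uᵀ *ᵥ v) hxy
        simpa [hU] using this)
    have := p.diag_pos (i := l)
    rw [Matrix.conjTranspose_eq_transpose_of_trivial, neg_smul, sub_neg_eq_add, hS] at this
    have e : Uᵀ * (1 + U * diagonal (fun l => 1 - (r l / w) ^ 4) * Uᵀ) * U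
        = 1 + diagonal (fun l => 1 - (r l / w) ^ 4) := by
      rw [Matrix.mul_add, Matrix.add_mul, Matrix.mul_one, hU]
      congr 1
      calc _ = (Uᵀ * U) * diagonal (fun l => 1 - (r l / w) ^ 4) * (Uᵀ * U) := by
            simp only [Matrix.mul_assoc]
        _ = _ := by rw [hU]; simp
    rw [e] at this
    simp at this
    have h3 : 0 < (r l / w) ^ 4 := by have := hr l; positivity
    rw [abs_lt]
    constructor <;> linarith
  have hpow : ∀ k, μ ^ k * (SM N ^ k) i j = ∑ l, U i l * (1 - (r l / w) ^ 4) ^ k * U j l := by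
    intro k
    rw [← orth_conj_apply, ← orth_conj_pow U hU hU', ← hS, smul_pow]
    simp
  have hRe : w⁻¹ * R i j = ∑ l, U i l * (1 - (1 - (r l / w) ^ 4)) ^ (1 / 4 : ℝ) * U j l := by
    rw [hRU, orth_conj_apply, Finset.mul_sum]
    refine Finset.sum_congr rfl fun l _ => ?_
    have : (1 - (1 - (r l / w) ^ 4)) ^ (1 / 4 : ℝ) = r l / w := by
      have h0 : 0 ≤ r l / w := by have := hr l; positivity
      rw [sub_sub_cancel, ← Real.rpow_natCast, ← Real.rpow_mul h0]
      norm_num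
    rw [this]
    field_simp
  rw [hRe]
  have := hasSum_sum (s := Finset.univ) (fun l _ =>
    ((cc_hasSum _ (hs l)).mul_left (U i l)).mul_right (U j l))
  have e : (fun k => cc k * (-1) ^ k * (μ ^ k * (SM N ^ k) i j)) = fun k =>
      ∑ l, U i l * (cc k * (-1) ^ k * (1 - (r l / w) ^ 4) ^ k) * U j l := by
    funext k
    rw [hpow, Finset.mul_sum]
    refine Finset.sum_congr rfl fun l _ => ?_
    ring
  rw [e]
  exact this

lemma decay (n : ℕ) (w μ : ℝ) (hw : 0 < w) (hμ0 : 0 ≤ μ) (hμ : μ < 1 / 2)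
    (R : Matrix (Fin (n + 1)) (Fin (n + 1)) ℝ) (hR : R.PosDef)
    (h4 : R ^ 4 = (w ^ 4) • ((1 : Matrix (Fin (n + 1)) (Fin (n + 1)) ℝ) - μ • SM (n + 1)))
    (j : Fin (n + 1)) (hj : (j : ℕ) ≤ (n + 1) / 2) :
    |R 0 j| ≤ 2 * w * (2 * μ) ^ (j : ℕ) := by
  have h := root_hasSum (n + 1) w μ hw (by rwa [abs_of_nonneg hμ0]) R hR h4 0 j
  have hb : |w⁻¹ * R 0 j| ≤ 2 * (2 * μ) ^ (j : ℕ) := by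
    refine le_of_tendsto h.tendsto_sum_nat.abs (Filter.Eventually.of_forall fun m => ?_)
    calc _ ≤ ∑ k ∈ Finset.range m, |cc k * (-1) ^ k * (μ ^ k * (SM (n + 1) ^ k) 0 j)| :=
          Finset.abs_sum_le_sum_abs _ _
      _ ≤ ∑ k ∈ Finset.range m, |cc k| * (2 * μ) ^ (j : ℕ) := by
          refine Finset.sum_le_sum fun k _ => ?_
          rw [abs_mul, abs_mul, abs_pow, abs_neg, abs_one, one_pow, mul_one]
          gcongr
          by_cases hk : k < (j : ℕ)
          · rw [SM_pow_zero n k j hk (by omega)]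
            simp
            positivity
          · rw [abs_mul, abs_of_nonneg (pow_nonneg hμ0 k)]
            calc _ ≤ μ ^ k * 2 ^ k := by gcongr; exact SM_pow_bound _ _ _ _
              _ = (2 * μ) ^ k := by rw [mul_pow, mul_comm]
              _ ≤ _ := pow_le_pow_of_le_one (by positivity) (by linarith) (by omega)
      _ ≤ _ := by
          rw [← Finset.sum_mul]
          gcongr
          exact cc_sum_le m
  rw [abs_mul, abs_inv, abs_of_pos hw, inv_mul_le_iff₀ hw] at hb
  linarith

lemma quad_fderiv {N : ℕ} (B : Matrix (Fin N) (Fin N) ℝ) (hB : Bᵀ = B)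
    (z u : (Fin N → ℝ) × (Fin N → ℝ)) :
    fderiv ℝ (fun w : (Fin N → ℝ) × (Fin N → ℝ) =>
      (1 / 2 : ℝ) * (w.2 ⬝ᵥ B.mulVec w.2) + (1 / 2) * (w.1 ⬝ᵥ B.mulVec w.1)) z u
      = u.2 ⬝ᵥ B *ᵥ z.2 + u.1 ⬝ᵥ B *ᵥ z.1 := by
  have hd : DifferentiableAt ℝ (fun w : (Fin N → ℝ) × (Fin N → ℝ) =>
      (1 / 2 : ℝ) * (w.2 ⬝ᵥ B.mulVec w.2) + (1 / 2) * (w.1 ⬝ᵥ B.mulVec w.1)) z := by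
    simp only [dotProduct, mulVec]
    fun_prop
  rw [← hd.lineDeriv_eq_fderiv]
  apply HasLineDerivAt.lineDeriv
  unfold HasLineDerivAt
  have sy : ∀ x y : Fin N → ℝ, x ⬝ᵥ B *ᵥ y = y ⬝ᵥ B *ᵥ x := by
    intro x y
    rw [dotProduct_mulVec, ← mulVec_transpose, hB, dotProduct_comm]
  have key : (fun t : ℝ => (1 / 2 : ℝ) * ((z + t • u).2 ⬝ᵥ B.mulVec (z + t • u).2) +
      (1 / 2) * ((z + t • u).1 ⬝ᵥ B.mulVec (z + t • u).1)) = fun t =>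
      ((1 / 2 : ℝ) * (z.2 ⬝ᵥ B *ᵥ z.2) + (1 / 2) * (z.1 ⬝ᵥ B *ᵥ z.1)) +
      t * (u.2 ⬝ᵥ B *ᵥ z.2 + u.1 ⬝ᵥ B *ᵥ z.1) +
      t ^ 2 * ((1 / 2 : ℝ) * (u.2 ⬝ᵥ B *ᵥ u.2) + (1 / 2) * (u.1 ⬝ᵥ B *ᵥ u.1)) := by
    funext t
    simp only [Prod.fst_add, Prod.snd_add, Prod.smul_fst, Prod.smul_snd, mulVec_add, mulVec_smul,
      add_dotProduct, dotProduct_add, smul_dotProduct, dotProduct_smul, smul_eq_mul]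
    rw [sy z.2 u.2, sy z.1 u.1]
    ring
  rw [key]
  have := (((hasDerivAt_id (0 : ℝ)).mul_const (u.2 ⬝ᵥ B *ᵥ z.2 + u.1 ⬝ᵥ B *ᵥ z.1)).const_add
    ((1 / 2 : ℝ) * (z.2 ⬝ᵥ B *ᵥ z.2) + (1 / 2) * (z.1 ⬝ᵥ B *ᵥ z.1))).add
    (((hasDerivAt_id (0 : ℝ)).pow 2).mul_const
      ((1 / 2 : ℝ) * (u.2 ⬝ᵥ B *ᵥ u.2) + (1 / 2) * (u.1 ⬝ᵥ B *ᵥ u.1)))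
  refine (HasDerivAt.congr_deriv this ?_)
  simp

lemma pb_zero {N : ℕ} (B : Matrix (Fin N) (Fin N) ℝ) (hB : Bᵀ = B) (Ωv : ℝ)
    (z : (Fin N → ℝ) × (Fin N → ℝ)) :
    pb N (fun w => (Ωv / 2) * ∑ j, (w.1 j ^ 2 + w.2 j ^ 2))
      (fun w => (1 / 2) * (w.2 ⬝ᵥ B.mulVec w.2) + (1 / 2) * (w.1 ⬝ᵥ B.mulVec w.1)) z = 0 := by
  have hF : (fun w : (Fin N → ℝ) × (Fin N → ℝ) => (Ωv / 2) * ∑ j, (w.1 j ^ 2 + w.2 j ^ 2)) =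
      fun w => (1 / 2 : ℝ) * (w.2 ⬝ᵥ (Ωv • (1 : Matrix (Fin N) (Fin N) ℝ)).mulVec w.2) +
        (1 / 2) * (w.1 ⬝ᵥ (Ωv • (1 : Matrix (Fin N) (Fin N) ℝ)).mulVec w.1) := by
    funext w
    simp only [smul_mulVec, one_mulVec, dotProduct_smul, smul_eq_mul]
    simp only [dotProduct, Finset.sum_add_distrib, pow_two]
    ring
  rw [hF]
  unfold pb
  simp only [quad_fderiv B hB, quad_fderiv (Ωv • (1 : Matrix (Fin N) (Fin N) ℝ)) (by simp)]
  simp only [smul_mulVec, one_mulVec, zero_dotProduct, single_dotProduct, add_zero, zero_add,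
    one_mul, Pi.smul_apply, smul_eq_mul]
  have sy : z.1 ⬝ᵥ B *ᵥ z.2 = z.2 ⬝ᵥ B *ᵥ z.1 := by
    rw [dotProduct_mulVec, ← mulVec_transpose, hB, dotProduct_comm]
  simp only [mul_assoc, ← mul_sub, ← Finset.mul_sum, Finset.sum_sub_distrib]
  simp only [dotProduct] at sy
  rw [sy]
  simp

/-- for `N ≥ 3`, `a > 0`, `ω² = 1+2a`, `μ = a/ω² < 1/2`, `τ` the cyclic
permutation matrix and `A = ω²(I − μ(τ + τᵀ))`: `A` is symmetric, positive definite
and circulant; for `R = A^{1/4}` (the positive-definite fourth root), the linear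
change `q = Rx`, `p = R⁻¹y` is canonical (preserves the symplectic form) and puts
`H0 = ½y·y + ½x·Ax` in the form `H_Ω + Z0`, where `Ω` is the average of the square
roots of the eigenvalues of `A` (i.e. `trace(A^{1/2})/N`), `H_Ω = (Ω/2)Σ(q_j²+p_j²)`,
`Z0 = ½p·Bp + ½q·Bq` with `B = A^{1/2} − ΩI`, and `{H_Ω, Z0} = 0`; moreover the first
row of `A^{1/4}` satisfies `|(A^{1/4})_{1,j}| ≤ 2√ω (2μ)^{j−1}` for `1 ≤ j ≤ ⌊N/2⌋+1`. -/
theorem stmt6 (N : ℕ) (hN : 3 ≤ N) (a : ℝ) (ha : 0 < a)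
    (ω μ : ℝ) (hω : ω = Real.sqrt (1 + 2 * a)) (hμdef : μ = a / (1 + 2 * a))
    (hμ : μ < 1 / 2)
    (τm A : Matrix (Fin N) (Fin N) ℝ)
    (hτ : τm = Matrix.of fun i j : Fin N => if i = finRotate N j then (1 : ℝ) else 0)
    (hA : A = (1 + 2 * a) • ((1 : Matrix (Fin N) (Fin N) ℝ) - μ • (τm + τmᵀ))) :
    A.IsSymm ∧ A.PosDef ∧ (∃ v : Fin N → ℝ, A = Matrix.circulant v) ∧
    ∀ R : Matrix (Fin N) (Fin N) ℝ, R.PosDef → R ^ 4 = A →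
      ∀ Ωv : ℝ, Ωv = Matrix.trace (R ^ 2) / N →
        ∀ B : Matrix (Fin N) (Fin N) ℝ, B = R ^ 2 - Ωv • (1 : Matrix (Fin N) (Fin N) ℝ) →
          -- the transformation is canonical: it preserves the symplectic form
          (∀ x y x' y' : Fin N → ℝ,
            R.mulVec x ⬝ᵥ R⁻¹.mulVec y' - R⁻¹.mulVec y ⬝ᵥ R.mulVec x' =
              x ⬝ᵥ y' - y ⬝ᵥ x') ∧
          -- H0 is transformed into H_Ω + Z0
          (∀ x y : Fin N → ℝ,
            (1 / 2) * (y ⬝ᵥ y) + (1 / 2) * (x ⬝ᵥ A.mulVec x) =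
              (Ωv / 2) * (∑ j, ((R.mulVec x) j ^ 2 + (R⁻¹.mulVec y) j ^ 2)) +
              ((1 / 2) * (R⁻¹.mulVec y ⬝ᵥ B.mulVec (R⁻¹.mulVec y)) +
                (1 / 2) * (R.mulVec x ⬝ᵥ B.mulVec (R.mulVec x)))) ∧
          -- `{H_Ω, Z0} = 0`
          (∀ z : (Fin N → ℝ) × (Fin N → ℝ),
            pb N (fun w => (Ωv / 2) * ∑ j, (w.1 j ^ 2 + w.2 j ^ 2))
              (fun w => (1 / 2) * (w.2 ⬝ᵥ B.mulVec w.2) + (1 / 2) * (w.1 ⬝ᵥ B.mulVec w.1))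
              z = 0) ∧
          -- exponential decay of the first row of `A^{1/4}`
          (∀ j : ℕ, (hj1 : 1 ≤ j) → (hj2 : j ≤ N / 2 + 1) →
            |R ⟨0, by omega⟩ ⟨j - 1, by omega⟩| ≤ 2 * Real.sqrt ω * (2 * μ) ^ (j - 1)) := by
  have hτ' : τm = tauM N := hτ
  have hA' : A = (1 + 2 * a) • ((1 : Matrix (Fin N) (Fin N) ℝ) - μ • SM N) := by
    rw [hA, hτ', SM]
  have hμ0 : 0 ≤ μ := by rw [hμdef]; positivity
  have hpd : A.PosDef := by
    rw [hA']
    exact (posDef_one_sub N μ (by rwa [abs_of_nonneg hμ0])).smul (by positivity)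
  refine ⟨?_, hpd, ?_, ?_⟩
  · simp [Matrix.IsSymm, hA', SM_symm]
  · obtain ⟨n, rfl⟩ : ∃ n, N = n + 1 := ⟨N - 1, by omega⟩
    refine ⟨fun d => (1 + 2 * a) * ((if d = 0 then 1 else 0) -
      μ * ((if d = 1 then 1 else 0) + (if d = -1 then 1 else 0))), ?_⟩
    ext i j
    have e1 : (i = j + 1) ↔ (i - j = 1) := by
      rw [sub_eq_iff_eq_add, add_comm j 1]
    have e2 : (j = i + 1) ↔ (i - j = -1) := by
      rw [← neg_inj (a := i - j), neg_neg, neg_sub, sub_eq_iff_eq_add, add_comm i 1]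
    simp only [hA', SM, tauM, Matrix.circulant_apply, Matrix.smul_apply, Matrix.sub_apply,
      Matrix.add_apply, Matrix.transpose_apply, Matrix.of_apply, finRotate_apply,
      Matrix.one_apply, smul_eq_mul, sub_eq_zero, e1, e2]
  intro R hR h4 Ωv hΩ B hBdef
  have hRs : Rᵀ = R := by
    have := hR.1
    rwa [Matrix.IsHermitian, Matrix.conjTranspose_eq_transpose_of_trivial] at this
  have hdet : IsUnit R.det := (Matrix.isUnit_iff_isUnit_det R).1 hR.isUnit
  have hRi : R⁻¹ᵀ = R⁻¹ := by rw [Matrix.transpose_nonsing_inv, hRs]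
  have hB : Bᵀ = B := by
    rw [hBdef]
    simp [Matrix.transpose_pow, hRs]
  have r1 : R * R⁻¹ = 1 := Matrix.mul_nonsing_inv R hdet
  have r2 : R⁻¹ * R = 1 := Matrix.nonsing_inv_mul R hdet
  -- moving a symmetric matrix across the dot product
  have mv : ∀ M : Matrix (Fin N) (Fin N) ℝ, Mᵀ = M → ∀ x y : Fin N → ℝ,
      M *ᵥ x ⬝ᵥ y = x ⬝ᵥ M *ᵥ y := by
    intro M hM x y
    rw [dotProduct_mulVec, ← mulVec_transpose, hM]
  refine ⟨?_, ?_, pb_zero B hB Ωv, ?_⟩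
  · intro x y x' y'
    rw [mv R hRs, mv R⁻¹ hRi, mulVec_mulVec, mulVec_mulVec, r1, r2, one_mulVec, one_mulVec]
  · intro x y
    have hs : ∑ j, ((R.mulVec x) j ^ 2 + (R⁻¹.mulVec y) j ^ 2) =
        R *ᵥ x ⬝ᵥ R *ᵥ x + R⁻¹ *ᵥ y ⬝ᵥ R⁻¹ *ᵥ y := by
      simp only [dotProduct, Finset.sum_add_distrib, pow_two]
    have e1 : R *ᵥ x ⬝ᵥ (R ^ 2) *ᵥ (R *ᵥ x) = x ⬝ᵥ A *ᵥ x := by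
      rw [mv R hRs, mulVec_mulVec, mulVec_mulVec, ← h4]
      congr 2
      noncomm_ring
    have e2 : R⁻¹ *ᵥ y ⬝ᵥ (R ^ 2) *ᵥ (R⁻¹ *ᵥ y) = y ⬝ᵥ y := by
      rw [mv R⁻¹ hRi, mulVec_mulVec, mulVec_mulVec]
      have : R⁻¹ * R ^ 2 * R⁻¹ = 1 := by
        rw [pow_two, Matrix.mul_assoc, Matrix.mul_assoc, r1, Matrix.mul_one, r2]
      rw [this, one_mulVec]
    rw [hs, hBdef]
    simp only [sub_mulVec, smul_mulVec, one_mulVec, dotProduct_sub, dotProduct_smul, smul_eq_mul]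
    rw [e1, e2]
    ring
  · intro j hj1 hj2
    obtain ⟨n, rfl⟩ : ∃ n, N = n + 1 := ⟨N - 1, by omega⟩
    have hω0 : 0 < ω := by rw [hω]; positivity
    have hw4 : Real.sqrt ω ^ 4 = 1 + 2 * a := by
      have : Real.sqrt ω ^ 4 = (Real.sqrt ω ^ 2) ^ 2 := by ring
      rw [this, Real.sq_sqrt hω0.le, hω, Real.sq_sqrt (by positivity)]
    exact decay n (Real.sqrt ω) μ (Real.sqrt_pos.2 hω0) hμ0 hμ R hR (by rw [h4, hw4, hA'])
      ⟨j - 1, by omega⟩ (by simp only; omega)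
end

section
/- There exist positive constants a0 < 1/2, β0 and K1 > 2, independent of the chain length N, such that, setting K2 := 4(2K1)^{2+8a0}/((1−2a0)⁴(1−a0)⁶), μ# := a(2+a), A1 := √(1+4a), A2 := √(1−2a), B := 1 − 3/(4β²) and D := K1 A1/B, the following holds: for the periodic chain of length N, if φ and ψ are homogeneous polynomials of degrees 2r and 2s with interaction lengths m and m' respectively, whose supports are disjoint at distance d, then for every β > β0 and 0 < a < a0, |⟨φψ⟩ − ⟨φ⟩⟨ψ⟩| ≤ K2 · D^{m+m'+2d+4} · μ#^d · [2^{r+s} r! s! / (A2² β)^{r+s}] · ‖φ‖ ‖ψ‖. -/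
open MeasureTheory

/-- Phase space `ℝ^{2N}` of the chain: `z = (x, y)`. -/
abbrev Phase (N : ℕ) := (Fin N → ℝ) × (Fin N → ℝ)

/-- Klein–Gordon chain Hamiltonian
`H(x,y) = (1/2) Σ_j [y_j² + x_j² + a(x_j − x_{j−1})² + (1/2) x_j⁴]`
with periodic boundary conditions. -/
noncomputable def Ham (N : ℕ) (a : ℝ) (z : Phase N) : ℝ :=
  (1 / 2) * ∑ j : Fin N,
    ((z.2 j) ^ 2 + (z.1 j) ^ 2 + a * (z.1 j - z.1 ((finRotate N).symm j)) ^ 2 +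
      (1 / 2) * (z.1 j) ^ 4)

/-- Gibbs measure `dm = e^{−βH} dz / Z(β,a)`. -/
noncomputable def gibbs (N : ℕ) (a β : ℝ) : Measure (Phase N) :=
  (ENNReal.ofReal (∫ z : Phase N, Real.exp (-β * Ham N a z)))⁻¹ •
    MeasureTheory.volume.withDensity fun z => ENNReal.ofReal (Real.exp (-β * Ham N a z))

/-- Phase average `⟨X⟩ = ∫ X dm`. -/
noncomputable def pAvg (N : ℕ) (a β : ℝ) (X : Phase N → ℝ) : ℝ := ∫ z, X z ∂ gibbs N a β

/-- Phase variance `σ²[X] = ⟨X²⟩ − ⟨X⟩²`. -/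
noncomputable def pVar (N : ℕ) (a β : ℝ) (X : Phase N → ℝ) : ℝ :=
  pAvg N a β (fun z => X z ^ 2) - (pAvg N a β X) ^ 2


open MvPolynomial

/-- Polynomials in the `2N` phase-space variables: `Sum.inl l ↦ x_l`, `Sum.inr l ↦ y_l`. -/
abbrev Pol (N : ℕ) := MvPolynomial (Fin N ⊕ Fin N) ℝ

/-- Polynomial norm: the sum of the absolute values of the coefficients. -/
noncomputable def pnorm {N : ℕ} (f : Pol N) : ℝ :=
  ∑ d ∈ f.support, |coeff d f|

/-- Set of sites appearing (in `x` or `y`) with nonzero exponent in a monomial. -/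
def siteSupport {N : ℕ} (d : (Fin N ⊕ Fin N) →₀ ℕ) : Finset (Fin N) :=
  Finset.univ.filter fun l => d (Sum.inl l) ≠ 0 ∨ d (Sum.inr l) ≠ 0

/-- Gibbs average of (the evaluation of) a polynomial. -/
noncomputable def gAvg (N : ℕ) (a β : ℝ) (f : Pol N) : ℝ :=
  pAvg N a β fun z => MvPolynomial.eval (Sum.elim z.1 z.2) f


open scoped ENNReal


/-- one dimensional density -/
noncomputable def dens1 (β b c x : ℝ) : ℝ := Real.exp (-β * (b * x ^ 2 / 2 + c * x ^ 4 / 4))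

/-- one dimensional normalisation -/
noncomputable def zee1 (β b c : ℝ) : ℝ≥0∞ := ∫⁻ x : ℝ, ENNReal.ofReal (dens1 β b c x)

/-- one dimensional single site probability measure -/
noncomputable def nu1 (β b c : ℝ) : Measure ℝ :=
  (zee1 β b c)⁻¹ • (volume : Measure ℝ).withDensity (fun x => ENNReal.ofReal (dens1 β b c x))

lemma dens1_cont (β b c : ℝ) : Continuous (dens1 β b c) := by
  unfold dens1; fun_prop

lemma dens1_meas (β b c : ℝ) : Measurable (fun x => ENNReal.ofReal (dens1 β b c x)) :=
  (dens1_cont β b c).measurable.ennreal_ofReal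

lemma abs_moment (k : ℕ) (b : ℝ) (hb : 0 < b) :
    ∫⁻ x : ℝ, ENNReal.ofReal (|x| ^ k * Real.exp (-b * x ^ 2)) =
      ENNReal.ofReal (b ^ (-((k:ℝ) + 1) / 2) * Real.Gamma (((k:ℝ) + 1) / 2)) := by
  have h0 : Integrable (fun x : ℝ => |x| ^ k * Real.exp (-b * x ^ 2)) := by
    have := integrable_rpow_mul_exp_neg_mul_sq hb (s := (k:ℝ))
      (by have : (0:ℝ) ≤ k := by positivity
          linarith)
    refine this.norm.congr (Filter.Eventually.of_forall fun x => ?_)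
    simp only [Real.rpow_natCast, norm_mul, norm_pow, Real.norm_eq_abs, Real.abs_exp]
  rw [← ofReal_integral_eq_lintegral_ofReal h0
    (Filter.Eventually.of_forall fun x => by positivity)]
  congr 1
  have h1 := integral_rpow_mul_exp_neg_mul_rpow (p := 2) (q := k) (b := b) (by norm_num)
      (by have : (0:ℝ) ≤ k := by positivity
          linarith) hb
  have h2 := integral_comp_abs (f := fun x : ℝ => x ^ k * Real.exp (-b * x ^ 2))
  simp only [sq_abs] at h2
  rw [h2]
  simp only [Real.rpow_natCast, Real.rpow_two] at h1
  rw [h1]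
  ring

lemma gamma_half (k : ℕ) : Real.Gamma (((k:ℝ) + 1) / 2) ≤ 2 * Real.Gamma ((k:ℝ) / 2 + 1) := by
  rcases Nat.eq_zero_or_pos k with rfl | hk
  · simp only [Nat.cast_zero, zero_add, zero_div, Real.Gamma_one, mul_one]
    rw [Real.Gamma_one_half_eq, Real.sqrt_le_left (by norm_num)]
    linarith [Real.pi_le_four]
  · have hk1 : (1:ℝ) ≤ k := by exact_mod_cast hk
    have h := Real.Gamma_mul_add_mul_le_rpow_Gamma_mul_rpow_Gamma (s := (k:ℝ)/2) (t := (k:ℝ)/2+1)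
      (a := 1/2) (b := 1/2) (by positivity) (by positivity) (by norm_num) (by norm_num) (by norm_num)
    have e : (1/2:ℝ) * ((k:ℝ)/2) + 1/2 * ((k:ℝ)/2+1) = ((k:ℝ)+1)/2 := by ring
    rw [e] at h
    have hG : 0 < Real.Gamma ((k:ℝ)/2) := Real.Gamma_pos_of_pos (by positivity)
    have hG1 : 0 < Real.Gamma ((k:ℝ)/2+1) := Real.Gamma_pos_of_pos (by positivity)
    have h3 : Real.Gamma ((k:ℝ)/2) ≤ 2 * Real.Gamma ((k:ℝ)/2+1) := by
      rw [Real.Gamma_add_one (by positivity)]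
      nlinarith
    refine h.trans ?_
    rw [← Real.mul_rpow hG.le hG1.le, ← Real.sqrt_eq_rpow, Real.sqrt_le_left (by positivity)]
    nlinarith

lemma zee1_lower (β b c : ℝ) (hβ : 1 ≤ β) (hb1 : 1 ≤ b) (hb : b ≤ 2) (hc0 : 0 ≤ c) (hc : c ≤ 1) :
    ENNReal.ofReal (2 * Real.exp (-2) / Real.sqrt β) ≤ zee1 β b c := by
  have hs : 0 < Real.sqrt β := Real.sqrt_pos.2 (by linarith)
  have hss : Real.sqrt β ^ 2 = β := Real.sq_sqrt (by linarith)
  have : ∫⁻ x in Set.Icc (-(1 / Real.sqrt β)) (1 / Real.sqrt β), ENNReal.ofReal (Real.exp (-2)) ≤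
      zee1 β b c := by
    refine le_trans ?_ (setLIntegral_le_lintegral (Set.Icc (-(1 / Real.sqrt β)) (1 / Real.sqrt β)) _)
    refine setLIntegral_mono (dens1_meas β b c) fun x hx => ?_
    refine ENNReal.ofReal_le_ofReal (Real.exp_le_exp.2 ?_)
    have hx2 : β * x ^ 2 ≤ 1 := by
      have : |x| ≤ 1 / Real.sqrt β := abs_le.2 hx
      have h2 : x ^ 2 ≤ (1 / Real.sqrt β) ^ 2 := by
        rw [← sq_abs]; gcongr
      rw [div_pow, hss, one_pow] at h2
      have := mul_le_mul_of_nonneg_left h2 (by linarith : 0 ≤ β)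
      rwa [mul_one_div_cancel (by linarith)] at this
    have hx4 : β * x ^ 4 ≤ 1 := by
      nlinarith [sq_nonneg x, mul_nonneg (sq_nonneg x) (sq_nonneg x)]
    have e1 : b * (β * x ^ 2) ≤ 2 * 1 := by
      apply mul_le_mul hb hx2 (by positivity) (by norm_num)
    have e2 : c * (β * x ^ 4) ≤ 1 * 1 := by
      apply mul_le_mul hc hx4 (by positivity) (by norm_num)
    nlinarith
  refine le_trans ?_ this
  rw [setLIntegral_const, Real.volume_Icc, ← ENNReal.ofReal_mul (by positivity)]
  apply ENNReal.ofReal_le_ofReal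
  apply le_of_eq
  field_simp
  ring

lemma zee1_upper (β b c : ℝ) (hβ : 1 ≤ β) (hb1 : 1 ≤ b) (hc0 : 0 ≤ c) : zee1 β b c ≠ ∞ := by
  have h := abs_moment 0 (β * b / 2) (by positivity)
  refine ne_top_of_le_ne_top ?_ (b := ∫⁻ x : ℝ, ENNReal.ofReal (|x| ^ 0 * Real.exp (-(β * b / 2) * x ^ 2))) ?_
  · rw [h]; exact ENNReal.ofReal_ne_top
  · refine lintegral_mono fun x => ENNReal.ofReal_le_ofReal ?_
    rw [pow_zero, one_mul]
    refine Real.exp_le_exp.2 ?_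
    have : 0 ≤ β * (c * x ^ 4) := by positivity
    nlinarith

lemma zee1_ne_zero (β b c : ℝ) (hβ : 1 ≤ β) (hb1 : 1 ≤ b) (hb : b ≤ 2) (hc0 : 0 ≤ c) (hc : c ≤ 1) :
    zee1 β b c ≠ 0 := by
  have := zee1_lower β b c hβ hb1 hb hc0 hc
  intro h
  rw [h] at this
  have h2 : 0 < Real.sqrt β := Real.sqrt_pos.2 (by linarith)
  have : 2 * Real.exp (-2) / Real.sqrt β ≤ 0 := by
    simpa using this
  have h3 : 0 < 2 * Real.exp (-2) / Real.sqrt β := by positivity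
  linarith

lemma nu1_prob (β b c : ℝ) (hβ : 1 ≤ β) (hb1 : 1 ≤ b) (hb : b ≤ 2) (hc0 : 0 ≤ c) (hc : c ≤ 1) :
    IsProbabilityMeasure (nu1 β b c) := by
  constructor
  unfold nu1
  rw [Measure.smul_apply, withDensity_apply _ MeasurableSet.univ, Measure.restrict_univ, smul_eq_mul]
  exact ENNReal.inv_mul_cancel (zee1_ne_zero β b c hβ hb1 hb hc0 hc) (zee1_upper β b c hβ hb1 hc0)

lemma lintegral_nu1 (β b c : ℝ) (f : ℝ → ℝ≥0∞) (hf : Measurable f) :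
    ∫⁻ x, f x ∂(nu1 β b c) = (zee1 β b c)⁻¹ * ∫⁻ x, ENNReal.ofReal (dens1 β b c x) * f x := by
  unfold nu1
  rw [lintegral_smul_measure, lintegral_withDensity_eq_lintegral_mul _ (dens1_meas β b c) hf]
  rfl

lemma nu1_moment (β b c κ lam : ℝ) (k : ℕ) (hβ : 1 ≤ β) (hb1 : 1 ≤ b) (hb : b ≤ 2) (hc0 : 0 ≤ c)
    (hc : c ≤ 1) (hl : 1 / 2 ≤ lam) (hk : lam ≤ b - 2 * κ) :
    ∫⁻ x, ENNReal.ofReal (|x| ^ k * Real.exp (κ * β * x ^ 2)) ∂(nu1 β b c) ≤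
      ENNReal.ofReal (16 * Real.Gamma ((k:ℝ) / 2 + 1) * Real.sqrt (2 / (β * lam)) ^ k) := by
  have hs : 0 < Real.sqrt β := Real.sqrt_pos.2 (by linarith)
  rw [lintegral_nu1 _ _ _ _ (by fun_prop)]
  have hz := zee1_lower β b c hβ hb1 hb hc0 hc
  have h1 : ∫⁻ x, ENNReal.ofReal (dens1 β b c x) * ENNReal.ofReal (|x| ^ k * Real.exp (κ * β * x ^ 2))
      ≤ ENNReal.ofReal ((β * lam / 2) ^ (-((k:ℝ) + 1) / 2) * Real.Gamma (((k:ℝ) + 1) / 2)) := by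
    rw [← abs_moment k (β * lam / 2) (by positivity)]
    refine lintegral_mono fun x => ?_
    rw [← ENNReal.ofReal_mul (by unfold dens1; positivity)]
    refine ENNReal.ofReal_le_ofReal ?_
    unfold dens1
    rw [mul_left_comm, ← Real.exp_add]
    refine mul_le_mul_of_nonneg_left (Real.exp_le_exp.2 ?_) (by positivity)
    have h4 : 0 ≤ β * (c * x ^ 4) := by positivity
    have h5 : 0 ≤ (β * x ^ 2) * (b - 2 * κ - lam) := mul_nonneg (by positivity) (by linarith)
    nlinarith
  have h2 : (zee1 β b c)⁻¹ ≤ ENNReal.ofReal ((2 * Real.exp (-2) / Real.sqrt β)⁻¹) := by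
    rw [ENNReal.ofReal_inv_of_pos (by positivity)]
    exact ENNReal.inv_le_inv.2 hz
  refine (mul_le_mul' h2 h1).trans ?_
  rw [← ENNReal.ofReal_mul (by positivity)]
  refine ENNReal.ofReal_le_ofReal ?_
  have hq : 0 < β * lam / 2 := by positivity
  have e1 : (β * lam / 2) ^ (-((k:ℝ) + 1) / 2) = Real.sqrt (2 / (β * lam)) ^ (k + 1) := by
    have : (2 / (β * lam)) = (β * lam / 2)⁻¹ := by rw [inv_div]
    rw [this, Real.sqrt_eq_rpow, ← Real.rpow_natCast, ← Real.rpow_mul (by positivity),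
      Real.inv_rpow hq.le, ← Real.rpow_neg hq.le]
    congr 1
    push_cast
    ring
  rw [e1, pow_succ]
  have hG := gamma_half k
  have hGp : 0 < Real.Gamma ((k:ℝ)/2+1) := Real.Gamma_pos_of_pos (by positivity)
  have e2 : Real.sqrt (2 / (β * lam)) ≤ 2 / Real.sqrt β := by
    rw [Real.sqrt_le_left (by positivity), div_pow, Real.sq_sqrt (by linarith),
      div_le_div_iff₀ (by positivity) (by positivity)]
    nlinarith
  have e3 : Real.exp 2 ≤ 8 := by
    have := Real.exp_one_lt_d9
    have h : Real.exp 2 = Real.exp 1 ^ 2 := by rw [← Real.exp_nat_mul]; norm_num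
    rw [h]
    have h0 := Real.exp_pos 1
    nlinarith
  have e4 : (2 * Real.exp (-2) / Real.sqrt β)⁻¹ = Real.exp 2 * Real.sqrt β / 2 := by
    rw [Real.exp_neg]; field_simp
  rw [e4]
  set X := Real.sqrt (2 / (β * lam)) ^ k with hX
  have hX0 : 0 ≤ X := by positivity
  calc Real.exp 2 * Real.sqrt β / 2 * (X * Real.sqrt (2 / (β * lam)) * Real.Gamma (((k:ℝ) + 1) / 2))
      ≤ 8 * Real.sqrt β / 2 * (X * (2 / Real.sqrt β) * (2 * Real.Gamma ((k:ℝ) / 2 + 1))) := by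
        gcongr
    _ = _ := by field_simp; ring

lemma nu1_neg (β b c : ℝ) (f : ℝ → ℝ≥0∞) (hf : Measurable f) :
    ∫⁻ x, f (-x) ∂(nu1 β b c) = ∫⁻ x, f x ∂(nu1 β b c) := by
  rw [lintegral_nu1 _ _ _ _ hf, lintegral_nu1 _ _ _ _ (by fun_prop)]
  congr 1
  rw [← (Measure.measurePreserving_neg (volume : Measure ℝ)).lintegral_comp
    (f := fun x => ENNReal.ofReal (dens1 β b c x) * f x) (by exact (dens1_meas β b c).mul hf)]
  refine lintegral_congr fun x => ?_
  simp [dens1, Even.neg_pow (show Even 4 by decide)]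

lemma nu1_exp_lower (β b c h : ℝ) (hβ : 1 ≤ β) (hb1 : 1 ≤ b) (hb : b ≤ 2) (hc0 : 0 ≤ c)
    (hc : c ≤ 1) : 1 ≤ ∫⁻ x, ENNReal.ofReal (Real.exp (h * x)) ∂(nu1 β b c) := by
  have := nu1_prob β b c hβ hb1 hb hc0 hc
  have h1 := nu1_neg β b c (fun x => ENNReal.ofReal (Real.exp (h * x))) (by fun_prop)
  have h2 : (2 : ℝ≥0∞) ≤ ∫⁻ x, ENNReal.ofReal (Real.exp (h * x)) ∂(nu1 β b c) +
      ∫⁻ x, ENNReal.ofReal (Real.exp (h * (-x))) ∂(nu1 β b c) := by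
    rw [← lintegral_add_left (by fun_prop)]
    calc (2 : ℝ≥0∞) = ∫⁻ x, 2 ∂(nu1 β b c) := by simp
      _ ≤ _ := by
        refine lintegral_mono fun x => ?_
        rw [← ENNReal.ofReal_add (by positivity) (by positivity)]
        rw [show (2 : ℝ≥0∞) = ENNReal.ofReal 2 by simp]
        refine ENNReal.ofReal_le_ofReal ?_
        have := Real.add_one_le_exp (h * x)
        have := Real.add_one_le_exp (h * (-x))
        linarith
  rw [h1, ← two_mul] at h2
  by_contra hcon
  push Not at hcon
  have := ENNReal.mul_lt_mul_right (a := 2) (by norm_num) (by norm_num) hcon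
  rw [mul_one] at this
  exact absurd h2 (not_le.2 this)


/-- single site probability measure -/
noncomputable def nu (a β : ℝ) : Measure (ℝ × ℝ) := (nu1 β (1 + 2 * a) 1).prod (nu1 β 1 0)

/-- configurations, site by site -/
abbrev Om (N : ℕ) := Fin N → ℝ × ℝ

/-- product of the single site measures -/
noncomputable def piN (N : ℕ) (a β : ℝ) : Measure (Om N) := Measure.pi fun _ => nu a β

/-- previous site -/
abbrev pv {N : ℕ} (j : Fin N) : Fin N := (finRotate N).symm j

/-- next site -/
abbrev nx {N : ℕ} (j : Fin N) : Fin N := finRotate N j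

/-- interaction weight of a set of edges; the edge `j` joins `j` and `pv j` -/
noncomputable def WA {N : ℕ} (a β : ℝ) (A : Finset (Fin N)) (z : Om N) : ℝ :=
  Real.exp (β * a * ∑ j ∈ A, (z j).1 * (z (pv j)).1)

lemma nx_val {N : ℕ} (j : Fin N) : (nx j : ℕ) = if (j : ℕ) = N - 1 then 0 else (j : ℕ) + 1 := by
  obtain ⟨n, rfl⟩ : ∃ n, N = n + 1 := ⟨N - 1, by have := j.isLt; omega⟩
  rw [coe_finRotate]
  simp only [Fin.ext_iff, Fin.val_last, Nat.add_sub_cancel]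

lemma pv_val {N : ℕ} (j : Fin N) : (pv j : ℕ) = if (j : ℕ) = 0 then N - 1 else (j : ℕ) - 1 := by
  have h : nx (pv j) = j := Equiv.apply_symm_apply _ _
  have h2 := nx_val (pv j)
  rw [h] at h2
  have := (pv j).isLt
  have := j.isLt
  split_ifs at h2 ⊢ <;> omega

lemma nx_ne {N : ℕ} (hN : 2 ≤ N) (j : Fin N) : nx j ≠ j := by
  intro h
  have h2 := nx_val j
  rw [h] at h2
  have := j.isLt
  split_ifs at h2 <;> omega

lemma pv_ne {N : ℕ} (hN : 2 ≤ N) (j : Fin N) : pv j ≠ j := by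
  intro h
  have h2 := pv_val j
  rw [h] at h2
  have := j.isLt
  split_ifs at h2 <;> omega

lemma pv_nx {N : ℕ} (j : Fin N) : pv (nx j) = j := Equiv.symm_apply_apply _ _
lemma nx_pv {N : ℕ} (j : Fin N) : nx (pv j) = j := Equiv.apply_symm_apply _ _

lemma nu_prob (a β : ℝ) (hβ : 1 ≤ β) (ha : 0 < a) (ha1 : a ≤ 1 / 16) :
    IsProbabilityMeasure (nu a β) := by
  have := nu1_prob β (1 + 2 * a) 1 hβ (by linarith) (by linarith) (by norm_num) (by norm_num)
  have := nu1_prob β 1 0 hβ (by linarith) (by linarith) (by norm_num) (by norm_num)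
  unfold nu
  infer_instance

lemma nu_fst (a β : ℝ) (hβ : 1 ≤ β) (ha : 0 < a) (ha1 : a ≤ 1 / 16) (f : ℝ → ℝ≥0∞)
    (hf : Measurable f) : ∫⁻ y, f y.1 ∂(nu a β) = ∫⁻ x, f x ∂(nu1 β (1 + 2 * a) 1) := by
  have := nu1_prob β (1 + 2 * a) 1 hβ (by linarith) (by linarith) (by norm_num) (by norm_num)
  have := nu1_prob β 1 0 hβ (by linarith) (by linarith) (by norm_num) (by norm_num)
  unfold nu
  have := lintegral_prod_mul (μ := nu1 β (1 + 2 * a) 1) (ν := nu1 β 1 0) (f := f) (g := fun _ => 1)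
    hf.aemeasurable (by fun_prop)
  simpa using this

lemma nu_exp_lower (a β h : ℝ) (hβ : 1 ≤ β) (ha : 0 < a) (ha1 : a ≤ 1 / 16) :
    1 ≤ ∫⁻ y, ENNReal.ofReal (Real.exp (h * y.1)) ∂(nu a β) := by
  rw [nu_fst a β hβ ha ha1 (fun x => ENNReal.ofReal (Real.exp (h * x))) (by fun_prop)]
  exact nu1_exp_lower β _ 1 h hβ (by linarith) (by linarith) (by norm_num) (by norm_num)

lemma nu_exp_upper (a β h : ℝ) (hβ : 1 ≤ β) (ha : 0 < a) (ha1 : a ≤ 1 / 16) :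
    ∫⁻ y, ENNReal.ofReal (Real.exp (β * y.1 ^ 2 / 8 + h * y.1)) ∂(nu a β) ≤
      ENNReal.ofReal (16 * Real.exp (2 * h ^ 2 / β)) := by
  rw [nu_fst a β hβ ha ha1 (fun x => ENNReal.ofReal (Real.exp (β * x ^ 2 / 8 + h * x)))
    (by fun_prop)]
  have hm := nu1_moment β (1 + 2 * a) 1 (1/4) (1/2) 0 hβ (by linarith) (by linarith) (by norm_num)
    (by norm_num) (by norm_num) (by linarith)
  simp only [pow_zero, one_mul, Nat.cast_zero, zero_div, zero_add, Real.Gamma_one, mul_one] at hm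
  rw [ENNReal.ofReal_mul (by norm_num)]
  calc ∫⁻ x, ENNReal.ofReal (Real.exp (β * x ^ 2 / 8 + h * x)) ∂(nu1 β (1 + 2 * a) 1)
      ≤ ∫⁻ x, ENNReal.ofReal (Real.exp (1 / 4 * β * x ^ 2)) * ENNReal.ofReal (Real.exp (2 * h ^ 2 / β))
          ∂(nu1 β (1 + 2 * a) 1) := by
        refine lintegral_mono fun x => ?_
        rw [← ENNReal.ofReal_mul (by positivity), ← Real.exp_add]
        refine ENNReal.ofReal_le_ofReal (Real.exp_le_exp.2 ?_)
        have h0 : 0 ≤ (β * x / 4 - h) ^ 2 * (2 / β) := by positivity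
        have h1 : (β * x / 4 - h) ^ 2 * (2 / β) = β * x ^ 2 / 8 - h * x + 2 * h ^ 2 / β := by
          field_simp; ring
        linarith
    _ = (∫⁻ x, ENNReal.ofReal (Real.exp (1 / 4 * β * x ^ 2)) ∂(nu1 β (1 + 2 * a) 1)) *
          ENNReal.ofReal (Real.exp (2 * h ^ 2 / β)) := by
        rw [lintegral_mul_const _ (by fun_prop)]
    _ ≤ _ := by gcongr

lemma marg_le {N : ℕ} (a β : ℝ) (hβ : 1 ≤ β) (ha : 0 < a) (ha1 : a ≤ 1 / 16) (i : Fin N)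
    {f g : Om N → ℝ≥0∞} (hf : Measurable f) (hg : Measurable g)
    (h : ∀ z, ∫⁻ y, f (Function.update z i y) ∂(nu a β) ≤ ∫⁻ y, g (Function.update z i y) ∂(nu a β)) :
    ∫⁻ z, f z ∂(piN N a β) ≤ ∫⁻ z, g z ∂(piN N a β) := by
  have := nu_prob a β hβ ha ha1
  unfold piN
  refine lintegral_le_of_lmarginal_le {i} hf hg ?_
  rw [lmarginal_singleton, lmarginal_singleton]
  exact h

/-- field felt by site `i` -/
noncomputable def fld {N : ℕ} (a β : ℝ) (A : Finset (Fin N)) (i : Fin N) (z : Om N) : ℝ :=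
  β * a * ((if i ∈ A then (z (pv i)).1 else 0) + (if nx i ∈ A then (z (nx i)).1 else 0))

lemma fld_update {N : ℕ} (hN : 2 ≤ N) (a β : ℝ) (A : Finset (Fin N)) (i : Fin N) (z : Om N)
    (y : ℝ × ℝ) : fld a β A i (Function.update z i y) = fld a β A i z := by
  unfold fld
  rw [Function.update_of_ne (pv_ne hN i), Function.update_of_ne (nx_ne hN i)]

lemma WA_update {N : ℕ} (hN : 2 ≤ N) (a β : ℝ) (A : Finset (Fin N)) (i : Fin N) (z : Om N)
    (y : ℝ × ℝ) : WA a β A (Function.update z i y) =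
      WA a β (A \ {i, nx i}) z * Real.exp (fld a β A i z * y.1) := by
  unfold WA fld
  rw [← Real.exp_add]
  congr 1
  rw [← Finset.sum_inter_add_sum_sdiff A {i, nx i}, add_comm (∑ j ∈ A ∩ _, _), mul_add]
  congr 1
  · congr 1
    refine Finset.sum_congr rfl fun j hj => ?_
    simp only [Finset.mem_sdiff, Finset.mem_insert, Finset.mem_singleton, not_or] at hj
    rw [Function.update_of_ne hj.2.1, Function.update_of_ne]
    intro h
    apply hj.2.2
    rw [← h, nx_pv]
  · have : A ∩ {i, nx i} = ({i, nx i} : Finset (Fin N)).filter (· ∈ A) := by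
      ext j; simp [and_comm]
    rw [this, Finset.sum_filter, Finset.sum_pair (nx_ne hN i).symm, Function.update_self,
      Function.update_of_ne (pv_ne hN i), pv_nx, Function.update_of_ne (nx_ne hN i),
      Function.update_self]
    split_ifs <;> ring

lemma WA_meas {N : ℕ} (a β : ℝ) (A : Finset (Fin N)) : Measurable (WA a β A) := by
  unfold WA; fun_prop

lemma WA_pos {N : ℕ} (a β : ℝ) (A : Finset (Fin N)) (z : Om N) : 0 < WA a β A z := Real.exp_pos _

lemma WA_sdiff_update {N : ℕ} (hN : 2 ≤ N) (a β : ℝ) (A : Finset (Fin N)) (i : Fin N) (z : Om N)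
    (y : ℝ × ℝ) : WA a β (A \ {i, nx i}) (Function.update z i y) = WA a β (A \ {i, nx i}) z := by
  rw [WA_update hN]
  simp [fld]

/-- partition function -/
noncomputable def ZA {N : ℕ} (a β : ℝ) (A : Finset (Fin N)) : ℝ≥0∞ :=
  ∫⁻ z, ENNReal.ofReal (WA a β A z) ∂(piN N a β)

lemma ZA_sdiff_le {N : ℕ} (hN : 2 ≤ N) (a β : ℝ) (hβ : 1 ≤ β) (ha : 0 < a) (ha1 : a ≤ 1 / 16)
    (A : Finset (Fin N)) (i : Fin N) : ZA a β (A \ {i, nx i}) ≤ ZA a β A := by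
  have := nu_prob a β hβ ha ha1
  refine marg_le a β hβ ha ha1 i (WA_meas _ _ _).ennreal_ofReal (WA_meas _ _ _).ennreal_ofReal
    fun z => ?_
  simp only [WA_sdiff_update hN, WA_update hN a β A]
  simp only [ENNReal.ofReal_mul (WA_pos _ _ _ _).le]
  rw [lintegral_const_mul _ (by fun_prop), lintegral_const, measure_univ]
  gcongr
  exact nu_exp_lower a β _ hβ ha ha1

/-- edges not touching `S` -/
def offE {N : ℕ} (S : Finset (Fin N)) : Finset (Fin N) :=
  Finset.univ.filter fun j => j ∉ S ∧ pv j ∉ S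

lemma ZA_off_le {N : ℕ} (hN : 2 ≤ N) (a β : ℝ) (hβ : 1 ≤ β) (ha : 0 < a) (ha1 : a ≤ 1 / 16)
    (S : Finset (Fin N)) : ZA a β (offE S) ≤ ZA a β (Finset.univ : Finset (Fin N)) := by
  classical
  induction S using Finset.induction_on with
  | empty => simp [offE]
  | insert i S hi ih =>
    refine le_trans (le_of_eq ?_) ((ZA_sdiff_le hN a β hβ ha ha1 (offE S) i).trans ih)
    congr 1
    ext j
    simp only [offE, Finset.mem_filter, Finset.mem_univ, true_and, Finset.mem_insert,
      Finset.mem_sdiff, Finset.mem_singleton, not_or]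
    have : pv j = i ↔ j = nx i := by rw [Equiv.symm_apply_eq]
    rw [this]
    tauto

/-- integrate out product functions on `S` -/
lemma prod_out {N : ℕ} (a β : ℝ) (hβ : 1 ≤ β) (ha : 0 < a) (ha1 : a ≤ 1 / 16)
    (S : Finset (Fin N)) (g : Fin N → ℝ × ℝ → ℝ≥0∞) (hg : ∀ i, Measurable (g i))
    (F : Om N → ℝ≥0∞) (hF : Measurable F)
    (hFS : ∀ i ∈ S, ∀ z y, F (Function.update z i y) = F z) :
    ∫⁻ z, (∏ i ∈ S, g i (z i)) * F z ∂(piN N a β) ≤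
      (∏ i ∈ S, ∫⁻ y, g i y ∂(nu a β)) * ∫⁻ z, F z ∂(piN N a β) := by
  classical
  have := nu_prob a β hβ ha ha1
  induction S using Finset.induction_on with
  | empty => simp
  | insert i S hi ih =>
    have ih' := ih fun j hj => hFS j (Finset.mem_insert_of_mem hj)
    rw [Finset.prod_insert hi, mul_assoc]
    refine le_trans ?_ (mul_le_mul' le_rfl ih')
    rw [← lintegral_const_mul _ (by fun_prop)]
    refine marg_le a β hβ ha ha1 i (by fun_prop) (by fun_prop) fun z => ?_
    have e : ∀ y, ∏ j ∈ S, g j (Function.update z i y j) = ∏ j ∈ S, g j (z j) := by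
      intro y
      refine Finset.prod_congr rfl fun j hj => ?_
      rw [Function.update_of_ne]
      rintro rfl; exact hi hj
    simp only [Finset.prod_insert hi, e, Function.update_self, hFS i (Finset.mem_insert_self _ _)]
    rw [lintegral_const, measure_univ, mul_one]
    simp only [mul_assoc]
    rw [lintegral_mul_const _ (hg i)]


lemma WA_le {N : ℕ} (a β : ℝ) (hβ : 1 ≤ β) (ha : 0 < a) (A : Finset (Fin N)) (z : Om N) :
    WA a β A z ≤ Real.exp (β * a * ∑ i, (z i).1 ^ 2) := by
  unfold WA
  refine Real.exp_le_exp.2 (mul_le_mul_of_nonneg_left ?_ (by positivity))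
  calc ∑ j ∈ A, (z j).1 * (z (pv j)).1 ≤ ∑ j ∈ A, ((z j).1 ^ 2 / 2 + (z (pv j)).1 ^ 2 / 2) :=
        Finset.sum_le_sum fun j _ => by nlinarith [sq_nonneg ((z j).1 - (z (pv j)).1)]
    _ ≤ ∑ j, ((z j).1 ^ 2 / 2 + (z (pv j)).1 ^ 2 / 2) :=
        Finset.sum_le_sum_of_subset_of_nonneg (Finset.subset_univ _) fun _ _ _ => by positivity
    _ = _ := by
        rw [Finset.sum_add_distrib, Equiv.sum_comp (finRotate N).symm (fun j => (z j).1 ^ 2 / 2),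
          ← Finset.sum_add_distrib]
        exact Finset.sum_congr rfl fun _ _ => by ring

lemma nu_exp_sq (a β κ : ℝ) (hβ : 1 ≤ β) (ha : 0 < a) (ha1 : a ≤ 1 / 16) (hκ : κ ≤ 1 / 4) :
    ∫⁻ y, ENNReal.ofReal (Real.exp (κ * β * y.1 ^ 2)) ∂(nu a β) ≤ 16 := by
  rw [nu_fst a β hβ ha ha1 (fun x => ENNReal.ofReal (Real.exp (κ * β * x ^ 2)))
    (by fun_prop)]
  have hm := nu1_moment β (1 + 2 * a) 1 κ (1/2) 0 hβ (by linarith) (by linarith) (by norm_num)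
    (by norm_num) (by norm_num) (by linarith)
  simp only [pow_zero, one_mul, Nat.cast_zero, zero_div, zero_add, Real.Gamma_one, mul_one] at hm
  refine hm.trans (by simp)

/-- exponential moment at site `j` -/
noncomputable def eM {N : ℕ} (a β : ℝ) (A : Finset (Fin N)) (j : Fin N) : ℝ≥0∞ :=
  ∫⁻ z, ENNReal.ofReal (Real.exp (β * (z j).1 ^ 2 / 8) * WA a β A z) ∂(piN N a β)

lemma eM_ne_top {N : ℕ} (a β : ℝ) (hβ : 1 ≤ β) (ha : 0 < a) (ha1 : a ≤ 1 / 16)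
    (A : Finset (Fin N)) (j : Fin N) : eM a β A j ≠ ∞ := by
  have := nu_prob a β hβ ha ha1
  have h := prod_out a β hβ ha ha1 (Finset.univ : Finset (Fin N))
    (fun _ y => ENNReal.ofReal (Real.exp ((1/8 + a) * β * y.1 ^ 2))) (fun _ => by fun_prop)
    (fun _ => 1) (by fun_prop) (fun _ _ _ _ => rfl)
  refine ne_top_of_le_ne_top ?_ (le_trans (lintegral_mono fun z => ?_) h)
  · refine ENNReal.mul_ne_top (ENNReal.prod_ne_top fun i _ => ?_) ?_
    · exact ne_top_of_le_ne_top (by norm_num) (nu_exp_sq a β _ hβ ha ha1 (by linarith))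
    · unfold piN; simp
  · rw [mul_one, ← ENNReal.ofReal_prod_of_nonneg (fun _ _ => by positivity), ← Real.exp_sum]
    refine ENNReal.ofReal_le_ofReal ?_
    refine (mul_le_mul_of_nonneg_left (WA_le a β hβ ha A z) (by positivity)).trans ?_
    rw [← Real.exp_add]
    refine Real.exp_le_exp.2 ?_
    have h1 : (z j).1 ^ 2 ≤ ∑ i, (z i).1 ^ 2 :=
      Finset.single_le_sum (f := fun i => (z i).1 ^ 2) (fun _ _ => by positivity) (Finset.mem_univ j)
    rw [← Finset.mul_sum]
    nlinarith

lemma eM_step {N : ℕ} (hN : 2 ≤ N) (a β : ℝ) (hβ : 1 ≤ β) (ha : 0 < a) (ha1 : a ≤ 1 / 16)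
    (A : Finset (Fin N)) (j : Fin N) :
    eM a β A j ≤ ENNReal.ofReal (1/4) * eM a β A (pv j) + ENNReal.ofReal (1/4) * eM a β A (nx j)
      + 128 * ZA a β A := by
  have := nu_prob a β hβ ha ha1
  have hW := WA_meas a β A
  have hfm : Measurable (fld a β A j) := by unfold fld; split_ifs <;> fun_prop
  have h1 : eM a β A j ≤ ∫⁻ z, ENNReal.ofReal (16 * Real.exp (2 * fld a β A j z ^ 2 / β) * WA a β A z)
      ∂(piN N a β) := by
    refine marg_le a β hβ ha ha1 j (by fun_prop) (by fun_prop) fun z => ?_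
    simp only [fld_update hN, WA_update hN a β A, Function.update_self]
    have hp := WA_pos a β (A \ {j, nx j}) z
    have e1 : ∀ y : ℝ × ℝ, ENNReal.ofReal (Real.exp (β * y.1 ^ 2 / 8) *
        (WA a β (A \ {j, nx j}) z * Real.exp (fld a β A j z * y.1))) =
        ENNReal.ofReal (WA a β (A \ {j, nx j}) z) *
        ENNReal.ofReal (Real.exp (β * y.1 ^ 2 / 8 + fld a β A j z * y.1)) := by
      intro y
      rw [← ENNReal.ofReal_mul hp.le, Real.exp_add]
      congr 1; ring
    have e2 : ∀ y : ℝ × ℝ, ENNReal.ofReal (16 * Real.exp (2 * fld a β A j z ^ 2 / β) *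
        (WA a β (A \ {j, nx j}) z * Real.exp (fld a β A j z * y.1))) =
        ENNReal.ofReal (WA a β (A \ {j, nx j}) z) *
        ENNReal.ofReal (16 * Real.exp (2 * fld a β A j z ^ 2 / β)) *
        ENNReal.ofReal (Real.exp (fld a β A j z * y.1)) := by
      intro y
      rw [← ENNReal.ofReal_mul hp.le, ← ENNReal.ofReal_mul (by positivity)]
      congr 1; ring
    simp only [e1, e2]
    rw [lintegral_const_mul _ (by fun_prop), lintegral_const_mul _ (by fun_prop), mul_assoc]
    gcongr
    refine (nu_exp_upper a β _ hβ ha ha1).trans ?_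
    exact le_mul_of_one_le_right' (nu_exp_lower a β _ hβ ha ha1)
  refine h1.trans ?_
  unfold eM ZA
  rw [← lintegral_const_mul _ (by fun_prop), ← lintegral_const_mul _ (by fun_prop),
    ← lintegral_const_mul _ (by fun_prop), ← lintegral_add_left (by fun_prop),
    ← lintegral_add_left (by fun_prop)]
  refine lintegral_mono fun z => ?_
  have hp := WA_pos a β A z
  rw [show (128 : ℝ≥0∞) = ENNReal.ofReal 128 by simp, ← ENNReal.ofReal_mul (by norm_num),
    ← ENNReal.ofReal_mul (by norm_num), ← ENNReal.ofReal_mul (by norm_num),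
    ← ENNReal.ofReal_add (by positivity) (by positivity),
    ← ENNReal.ofReal_add (by positivity) (by positivity)]
  refine ENNReal.ofReal_le_ofReal ?_
  set u := (z (pv j)).1
  set v := (z (nx j)).1
  have hf : 2 * fld a β A j z ^ 2 / β ≤ β * u ^ 2 / 32 + β * v ^ 2 / 32 := by
    unfold fld
    have e : ∀ s t : ℝ, s ^ 2 ≤ u ^ 2 → t ^ 2 ≤ v ^ 2 →
        2 * (β * a * (s + t)) ^ 2 / β ≤ β * u ^ 2 / 32 + β * v ^ 2 / 32 := by
      intro s t hs ht
      have : 2 * (β * a * (s + t)) ^ 2 / β = 2 * β * a ^ 2 * (s + t) ^ 2 := by field_simp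
      rw [this]
      have h2 : (s + t) ^ 2 ≤ 2 * (u ^ 2 + v ^ 2) := by nlinarith [sq_nonneg (s - t)]
      have h3 : a ^ 2 ≤ 1 / 128 := by nlinarith
      calc 2 * β * a ^ 2 * (s + t) ^ 2 ≤ 2 * β * (1 / 128) * (2 * (u ^ 2 + v ^ 2)) := by gcongr
        _ = _ := by ring
    refine e _ _ ?_ ?_ <;> split_ifs <;> first | exact le_rfl | (norm_num; try positivity)
  set P := Real.exp (β * u ^ 2 / 16) with hP
  set Q := Real.exp (β * v ^ 2 / 16) with hQ
  have hP2 : Real.exp (β * u ^ 2 / 8) = P ^ 2 := by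
    rw [hP, ← Real.exp_nat_mul]; congr 1; push_cast; ring
  have hQ2 : Real.exp (β * v ^ 2 / 8) = Q ^ 2 := by
    rw [hQ, ← Real.exp_nat_mul]; congr 1; push_cast; ring
  rw [hP2, hQ2]
  have hexp : Real.exp (2 * fld a β A j z ^ 2 / β) ≤ (P + Q) / 2 := by
    refine (Real.exp_le_exp.2 hf).trans ?_
    rw [Real.exp_add]
    have hP3 : P = Real.exp (β * u ^ 2 / 32) ^ 2 := by
      rw [hP, ← Real.exp_nat_mul]; congr 1; push_cast; ring
    have hQ3 : Q = Real.exp (β * v ^ 2 / 32) ^ 2 := by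
      rw [hQ, ← Real.exp_nat_mul]; congr 1; push_cast; ring
    rw [hP3, hQ3]
    nlinarith [sq_nonneg (Real.exp (β * u ^ 2 / 32) - Real.exp (β * v ^ 2 / 32))]
  have h16 : 16 * Real.exp (2 * fld a β A j z ^ 2 / β) ≤ 1 / 4 * P ^ 2 + 1 / 4 * Q ^ 2 + 128 := by
    nlinarith [sq_nonneg (P - 16), sq_nonneg (Q - 16)]
  calc _ ≤ (1 / 4 * P ^ 2 + 1 / 4 * Q ^ 2 + 128) * WA a β A z := by gcongr
    _ = _ := by ring

lemma eM_le {N : ℕ} (hN : 2 ≤ N) (a β : ℝ) (hβ : 1 ≤ β) (ha : 0 < a) (ha1 : a ≤ 1 / 16)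
    (A : Finset (Fin N)) (j : Fin N) : eM a β A j ≤ 256 * ZA a β A := by
  obtain ⟨m, -, hm⟩ := Finset.exists_max_image Finset.univ (eM a β A) ⟨j, Finset.mem_univ j⟩
  have h := eM_step hN a β hβ ha ha1 A m
  refine (hm j (Finset.mem_univ j)).trans ?_
  have h1 := hm (pv m) (Finset.mem_univ _)
  have h2 := hm (nx m) (Finset.mem_univ _)
  have hM := eM_ne_top a β hβ ha ha1 A m
  by_cases hZ : ZA a β A = ∞
  · rw [hZ]; simp
  have h3 : eM a β A m ≤ ENNReal.ofReal (1/4) * eM a β A m + ENNReal.ofReal (1/4) * eM a β A m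
      + 128 * ZA a β A := h.trans (by gcongr)
  lift eM a β A m to NNReal using hM with M
  lift ZA a β A to NNReal using hZ with Z
  have h4 : (M : ℝ) ≤ 1/4 * M + 1/4 * M + 128 * Z := by
    have h5 := ENNReal.toReal_mono (by finiteness) h3
    rw [ENNReal.toReal_add (by finiteness) (by finiteness),
      ENNReal.toReal_add (by finiteness) (by finiteness)] at h5
    simpa using h5
  have h6 : M ≤ 256 * Z := by
    rw [← NNReal.coe_le_coe]; push_cast; linarith
  exact_mod_cast h6


lemma gamma_mul_le (x y : ℝ) (hx : 0 ≤ x) (hy : 0 ≤ y) :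
    Real.Gamma (x + 1) * Real.Gamma (y + 1) ≤ Real.Gamma (x + y + 1) := by
  rcases hx.eq_or_lt with rfl | hx
  · simp
  rcases hy.eq_or_lt with rfl | hy
  · simp
  have hs : 0 < x + y := by positivity
  have hG : 0 < Real.Gamma (x + y + 1) := Real.Gamma_pos_of_pos (by positivity)
  have h1 := Real.Gamma_mul_add_mul_le_rpow_Gamma_mul_rpow_Gamma (s := 1) (t := x + y + 1)
    (a := y / (x + y)) (b := x / (x + y)) (by positivity) (by positivity) (by positivity)
    (by positivity) (by field_simp; ring)
  have h2 := Real.Gamma_mul_add_mul_le_rpow_Gamma_mul_rpow_Gamma (s := 1) (t := x + y + 1)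
    (a := x / (x + y)) (b := y / (x + y)) (by positivity) (by positivity) (by positivity)
    (by positivity) (by field_simp)
  have e1 : y / (x + y) * 1 + x / (x + y) * (x + y + 1) = x + 1 := by field_simp; ring
  have e2 : x / (x + y) * 1 + y / (x + y) * (x + y + 1) = y + 1 := by field_simp; ring
  rw [e1, Real.Gamma_one, Real.one_rpow, one_mul] at h1
  rw [e2, Real.Gamma_one, Real.one_rpow, one_mul] at h2
  calc _ ≤ Real.Gamma (x + y + 1) ^ (x / (x + y)) * Real.Gamma (x + y + 1) ^ (y / (x + y)) := by
        gcongr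
    _ = _ := by
        rw [← Real.rpow_add hG]
        have : x / (x + y) + y / (x + y) = 1 := by field_simp
        rw [this, Real.rpow_one]

lemma gamma_prod_le {ι : Type*} (s : Finset ι) (f : ι → ℝ) (hf : ∀ i, 0 ≤ f i) :
    ∏ i ∈ s, Real.Gamma (f i + 1) ≤ Real.Gamma (∑ i ∈ s, f i + 1) := by
  classical
  induction s using Finset.induction_on with
  | empty => simp
  | insert i s hi ih =>
    rw [Finset.prod_insert hi, Finset.sum_insert hi]
    refine le_trans ?_ (gamma_mul_le _ _ (hf i) (Finset.sum_nonneg fun j _ => hf j))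
    exact mul_le_mul_of_nonneg_left ih (Real.Gamma_pos_of_pos (by linarith [hf i])).le

/-- root of the variance scale -/
noncomputable def Lam (a β : ℝ) : ℝ := Real.sqrt (2 / (β * (1 - 2 * a)))

lemma site_moment (a β κ : ℝ) (k l : ℕ) (hβ : 1 ≤ β) (ha : 0 < a) (ha1 : a ≤ 1 / 16)
    (hκ : κ ≤ 2 * a) :
    ∫⁻ y : ℝ × ℝ, ENNReal.ofReal (|y.1| ^ k * |y.2| ^ l * Real.exp (κ * β * y.1 ^ 2)) ∂(nu a β) ≤
      ENNReal.ofReal (256 * (Real.Gamma (((k + l : ℕ) : ℝ) / 2 + 1) * Lam a β ^ (k + l))) := by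
  have := nu1_prob β (1 + 2 * a) 1 hβ (by linarith) (by linarith) (by norm_num) (by norm_num)
  have := nu1_prob β 1 0 hβ (by linarith) (by linarith) (by norm_num) (by norm_num)
  have h1 := nu1_moment β (1 + 2 * a) 1 κ (1 - 2 * a) k hβ (by linarith) (by linarith) (by norm_num)
    (by norm_num) (by linarith) (by linarith)
  have h2 := nu1_moment β 1 0 0 (1 - 2 * a) l hβ (by linarith) (by linarith) (by norm_num)
    (by norm_num) (by linarith) (by linarith)
  have hp := lintegral_prod_mul (μ := nu1 β (1 + 2 * a) 1) (ν := nu1 β 1 0)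
    (f := fun x => ENNReal.ofReal (|x| ^ k * Real.exp (κ * β * x ^ 2)))
    (g := fun x => ENNReal.ofReal (|x| ^ l * Real.exp (0 * β * x ^ 2))) (by fun_prop) (by fun_prop)
  have e : ∫⁻ y : ℝ × ℝ, ENNReal.ofReal (|y.1| ^ k * |y.2| ^ l * Real.exp (κ * β * y.1 ^ 2)) ∂(nu a β)
      = ∫⁻ y : ℝ × ℝ, ENNReal.ofReal (|y.1| ^ k * Real.exp (κ * β * y.1 ^ 2)) *
        ENNReal.ofReal (|y.2| ^ l * Real.exp (0 * β * y.2 ^ 2))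
        ∂((nu1 β (1 + 2 * a) 1).prod (nu1 β 1 0)) := by
    unfold nu
    refine lintegral_congr fun y => ?_
    rw [← ENNReal.ofReal_mul (by positivity)]
    congr 1
    simp only [zero_mul, Real.exp_zero]
    ring
  rw [e, hp]
  refine (mul_le_mul' h1 h2).trans ?_
  have hG1 : 0 < Real.Gamma ((k:ℝ) / 2 + 1) := Real.Gamma_pos_of_pos (by positivity)
  rw [← ENNReal.ofReal_mul (by positivity)]
  refine ENNReal.ofReal_le_ofReal ?_
  change _ * Lam a β ^ k * (_ * Lam a β ^ l) ≤ _
  have hL : 0 ≤ Lam a β := Real.sqrt_nonneg _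
  have h3 := gamma_mul_le ((k:ℝ)/2) ((l:ℝ)/2) (by positivity) (by positivity)
  have e3 : ((k + l : ℕ) : ℝ) / 2 + 1 = (k:ℝ)/2 + (l:ℝ)/2 + 1 := by push_cast; ring
  rw [e3, pow_add]
  calc _ = 256 * ((Real.Gamma ((k:ℝ) / 2 + 1) * Real.Gamma ((l:ℝ) / 2 + 1)) *
        (Lam a β ^ k * Lam a β ^ l)) := by ring
    _ ≤ _ := by gcongr

/-- tilt -/
noncomputable def tlt (a β : ℝ) (y : ℝ × ℝ) : ℝ := Real.exp (β * a * y.1 ^ 2 / 2)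

/-- end point weight -/
noncomputable def eta {N : ℕ} (a β : ℝ) (Bl : Finset (Fin N)) (i : Fin N) (y : ℝ × ℝ) : ℝ :=
  if i ∈ Bl then Real.exp (β * a * y.1 ^ 2 / 2) else Real.exp (β * y.1 ^ 2 / 32)

lemma tlt_meas (a β : ℝ) : Measurable (tlt a β) := by unfold tlt; fun_prop
lemma tlt_pos (a β : ℝ) (y : ℝ × ℝ) : 0 < tlt a β y := Real.exp_pos _
lemma eta_meas {N : ℕ} (a β : ℝ) (Bl : Finset (Fin N)) (i : Fin N) : Measurable (eta a β Bl i) := by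
  unfold eta; split_ifs <;> fun_prop
lemma eta_pos {N : ℕ} (a β : ℝ) (Bl : Finset (Fin N)) (i : Fin N) (y : ℝ × ℝ) :
    0 < eta a β Bl i y := by unfold eta; split_ifs <;> positivity
lemma one_le_eta {N : ℕ} (a β : ℝ) (hβ : 1 ≤ β) (ha : 0 < a) (Bl : Finset (Fin N)) (i : Fin N)
    (y : ℝ × ℝ) : 1 ≤ eta a β Bl i y := by
  unfold eta; split_ifs <;> exact Real.one_le_exp (by positivity)
lemma one_le_tlt (a β : ℝ) (hβ : 1 ≤ β) (ha : 0 < a) (y : ℝ × ℝ) : 1 ≤ tlt a β y :=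
  Real.one_le_exp (by positivity)

/-- outer boundary sites -/
def bd1 {N : ℕ} (S : Finset (Fin N)) : Finset (Fin N) :=
  Finset.univ.filter fun j => j ∉ S ∧ pv j ∈ S
/-- outer boundary sites -/
def bd2 {N : ℕ} (S : Finset (Fin N)) : Finset (Fin N) :=
  Finset.univ.filter fun j => j ∉ S ∧ nx j ∈ S

/-- part of the dominating weight living off `S` -/
noncomputable def Fo {N : ℕ} (a β : ℝ) (S : Finset (Fin N)) (z : Om N) : ℝ :=
  (∏ j ∈ bd1 S, tlt a β (z j)) * (∏ j ∈ bd2 S, tlt a β (z j)) * WA a β (offE S) z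

/-- dominating weight -/
noncomputable def Qf {N : ℕ} (a β : ℝ) (S Bl : Finset (Fin N)) (z : Om N) : ℝ :=
  (∏ i ∈ S, (eta a β Bl i (z i) ^ 2 * tlt a β (z i) ^ 2)) * Fo a β S z

/-- absolute monomial -/
noncomputable def mon {N : ℕ} (k l : Fin N → ℕ) (z : Om N) : ℝ :=
  ∏ i, (|(z i).1| ^ k i * |(z i).2| ^ l i)

/-- moment bound -/
noncomputable def mom {N : ℕ} (a β : ℝ) (k l : Fin N → ℕ) : ℝ :=
  ∏ i, (Real.Gamma (((k i + l i : ℕ) : ℝ) / 2 + 1) * Lam a β ^ (k i + l i))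

lemma Fo_meas {N : ℕ} (a β : ℝ) (S : Finset (Fin N)) : Measurable (Fo a β S) := by
  have := tlt_meas a β
  have := WA_meas a β (offE S)
  unfold Fo
  fun_prop

lemma Fo_pos {N : ℕ} (a β : ℝ) (S : Finset (Fin N)) (z : Om N) : 0 < Fo a β S z := by
  unfold Fo
  have := WA_pos a β (offE S) z
  have h := fun y => tlt_pos a β y
  refine mul_pos (mul_pos (Finset.prod_pos fun _ _ => h _) (Finset.prod_pos fun _ _ => h _)) this

lemma Fo_update {N : ℕ} (a β : ℝ) (S : Finset (Fin N)) (i : Fin N) (hi : i ∈ S) (z : Om N)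
    (y : ℝ × ℝ) : Fo a β S (Function.update z i y) = Fo a β S z := by
  have h : ∀ j, j ∉ S → Function.update z i y j = z j := fun j hj =>
    Function.update_of_ne (by rintro rfl; exact hj hi) _ _
  unfold Fo WA
  congr 1
  · congr 1
    · refine Finset.prod_congr rfl fun j hj => ?_
      rw [h j (by simp [bd1] at hj; exact hj.1)]
    · refine Finset.prod_congr rfl fun j hj => ?_
      rw [h j (by simp [bd2] at hj; exact hj.1)]
  · congr 2
    refine Finset.sum_congr rfl fun j hj => ?_
    have hj' : j ∉ S ∧ pv j ∉ S := by simpa [offE] using hj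
    rw [h j hj'.1, h _ hj'.2]

lemma bd_prod {N : ℕ} (hN : 2 ≤ N) (a β : ℝ) (hβ : 1 ≤ β) (ha1 : a ≤ 1 / 16)
    (D : Finset (Fin N)) (hD : D.card ≤ 1) :
    ∃ j, ∀ z : Om N, (∏ j ∈ D, tlt a β (z j)) ^ 2 ≤ Real.exp (β * (z j).1 ^ 2 / 8) := by
  haveI : Nonempty (Fin N) := ⟨⟨0, by omega⟩⟩
  rcases Finset.card_le_one_iff_subset_singleton.1 hD with ⟨j, hj⟩
  refine ⟨j, fun z => ?_⟩
  rcases Finset.subset_singleton_iff.1 hj with rfl | rfl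
  · simp only [Finset.prod_empty, one_pow]
    exact Real.one_le_exp (by positivity)
  · rw [Finset.prod_singleton, tlt, ← Real.exp_nat_mul]
    refine Real.exp_le_exp.2 ?_
    push_cast
    have : 0 ≤ β * (z j).1 ^ 2 := by positivity
    nlinarith

lemma Fo_bound {N : ℕ} (hN : 2 ≤ N) (a β : ℝ) (hβ : 1 ≤ β) (ha : 0 < a) (ha1 : a ≤ 1 / 16)
    (S : Finset (Fin N)) (h1 : (bd1 S).card ≤ 1) (h2 : (bd2 S).card ≤ 1) :
    ∫⁻ z, ENNReal.ofReal (Fo a β S z) ∂(piN N a β) ≤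
      256 * ZA a β (Finset.univ : Finset (Fin N)) := by
  obtain ⟨i, hi⟩ := bd_prod hN a β hβ ha1 _ h1
  obtain ⟨j, hj⟩ := bd_prod hN a β hβ ha1 _ h2
  have hW := WA_meas a β (offE S)
  refine le_trans (b := ENNReal.ofReal (1/2) * eM a β (offE S) i +
    ENNReal.ofReal (1/2) * eM a β (offE S) j) ?_ ?_
  · unfold eM
    rw [← lintegral_const_mul _ (by fun_prop), ← lintegral_const_mul _ (by fun_prop),
      ← lintegral_add_left (by fun_prop)]
    refine lintegral_mono fun z => ?_
    have hp := WA_pos a β (offE S) z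
    rw [← ENNReal.ofReal_mul (by norm_num), ← ENNReal.ofReal_mul (by norm_num),
      ← ENNReal.ofReal_add (by positivity) (by positivity)]
    refine ENNReal.ofReal_le_ofReal ?_
    unfold Fo
    have e1 := hi z
    have e2 := hj z
    have e3 : (∏ j ∈ bd1 S, tlt a β (z j)) * (∏ j ∈ bd2 S, tlt a β (z j)) ≤
        1/2 * Real.exp (β * (z i).1 ^ 2 / 8) + 1/2 * Real.exp (β * (z j).1 ^ 2 / 8) := by
      nlinarith [sq_nonneg ((∏ j ∈ bd1 S, tlt a β (z j)) - (∏ j ∈ bd2 S, tlt a β (z j)))]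
    calc _ ≤ _ := mul_le_mul_of_nonneg_right e3 hp.le
      _ = _ := by ring
  · have hz := ZA_off_le hN a β hβ ha ha1 S
    calc _ ≤ ENNReal.ofReal (1/2) * (256 * ZA a β (offE S)) +
          ENNReal.ofReal (1/2) * (256 * ZA a β (offE S)) := by
          gcongr <;> exact eM_le hN a β hβ ha ha1 _ _
      _ = 256 * ZA a β (offE S) := by
          rw [← add_mul, ← ENNReal.ofReal_add (by norm_num) (by norm_num)]
          norm_num
      _ ≤ _ := by gcongr

lemma Q_bound {N : ℕ} (hN : 2 ≤ N) (a β : ℝ) (hβ : 1 ≤ β) (ha : 0 < a) (ha1 : a ≤ 1 / 16)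
    (S Bl : Finset (Fin N)) (hBS : Bl ⊆ S) (h1 : (bd1 S).card ≤ 1) (h2 : (bd2 S).card ≤ 1)
    (k l : Fin N → ℕ) (hk : ∀ i, i ∉ Bl → k i = 0 ∧ l i = 0) :
    ∫⁻ z, ENNReal.ofReal (mon k l z * Qf a β S Bl z) ∂(piN N a β) ≤
      ENNReal.ofReal (256 ^ (S.card + 1) * mom a β k l) *
        ZA a β (Finset.univ : Finset (Fin N)) := by
  have hkS : ∀ i, i ∉ S → k i = 0 ∧ l i = 0 := fun i hi => hk i fun h => hi (hBS h)
  have hmon : ∀ z : Om N, mon k l z = ∏ i ∈ S, (|(z i).1| ^ k i * |(z i).2| ^ l i) := by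
    intro z
    unfold mon
    symm
    refine Finset.prod_subset (Finset.subset_univ S) fun i _ hi => ?_
    rw [(hkS i hi).1, (hkS i hi).2]; simp
  have hmom : mom a β k l = ∏ i ∈ S, (Real.Gamma (((k i + l i : ℕ) : ℝ) / 2 + 1) *
      Lam a β ^ (k i + l i)) := by
    unfold mom
    symm
    refine Finset.prod_subset (Finset.subset_univ S) fun i _ hi => ?_
    rw [(hkS i hi).1, (hkS i hi).2]; simp
  have hL : 0 ≤ Lam a β := Real.sqrt_nonneg _
  have hG : ∀ n : ℕ, 0 ≤ Real.Gamma ((n:ℝ)/2 + 1) := fun n =>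
    (Real.Gamma_pos_of_pos (by positivity)).le
  set g : Fin N → ℝ × ℝ → ℝ≥0∞ := fun i y => ENNReal.ofReal (|y.1| ^ k i * |y.2| ^ l i *
    (eta a β Bl i y ^ 2 * tlt a β y ^ 2)) with hg
  have hgm : ∀ i, Measurable (g i) := by
    intro i
    have := eta_meas a β Bl i
    have := tlt_meas a β
    simp only [hg]; fun_prop
  have hgb : ∀ i, ∫⁻ y, g i y ∂(nu a β) ≤
      ENNReal.ofReal (256 * (Real.Gamma (((k i + l i : ℕ) : ℝ) / 2 + 1) * Lam a β ^ (k i + l i))) := by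
    intro i
    by_cases hi : i ∈ Bl
    · refine le_trans (le_of_eq ?_) (site_moment a β (2 * a) (k i) (l i) hβ ha ha1 le_rfl)
      refine lintegral_congr fun y => ?_
      simp only [hg, eta, hi, if_true, tlt]
      congr 2
      rw [← Real.exp_nat_mul, ← Real.exp_add]
      congr 1; push_cast; ring
    · obtain ⟨e1, e2⟩ := hk i hi
      rw [e1, e2]
      simp only [hg, eta, hi, if_false, tlt, e1, e2]
      refine le_trans (le_trans (le_of_eq ?_) (nu_exp_sq a β (a + 1/16) hβ ha ha1 (by linarith))) ?_
      · refine lintegral_congr fun y => ?_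
        simp only [pow_zero, one_mul]
        congr 1
        rw [← Real.exp_nat_mul, ← Real.exp_nat_mul, ← Real.exp_add]
        congr 1; push_cast; ring
      · simp
        norm_num
  have hout := prod_out a β hβ ha ha1 S g hgm (fun z => ENNReal.ofReal (Fo a β S z))
    (Fo_meas a β S).ennreal_ofReal (fun i hi z y => by rw [Fo_update a β S i hi])
  calc ∫⁻ z, ENNReal.ofReal (mon k l z * Qf a β S Bl z) ∂(piN N a β)
      = ∫⁻ z, (∏ i ∈ S, g i (z i)) * ENNReal.ofReal (Fo a β S z) ∂(piN N a β) := by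
        refine lintegral_congr fun z => ?_
        simp only [hg]
        rw [← ENNReal.ofReal_prod_of_nonneg (fun i _ => by positivity),
          ← ENNReal.ofReal_mul (Finset.prod_nonneg fun i _ => by positivity)]
        congr 1
        rw [hmon, Qf, ← mul_assoc, ← Finset.prod_mul_distrib]
    _ ≤ _ := hout
    _ ≤ (∏ i ∈ S, ENNReal.ofReal (256 * (Real.Gamma (((k i + l i : ℕ) : ℝ) / 2 + 1) *
          Lam a β ^ (k i + l i)))) * (256 * ZA a β (Finset.univ : Finset (Fin N))) := by
        refine mul_le_mul' (Finset.prod_le_prod' fun i _ => hgb i)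
          (Fo_bound hN a β hβ ha ha1 S h1 h2)
    _ = _ := by
        rw [← ENNReal.ofReal_prod_of_nonneg (fun i _ => by have := hG (k i + l i); positivity),
          Finset.prod_mul_distrib, Finset.prod_const, ← hmom, ← mul_assoc,
          show (256 : ℝ≥0∞) = ENNReal.ofReal 256 by simp]
        rw [← ENNReal.ofReal_mul]
        · congr 2; ring
        · rw [hmom]
          exact mul_nonneg (by positivity)
            (Finset.prod_nonneg fun i _ => by have := hG (k i + l i); positivity)


/-- edge exponent on the doubled space -/
noncomputable def se {N : ℕ} (a β : ℝ) (Z : Om N × Om N) (j : Fin N) : ℝ :=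
  β * a * ((Z.1 j).1 * (Z.1 (pv j)).1 + (Z.2 j).1 * (Z.2 (pv j)).1)

/-- one replica tilt of an edge -/
noncomputable def te {N : ℕ} (a β : ℝ) (z : Om N) (j : Fin N) : ℝ :=
  tlt a β (z j) * tlt a β (z (pv j))

lemma se_abs {N : ℕ} (a β : ℝ) (hβ : 1 ≤ β) (ha : 0 < a) (Z : Om N × Om N) (j : Fin N) :
    Real.exp |se a β Z j| ≤ te a β Z.1 j * te a β Z.2 j := by
  unfold te tlt se
  simp only [← Real.exp_add]
  refine Real.exp_le_exp.2 ?_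
  have h : 0 < β * a := by positivity
  rw [abs_mul, abs_of_pos h]
  have h2 : |(Z.1 j).1 * (Z.1 (pv j)).1 + (Z.2 j).1 * (Z.2 (pv j)).1| ≤
    ((Z.1 j).1 ^ 2 + (Z.1 (pv j)).1 ^ 2 + (Z.2 j).1 ^ 2 + (Z.2 (pv j)).1 ^ 2) / 2 := by
    rw [abs_le]
    constructor <;> nlinarith [sq_nonneg ((Z.1 j).1 - (Z.1 (pv j)).1), sq_nonneg ((Z.2 j).1 - (Z.2 (pv j)).1),
      sq_nonneg ((Z.1 j).1 + (Z.1 (pv j)).1), sq_nonneg ((Z.2 j).1 + (Z.2 (pv j)).1)]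
  calc _ ≤ _ := mul_le_mul_of_nonneg_left h2 h.le
    _ = _ := by ring

lemma exp_sub_one_abs (s : ℝ) : |Real.exp s - 1| ≤ |s| * Real.exp |s| := by
  rcases le_total 0 s with h | h
  · rw [abs_of_nonneg h, abs_of_nonneg (by linarith [Real.one_le_exp h])]
    have h1 := Real.add_one_le_exp (-s)
    have h2 : Real.exp (-s) * Real.exp s = 1 := by rw [← Real.exp_add]; simp
    nlinarith [Real.exp_pos s]
  · rw [abs_of_nonpos h, abs_of_nonpos (by linarith [Real.exp_le_one_iff.2 h])]
    have h1 := Real.add_one_le_exp s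
    have h2 := Real.one_le_exp (x := -s) (by linarith)
    nlinarith

lemma exp_sub_one_abs' (s : ℝ) : |Real.exp s - 1| ≤ Real.exp |s| := by
  rw [abs_le]
  constructor
  · linarith [Real.exp_pos s, Real.one_le_exp (abs_nonneg s)]
  · linarith [Real.exp_le_exp.2 (le_abs_self s)]

/-- end point constants -/
noncomputable def kap {N : ℕ} (a : ℝ) (Bl : Finset (Fin N)) (i : Fin N) : ℝ :=
  if i ∈ Bl then (Real.sqrt a)⁻¹ else 4

lemma kap_pos {N : ℕ} (a : ℝ) (ha : 0 < a) (Bl : Finset (Fin N)) (i : Fin N) : 0 < kap a Bl i := by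
  unfold kap; split_ifs <;> positivity

lemma add_le_exp_sq (v w : ℝ) : v + w ≤ Real.exp (v ^ 2 / 2) * Real.exp (w ^ 2 / 2) := by
  rw [← Real.exp_add]
  have := Real.add_one_le_exp (v ^ 2 / 2 + w ^ 2 / 2)
  nlinarith [sq_nonneg (v - 1), sq_nonneg (w - 1)]

lemma end_bound {N : ℕ} (a β : ℝ) (hβ : 1 ≤ β) (ha : 0 < a) (Bl : Finset (Fin N)) (i : Fin N)
    (y y' : ℝ × ℝ) :
    Real.sqrt β * (|y.1| + |y'.1|) ≤ kap a Bl i * (eta a β Bl i y * eta a β Bl i y') := by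
  have hb : Real.sqrt β ^ 2 = β := Real.sq_sqrt (by linarith)
  have haa : Real.sqrt a ^ 2 = a := Real.sq_sqrt ha.le
  have hsa : 0 < Real.sqrt a := Real.sqrt_pos.2 ha
  unfold kap eta
  split_ifs
  · have h := add_le_exp_sq (Real.sqrt β * Real.sqrt a * |y.1|) (Real.sqrt β * Real.sqrt a * |y'.1|)
    simp only [mul_pow, hb, haa, sq_abs] at h
    rw [inv_mul_eq_div, le_div_iff₀ hsa]
    calc _ = _ := by ring
      _ ≤ _ := h
  · have h := add_le_exp_sq (Real.sqrt β * |y.1| / 4) (Real.sqrt β * |y'.1| / 4)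
    simp only [div_pow, mul_pow, hb, sq_abs] at h
    have e : ∀ x : ℝ, β * x ^ 2 / 4 ^ 2 / 2 = β * x ^ 2 / 32 := fun x => by ring
    rw [e, e] at h
    linarith

lemma f_bound {N : ℕ} (a β : ℝ) (hβ : 1 ≤ β) (ha : 0 < a) (Bl : Finset (Fin N)) (Z : Om N × Om N)
    (j : Fin N) :
    |Real.exp (se a β Z j) - 1| ≤ (a * kap a Bl j * kap a Bl (pv j)) *
      ((eta a β Bl j (Z.1 j) * eta a β Bl (pv j) (Z.1 (pv j)) * te a β Z.1 j) *
      (eta a β Bl j (Z.2 j) * eta a β Bl (pv j) (Z.2 (pv j)) * te a β Z.2 j)) := by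
  refine (exp_sub_one_abs _).trans ?_
  have h1 := end_bound a β hβ ha Bl j (Z.1 j) (Z.2 j)
  have h2 := end_bound a β hβ ha Bl (pv j) (Z.1 (pv j)) (Z.2 (pv j))
  have h3 := se_abs a β hβ ha Z j
  have hb : Real.sqrt β * Real.sqrt β = β := Real.mul_self_sqrt (by linarith)
  have h4 : |se a β Z j| ≤ a * ((Real.sqrt β * (|(Z.1 j).1| + |(Z.2 j).1|)) *
      (Real.sqrt β * (|(Z.1 (pv j)).1| + |(Z.2 (pv j)).1|))) := by
    unfold se
    have h : 0 < β * a := by positivity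
    rw [abs_mul, abs_of_pos h]
    calc _ ≤ β * a * ((|(Z.1 j).1| + |(Z.2 j).1|) * (|(Z.1 (pv j)).1| + |(Z.2 (pv j)).1|)) := by
          refine mul_le_mul_of_nonneg_left ?_ h.le
          refine (abs_add_le _ _).trans ?_
          rw [abs_mul, abs_mul]
          have := mul_nonneg (abs_nonneg (Z.1 j).1) (abs_nonneg (Z.2 (pv j)).1)
          have := mul_nonneg (abs_nonneg (Z.2 j).1) (abs_nonneg (Z.1 (pv j)).1)
          nlinarith
      _ = _ := by nth_rewrite 1 [← hb]; ring
  have hk := kap_pos a ha Bl j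
  have hk' := kap_pos a ha Bl (pv j)
  have he1 := eta_pos a β Bl j (Z.1 j)
  have he2 := eta_pos a β Bl j (Z.2 j)
  calc _ ≤ (a * ((kap a Bl j * (eta a β Bl j (Z.1 j) * eta a β Bl j (Z.2 j))) *
        (kap a Bl (pv j) * (eta a β Bl (pv j) (Z.1 (pv j)) * eta a β Bl (pv j) (Z.2 (pv j)))))) *
        (te a β Z.1 j * te a β Z.2 j) := by
        refine mul_le_mul (h4.trans ?_) h3 (Real.exp_pos _).le ?_
        · refine mul_le_mul_of_nonneg_left (mul_le_mul h1 h2 (by positivity) (by positivity)) ha.le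
        · refine mul_nonneg ha.le (mul_nonneg (by positivity) ?_)
          have := eta_pos a β Bl (pv j) (Z.1 (pv j))
          have := eta_pos a β Bl (pv j) (Z.2 (pv j))
          positivity
    _ = _ := by ring

lemma te_pos {N : ℕ} (a β : ℝ) (z : Om N) (j : Fin N) : 0 < te a β z j :=
  mul_pos (tlt_pos _ _ _) (tlt_pos _ _ _)

lemma te_prod {N : ℕ} (a β : ℝ) (S : Finset (Fin N)) (z : Om N) :
    ∏ j ∈ (offE S)ᶜ, te a β z j =
      (∏ i ∈ S, tlt a β (z i) ^ 2) * ((∏ j ∈ bd1 S, tlt a β (z j)) * (∏ j ∈ bd2 S, tlt a β (z j))) := by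
  unfold te
  rw [Finset.prod_mul_distrib]
  have h1 : (offE S)ᶜ = S ∪ bd1 S := by
    ext j; simp only [offE, bd1, Finset.mem_compl, Finset.mem_filter, Finset.mem_union, Finset.mem_univ]
    tauto
  have h2 : ((offE S)ᶜ).map ((finRotate N).symm.toEmbedding) = S ∪ bd2 S := by
    ext j
    simp only [Finset.mem_map_equiv, Equiv.symm_symm, offE, bd2, Finset.mem_compl, Finset.mem_filter,
      Finset.mem_union, Finset.mem_univ, Equiv.symm_apply_apply, pv, nx]
    tauto
  have h3 : ∏ j ∈ (offE S)ᶜ, tlt a β (z (pv j)) = ∏ j ∈ S ∪ bd2 S, tlt a β (z j) := by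
    rw [← h2, Finset.prod_map]; rfl
  rw [h3, h1, Finset.prod_union, Finset.prod_union]
  · simp only [pow_two, Finset.prod_mul_distrib]; ring
  · rw [Finset.disjoint_left]; intro j hj; simp [bd2, hj]
  · rw [Finset.disjoint_left]; intro j hj; simp [bd1, hj]

lemma eta_prod {N : ℕ} (a β : ℝ) (hβ : 1 ≤ β) (ha : 0 < a) (S Bl G : Finset (Fin N))
    (hG : ∀ j ∈ G, j ∈ S ∧ pv j ∈ S) (z : Om N) :
    ∏ j ∈ G, (eta a β Bl j (z j) * eta a β Bl (pv j) (z (pv j))) ≤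
      ∏ i ∈ S, eta a β Bl i (z i) ^ 2 := by
  have h1 : ∏ j ∈ G, eta a β Bl (pv j) (z (pv j)) =
      ∏ j ∈ G.map ((finRotate N).symm.toEmbedding), eta a β Bl j (z j) := by
    rw [Finset.prod_map]; rfl
  have hsub : ∀ T ⊆ S, ∏ j ∈ T, eta a β Bl j (z j) ≤ ∏ j ∈ S, eta a β Bl j (z j) := fun T hT => by
    rw [← Finset.prod_sdiff hT]
    refine le_mul_of_one_le_left (Finset.prod_nonneg fun i _ => (eta_pos a β Bl i _).le) ?_
    have := Finset.prod_le_prod (s := S \ T) (f := fun _ => (1:ℝ)) (g := fun j => eta a β Bl j (z j))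
      (fun _ _ => zero_le_one) (fun i _ => one_le_eta a β hβ ha Bl i _)
    simpa using this
  rw [Finset.prod_mul_distrib, h1]
  simp only [pow_two, Finset.prod_mul_distrib]
  refine mul_le_mul (hsub _ fun j hj => (hG j hj).1) (hsub _ ?_)
    (Finset.prod_nonneg fun i _ => (eta_pos a β Bl i _).le)
    (Finset.prod_nonneg fun i _ => (eta_pos a β Bl i _).le)
  intro i hi
  rw [Finset.mem_map] at hi
  obtain ⟨j, hj, rfl⟩ := hi
  exact (hG j hj).2

/-- single replica domination -/
lemma single_dom {N : ℕ} (a β : ℝ) (hβ : 1 ≤ β) (ha : 0 < a) (S Bl G : Finset (Fin N))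
    (hG : ∀ j ∈ G, j ∈ S ∧ pv j ∈ S) (z : Om N) :
    (∏ j ∈ G, (eta a β Bl j (z j) * eta a β Bl (pv j) (z (pv j)))) *
      (∏ j ∈ (offE S)ᶜ, te a β z j) * WA a β (offE S) z ≤ Qf a β S Bl z := by
  have h := eta_prod a β hβ ha S Bl G hG z
  rw [te_prod]
  unfold Qf Fo
  have hW := (WA_pos a β (offE S) z).le
  have p1 : ∀ T : Finset (Fin N), 0 ≤ ∏ j ∈ T, tlt a β (z j) := fun T =>
    Finset.prod_nonneg fun i _ => (tlt_pos a β _).le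
  have p2 : 0 ≤ ∏ j ∈ S, tlt a β (z j) ^ 2 := Finset.prod_nonneg fun i _ => by positivity
  calc _ ≤ (∏ i ∈ S, eta a β Bl i (z i) ^ 2) * ((∏ i ∈ S, tlt a β (z i) ^ 2) *
        ((∏ j ∈ bd1 S, tlt a β (z j)) * (∏ j ∈ bd2 S, tlt a β (z j)))) * WA a β (offE S) z := by
        refine mul_le_mul_of_nonneg_right (mul_le_mul_of_nonneg_right h ?_) hW
        exact mul_nonneg p2 (mul_nonneg (p1 _) (p1 _))
    _ = _ := by rw [Finset.prod_mul_distrib]; ring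

/-- replica weight with the edges of `G` replaced by `f` -/
noncomputable def fw {N : ℕ} (a β : ℝ) (G : Finset (Fin N)) (Z : Om N × Om N) : ℝ :=
  (∏ j ∈ G, (Real.exp (se a β Z j) - 1)) * ∏ j ∈ Gᶜ, Real.exp (se a β Z j)

lemma se_meas {N : ℕ} (a β : ℝ) (j : Fin N) : Measurable (fun Z : Om N × Om N => se a β Z j) := by
  unfold se; fun_prop

lemma fw_meas {N : ℕ} (a β : ℝ) (G : Finset (Fin N)) : Measurable (fw a β G) := by
  have := se_meas (N := N) a β
  unfold fw; fun_prop

lemma fw_dom {N : ℕ} (a β : ℝ) (hβ : 1 ≤ β) (ha : 0 < a) (S Bl G : Finset (Fin N))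
    (hG : ∀ j ∈ G, j ∈ S ∧ pv j ∈ S) (Z : Om N × Om N) :
    |fw a β G Z| ≤ (∏ j ∈ G, (a * kap a Bl j * kap a Bl (pv j))) *
      (Qf a β S Bl Z.1 * Qf a β S Bl Z.2) := by
  have hGo : G ⊆ (offE S)ᶜ := by
    intro j hj
    simp [offE, hG j hj]
  have hsplit : Gᶜ = ((offE S)ᶜ \ G) ∪ offE S := by
    ext j
    simp only [Finset.mem_compl, Finset.mem_union, Finset.mem_sdiff]
    have := @hGo j
    simp only [Finset.mem_compl] at this
    tauto
  have hdisj : Disjoint ((offE S)ᶜ \ G) (offE S) := by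
    rw [Finset.disjoint_left]; intro j; simp; tauto
  have hoff : ∏ j ∈ offE S, Real.exp (se a β Z j) = WA a β (offE S) Z.1 * WA a β (offE S) Z.2 := by
    unfold WA se
    rw [← Real.exp_sum, ← Real.exp_add]
    congr 1
    rw [← mul_add, ← Finset.sum_add_distrib, ← Finset.mul_sum]
  have hw : ∏ j ∈ (offE S)ᶜ \ G, Real.exp (se a β Z j) ≤
      ∏ j ∈ (offE S)ᶜ \ G, (te a β Z.1 j * te a β Z.2 j) :=
    Finset.prod_le_prod (fun _ _ => (Real.exp_pos _).le) fun j _ =>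
      (Real.exp_le_exp.2 (le_abs_self _)).trans (se_abs a β hβ ha Z j)
  have hf : ∏ j ∈ G, |Real.exp (se a β Z j) - 1| ≤ ∏ j ∈ G, ((a * kap a Bl j * kap a Bl (pv j)) *
      ((eta a β Bl j (Z.1 j) * eta a β Bl (pv j) (Z.1 (pv j)) * te a β Z.1 j) *
      (eta a β Bl j (Z.2 j) * eta a β Bl (pv j) (Z.2 (pv j)) * te a β Z.2 j))) :=
    Finset.prod_le_prod (fun _ _ => abs_nonneg _) fun j _ => f_bound a β hβ ha Bl Z j
  have hd1 := single_dom a β hβ ha S Bl G hG Z.1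
  have hd2 := single_dom a β hβ ha S Bl G hG Z.2
  have hW1 := (WA_pos a β (offE S) Z.1).le
  have hW2 := (WA_pos a β (offE S) Z.2).le
  have ht : ∀ (T : Finset (Fin N)) (z : Om N), 0 ≤ ∏ j ∈ T, te a β z j := fun T z =>
    Finset.prod_nonneg fun i _ => (te_pos a β _ _).le
  have he : ∀ (z : Om N), 0 ≤ ∏ j ∈ G, (eta a β Bl j (z j) * eta a β Bl (pv j) (z (pv j))) := fun z =>
    Finset.prod_nonneg fun i _ => mul_nonneg (eta_pos _ _ _ _ _).le (eta_pos _ _ _ _ _).le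
  have hK : 0 ≤ ∏ j ∈ G, (a * kap a Bl j * kap a Bl (pv j)) := Finset.prod_nonneg fun i _ => by
    have := kap_pos a ha Bl i
    have := kap_pos a ha Bl (pv i)
    positivity
  have hte : ∀ z : Om N, ∏ j ∈ (offE S)ᶜ, te a β z j =
      (∏ j ∈ (offE S)ᶜ \ G, te a β z j) * ∏ j ∈ G, te a β z j := fun z =>
    (Finset.prod_sdiff hGo).symm
  unfold fw
  rw [abs_mul, Finset.abs_prod, Finset.abs_prod]
  simp only [Real.abs_exp]
  rw [hsplit, Finset.prod_union hdisj, hoff]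
  calc _ ≤ (∏ j ∈ G, ((a * kap a Bl j * kap a Bl (pv j)) *
      ((eta a β Bl j (Z.1 j) * eta a β Bl (pv j) (Z.1 (pv j)) * te a β Z.1 j) *
      (eta a β Bl j (Z.2 j) * eta a β Bl (pv j) (Z.2 (pv j)) * te a β Z.2 j)))) *
      ((∏ j ∈ (offE S)ᶜ \ G, (te a β Z.1 j * te a β Z.2 j)) * (WA a β (offE S) Z.1 * WA a β (offE S) Z.2)) := by
        refine mul_le_mul hf (mul_le_mul_of_nonneg_right hw (mul_nonneg hW1 hW2)) ?_ ?_
        · exact mul_nonneg (Finset.prod_nonneg fun _ _ => (Real.exp_pos _).le) (mul_nonneg hW1 hW2)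
        · exact (Finset.prod_nonneg fun _ _ => abs_nonneg _).trans hf
    _ = (∏ j ∈ G, (a * kap a Bl j * kap a Bl (pv j))) *
      (((∏ j ∈ G, (eta a β Bl j (Z.1 j) * eta a β Bl (pv j) (Z.1 (pv j)))) *
      (∏ j ∈ (offE S)ᶜ, te a β Z.1 j) * WA a β (offE S) Z.1) *
      ((∏ j ∈ G, (eta a β Bl j (Z.2 j) * eta a β Bl (pv j) (Z.2 (pv j)))) *
      (∏ j ∈ (offE S)ᶜ, te a β Z.2 j) * WA a β (offE S) Z.2)) := by
        rw [hte, hte]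
        simp only [Finset.prod_mul_distrib]
        ring
    _ ≤ _ := by
        refine mul_le_mul_of_nonneg_left (mul_le_mul hd1 hd2 ?_ ?_) hK
        · exact mul_nonneg (mul_nonneg (he _) (ht _ _)) hW2
        · exact (mul_nonneg (mul_nonneg (he _) (ht _ _)) hW1).trans hd1



/-- signed monomial -/
noncomputable def smon {N : ℕ} (k l : Fin N → ℕ) (z : Om N) : ℝ :=
  ∏ i, ((z i).1 ^ k i * (z i).2 ^ l i)

lemma smon_abs {N : ℕ} (k l : Fin N → ℕ) (z : Om N) : |smon k l z| = mon k l z := by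
  unfold smon mon
  rw [Finset.abs_prod]
  simp only [abs_mul, abs_pow]

lemma smon_meas {N : ℕ} (k l : Fin N → ℕ) : Measurable (smon k l) := by unfold smon; fun_prop
lemma mon_meas {N : ℕ} (k l : Fin N → ℕ) : Measurable (mon k l) := by unfold mon; fun_prop
lemma mon_nonneg {N : ℕ} (k l : Fin N → ℕ) (z : Om N) : 0 ≤ mon k l z := by
  rw [← smon_abs]; exact abs_nonneg _

lemma mon_add {N : ℕ} (k l k' l' : Fin N → ℕ) (z : Om N) :
    mon (k + k') (l + l') z = mon k l z * mon k' l' z := by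
  unfold mon
  rw [← Finset.prod_mul_distrib]
  refine Finset.prod_congr rfl fun i _ => ?_
  simp only [Pi.add_apply, pow_add]; ring

lemma smon_add {N : ℕ} (k l k' l' : Fin N → ℕ) (z : Om N) :
    smon (k + k') (l + l') z = smon k l z * smon k' l' z := by
  unfold smon
  rw [← Finset.prod_mul_distrib]
  refine Finset.prod_congr rfl fun i _ => ?_
  simp only [Pi.add_apply, pow_add]; ring

lemma mon_zero {N : ℕ} (z : Om N) : mon 0 0 z = 1 := by simp [mon]
lemma smon_zero {N : ℕ} (z : Om N) : smon 0 0 z = 1 := by simp [smon]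
lemma mom_zero {N : ℕ} (a β : ℝ) : mom (N := N) a β 0 0 = 1 := by simp [mom]

lemma mom_nonneg {N : ℕ} (a β : ℝ) (k l : Fin N → ℕ) : 0 ≤ mom a β k l := by
  unfold mom
  have hL : 0 ≤ Lam a β := Real.sqrt_nonneg _
  refine Finset.prod_nonneg fun i _ => mul_nonneg (Real.Gamma_pos_of_pos (by positivity)).le ?_
  positivity

lemma mom_add {N : ℕ} (a β : ℝ) (k l k' l' : Fin N → ℕ)
    (h : ∀ i, (k i = 0 ∧ l i = 0) ∨ (k' i = 0 ∧ l' i = 0)) :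
    mom a β (k + k') (l + l') = mom a β k l * mom a β k' l' := by
  unfold mom
  rw [← Finset.prod_mul_distrib]
  refine Finset.prod_congr rfl fun i _ => ?_
  simp only [Pi.add_apply]
  rcases h i with ⟨h1, h2⟩ | ⟨h1, h2⟩ <;> simp [h1, h2]

lemma Qf_meas {N : ℕ} (a β : ℝ) (S Bl : Finset (Fin N)) : Measurable (Qf a β S Bl) := by
  have h1 := tlt_meas a β
  have h2 := fun i => eta_meas a β Bl i
  have h3 := Fo_meas a β S
  unfold Qf; fun_prop

lemma Qf_nonneg {N : ℕ} (a β : ℝ) (S Bl : Finset (Fin N)) (z : Om N) : 0 ≤ Qf a β S Bl z := by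
  unfold Qf
  exact mul_nonneg (Finset.prod_nonneg fun i _ => by positivity) (Fo_pos _ _ _ _).le

/-- replica difference observable -/
noncomputable def Phi {N : ℕ} (k l k' l' : Fin N → ℕ) (Z : Om N × Om N) : ℝ :=
  (smon k l Z.1 - smon k l Z.2) * (smon k' l' Z.1 - smon k' l' Z.2)

lemma Phi_meas {N : ℕ} (k l k' l' : Fin N → ℕ) : Measurable (Phi k l k' l') := by
  have h1 := smon_meas k l
  have h2 := smon_meas k' l'
  unfold Phi; fun_prop

/-- doubled measure -/
noncomputable def PP (N : ℕ) (a β : ℝ) : Measure (Om N × Om N) := (piN N a β).prod (piN N a β)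

lemma piN_prob (N : ℕ) (a β : ℝ) (hβ : 1 ≤ β) (ha : 0 < a) (ha1 : a ≤ 1 / 16) :
    IsProbabilityMeasure (piN N a β) := by
  have := nu_prob a β hβ ha ha1
  unfold piN; infer_instance

lemma QQ_bound {N : ℕ} (hN : 2 ≤ N) (a β : ℝ) (hβ : 1 ≤ β) (ha : 0 < a) (ha1 : a ≤ 1 / 16)
    (S Bl : Finset (Fin N)) (hBS : Bl ⊆ S) (h1 : (bd1 S).card ≤ 1) (h2 : (bd2 S).card ≤ 1)
    (k l k' l' : Fin N → ℕ) (hk : ∀ i, i ∉ Bl → k i = 0 ∧ l i = 0)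
    (hk' : ∀ i, i ∉ Bl → k' i = 0 ∧ l' i = 0) :
    ∫⁻ Z, ENNReal.ofReal ((mon k l Z.1 * Qf a β S Bl Z.1) * (mon k' l' Z.2 * Qf a β S Bl Z.2)) ∂(PP N a β) ≤
      ENNReal.ofReal (256 ^ (2 * (S.card + 1)) * (mom a β k l * mom a β k' l')) *
        ZA a β (Finset.univ : Finset (Fin N)) ^ 2 := by
  have := piN_prob N a β hβ ha ha1
  have hm := mon_meas k l
  have hm' := mon_meas k' l'
  have hq := Qf_meas a β S Bl
  have e : ∫⁻ Z, ENNReal.ofReal ((mon k l Z.1 * Qf a β S Bl Z.1) * (mon k' l' Z.2 * Qf a β S Bl Z.2)) ∂(PP N a β)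
     = ∫⁻ Z, ENNReal.ofReal (mon k l Z.1 * Qf a β S Bl Z.1) * ENNReal.ofReal (mon k' l' Z.2 * Qf a β S Bl Z.2)
       ∂((piN N a β).prod (piN N a β)) := by
    unfold PP
    refine lintegral_congr fun Z => ENNReal.ofReal_mul (mul_nonneg (mon_nonneg _ _ _) (Qf_nonneg _ _ _ _ _))
  rw [e, lintegral_prod_mul (f := fun z => ENNReal.ofReal (mon k l z * Qf a β S Bl z))
    (g := fun z => ENNReal.ofReal (mon k' l' z * Qf a β S Bl z)) (by fun_prop) (by fun_prop)]
  refine (mul_le_mul' (Q_bound hN a β hβ ha ha1 S Bl hBS h1 h2 k l hk)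
    (Q_bound hN a β hβ ha ha1 S Bl hBS h1 h2 k' l' hk')).trans (le_of_eq ?_)
  have := mom_nonneg a β k l
  have := mom_nonneg a β k' l'
  rw [mul_mul_mul_comm, ← ENNReal.ofReal_mul (by positivity), ← pow_two]
  congr 2
  ring

lemma phi_bound {N : ℕ} (hN : 2 ≤ N) (a β : ℝ) (hβ : 1 ≤ β) (ha : 0 < a) (ha1 : a ≤ 1 / 16)
    (S Bl : Finset (Fin N)) (hBS : Bl ⊆ S) (h1 : (bd1 S).card ≤ 1) (h2 : (bd2 S).card ≤ 1)
    (k l k' l' : Fin N → ℕ) (hk : ∀ i, i ∉ Bl → k i = 0 ∧ l i = 0)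
    (hk' : ∀ i, i ∉ Bl → k' i = 0 ∧ l' i = 0)
    (hd : ∀ i, (k i = 0 ∧ l i = 0) ∨ (k' i = 0 ∧ l' i = 0))
    (C : ℝ) (hC : 0 ≤ C) (F : Om N × Om N → ℝ)
    (hF : ∀ Z, |F Z| ≤ C * (Qf a β S Bl Z.1 * Qf a β S Bl Z.2)) :
    ∫⁻ Z, ENNReal.ofReal |Phi k l k' l' Z * F Z| ∂(PP N a β) ≤
      ENNReal.ofReal (4 * C * 256 ^ (2 * (S.card + 1)) * (mom a β k l * mom a β k' l')) *
        ZA a β (Finset.univ : Finset (Fin N)) ^ 2 := by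
  have hks : ∀ i, i ∉ Bl → (k + k') i = 0 ∧ (l + l') i = 0 := fun i hi => by
    simp [hk i hi, hk' i hi]
  have hz : ∀ i, i ∉ Bl → (0 : Fin N → ℕ) i = 0 ∧ (0 : Fin N → ℕ) i = 0 := fun i hi => by simp
  have b1 := QQ_bound hN a β hβ ha ha1 S Bl hBS h1 h2 (k + k') (l + l') 0 0 hks hz
  have b2 := QQ_bound hN a β hβ ha ha1 S Bl hBS h1 h2 0 0 (k + k') (l + l') hz hks
  have b3 := QQ_bound hN a β hβ ha ha1 S Bl hBS h1 h2 k l k' l' hk hk'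
  have b4 := QQ_bound hN a β hβ ha ha1 S Bl hBS h1 h2 k' l' k l hk' hk
  rw [mom_add a β k l k' l' hd, mom_zero] at b1 b2
  rw [one_mul] at b2
  rw [mul_one] at b1
  rw [mul_comm (mom a β k' l')] at b4
  set Y := mom a β k l * mom a β k' l'
  have hY : 0 ≤ Y := mul_nonneg (mom_nonneg _ _ _ _) (mom_nonneg _ _ _ _)
  have hm := mon_meas k l
  have hm' := mon_meas k' l'
  have hm2 := mon_meas (k + k') (l + l')
  have hm0 := mon_meas (N := N) 0 0
  have hq := Qf_meas a β S Bl
  have n1 := fun z => mon_nonneg k l z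
  have n2 := fun z => mon_nonneg k' l' z
  have n3 := fun z => Qf_nonneg a β S Bl z
  set q : Om N × Om N → (Fin N → ℕ) → (Fin N → ℕ) → (Fin N → ℕ) → (Fin N → ℕ) → ℝ≥0∞ :=
    fun Z k l k' l' => ENNReal.ofReal ((mon k l Z.1 * Qf a β S Bl Z.1) * (mon k' l' Z.2 * Qf a β S Bl Z.2)) with hqd
  calc _ ≤ ∫⁻ Z, ENNReal.ofReal C * (q Z (k + k') (l + l') 0 0 + q Z 0 0 (k + k') (l + l') +
        q Z k l k' l' + q Z k' l' k l) ∂(PP N a β) := by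
        refine lintegral_mono fun Z => ?_
        simp only [hqd]
        rw [← ENNReal.ofReal_add, ← ENNReal.ofReal_add, ← ENNReal.ofReal_add, ← ENNReal.ofReal_mul hC]
        · refine ENNReal.ofReal_le_ofReal ?_
          rw [mon_add, mon_add, mon_zero, mon_zero, abs_mul]
          have hp : |Phi k l k' l' Z| ≤ (mon k l Z.1 + mon k l Z.2) * (mon k' l' Z.1 + mon k' l' Z.2) := by
            unfold Phi
            rw [abs_mul]
            simp only [← smon_abs]
            gcongr <;> exact abs_sub _ _
          refine (mul_le_mul hp (hF Z) (abs_nonneg _) ?_).trans (le_of_eq ?_)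
          · exact mul_nonneg (add_nonneg (n1 _) (n1 _)) (add_nonneg (n2 _) (n2 _))
          · ring
        all_goals
          have := mon_nonneg (k + k') (l + l') Z.1
          have := mon_nonneg (k + k') (l + l') Z.2
          have := mon_nonneg (0) (0) Z.1
          have := mon_nonneg (0) (0) Z.2
          have := n1 Z.1
          have := n1 Z.2
          have := n2 Z.1
          have := n2 Z.2
          have := n3 Z.1
          have := n3 Z.2
          positivity
    _ = ENNReal.ofReal C * (∫⁻ Z, q Z (k + k') (l + l') 0 0 ∂(PP N a β) +
        ∫⁻ Z, q Z 0 0 (k + k') (l + l') ∂(PP N a β) + ∫⁻ Z, q Z k l k' l' ∂(PP N a β)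
         + ∫⁻ Z, q Z k' l' k l ∂(PP N a β)) := by
        rw [lintegral_const_mul _ (by fun_prop), lintegral_add_right _ (by fun_prop),
          lintegral_add_right _ (by fun_prop), lintegral_add_right _ (by fun_prop)]
    _ ≤ ENNReal.ofReal C * (ENNReal.ofReal (256 ^ (2 * (S.card + 1)) * Y) * ZA a β (Finset.univ : Finset (Fin N)) ^ 2
        + ENNReal.ofReal (256 ^ (2 * (S.card + 1)) * Y) * ZA a β (Finset.univ : Finset (Fin N)) ^ 2
        + ENNReal.ofReal (256 ^ (2 * (S.card + 1)) * Y) * ZA a β (Finset.univ : Finset (Fin N)) ^ 2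
        + ENNReal.ofReal (256 ^ (2 * (S.card + 1)) * Y) * ZA a β (Finset.univ : Finset (Fin N)) ^ 2) := by
        gcongr
    _ = _ := by
        have e : ENNReal.ofReal (4 * C * 256 ^ (2 * (S.card + 1)) * Y) =
          4 * ENNReal.ofReal C * ENNReal.ofReal (256 ^ (2 * (S.card + 1)) * Y) := by
          rw [show (4:ℝ≥0∞) = ENNReal.ofReal 4 by simp, ← ENNReal.ofReal_mul (by norm_num),
            ← ENNReal.ofReal_mul (by positivity)]
          congr 1; ring
        rw [e]; ring

/-- partition function, finite -/
lemma ZA_ne_top {N : ℕ} (hN : 2 ≤ N) (a β : ℝ) (hβ : 1 ≤ β) (ha : 0 < a) (ha1 : a ≤ 1 / 16)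
    (A : Finset (Fin N)) : ZA a β A ≠ ∞ := by
  have h := eM_ne_top a β hβ ha ha1 A (⟨0, by omega⟩ : Fin N)
  refine ne_top_of_le_ne_top h ?_
  unfold eM ZA
  refine lintegral_mono fun z => ENNReal.ofReal_le_ofReal ?_
  exact le_mul_of_one_le_left (WA_pos _ _ _ _).le (Real.one_le_exp (by positivity))

lemma phi_integrable {N : ℕ} (hN : 2 ≤ N) (a β : ℝ) (hβ : 1 ≤ β) (ha : 0 < a) (ha1 : a ≤ 1 / 16)
    (k l k' l' : Fin N → ℕ)
    (hd : ∀ i, (k i = 0 ∧ l i = 0) ∨ (k' i = 0 ∧ l' i = 0))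
    (g : Fin N → Om N × Om N → ℝ) (hg : ∀ j, Measurable (g j))
    (hgb : ∀ j Z, |g j Z| ≤ te a β Z.1 j * te a β Z.2 j) :
    Integrable (fun Z => Phi k l k' l' Z * ∏ j, g j Z) (PP N a β) := by
  have hF : ∀ Z : Om N × Om N, |∏ j, g j Z| ≤
      1 * (Qf a β Finset.univ Finset.univ Z.1 * Qf a β Finset.univ Finset.univ Z.2) := by
    intro Z
    have d := fun z => single_dom a β hβ ha Finset.univ Finset.univ ∅ (by simp) (z : Om N)
    have ho : offE (Finset.univ : Finset (Fin N)) = ∅ := by simp [offE]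
    simp only [ho, Finset.prod_empty, Finset.compl_empty, one_mul] at d
    simp only [WA, Finset.sum_empty, mul_zero, Real.exp_zero, mul_one] at d
    have ht : ∀ z : Om N, 0 ≤ ∏ j, te a β z j := fun z => Finset.prod_nonneg fun j _ => (te_pos _ _ _ _).le
    rw [Finset.abs_prod, one_mul]
    refine (Finset.prod_le_prod (fun j _ => abs_nonneg _) fun j _ => hgb j Z).trans ?_
    rw [Finset.prod_mul_distrib]
    exact mul_le_mul (d _) (d _) (ht _) ((ht _).trans (d _))
  have h := phi_bound hN a β hβ ha ha1 Finset.univ Finset.univ (by simp) (by simp [bd1]) (by simp [bd2])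
    k l k' l' (by simp) (by simp) hd 1 zero_le_one _ hF
  refine ⟨?_, ?_⟩
  · have := Phi_meas k l k' l'
    exact (this.mul (Finset.measurable_prod _ fun j _ => hg j)).aestronglyMeasurable
  · rw [hasFiniteIntegral_iff_norm]
    refine lt_of_le_of_lt h ?_
    exact ENNReal.mul_lt_top ENNReal.ofReal_lt_top (ENNReal.pow_lt_top (ZA_ne_top hN a β hβ ha ha1 _).lt_top)


/-- exchange of replicas on the block `A` -/
def swp {N : ℕ} (A : Finset (Fin N)) (Z : Om N × Om N) : Om N × Om N :=
  (fun i => if i ∈ A then Z.2 i else Z.1 i, fun i => if i ∈ A then Z.1 i else Z.2 i)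

lemma swp_mp {N : ℕ} (a β : ℝ) (hβ : 1 ≤ β) (ha : 0 < a) (ha1 : a ≤ 1 / 16) (A : Finset (Fin N)) :
    MeasurePreserving (swp A) (PP N a β) (PP N a β) := by
  have := nu_prob a β hβ ha ha1
  have e := measurePreserving_arrowProdEquivProdArrow (ℝ × ℝ) (ℝ × ℝ) (Fin N) (fun _ => nu a β)
    (fun _ => nu a β)
  have hs : ∀ i : Fin N, MeasurePreserving (fun y : (ℝ × ℝ) × (ℝ × ℝ) => if i ∈ A then y.swap else y)
      ((nu a β).prod (nu a β)) ((nu a β).prod (nu a β)) := by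
    intro i
    split_ifs
    · exact Measure.measurePreserving_swap
    · exact MeasurePreserving.id _
  have h := measurePreserving_pi (fun _ : Fin N => (nu a β).prod (nu a β))
    (fun _ : Fin N => (nu a β).prod (nu a β)) hs
  have h2 := (e.comp h).comp (e.symm _)
  have e2 : swp A = (MeasurableEquiv.arrowProdEquivProdArrow (ℝ × ℝ) (ℝ × ℝ) (Fin N)) ∘
      (fun (a : Fin N → (ℝ × ℝ) × (ℝ × ℝ)) i => if i ∈ A then (a i).swap else a i) ∘
      (MeasurableEquiv.arrowProdEquivProdArrow (ℝ × ℝ) (ℝ × ℝ) (Fin N)).symm := by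
    funext Z
    simp only [swp, MeasurableEquiv.arrowProdEquivProdArrow, Function.comp, Equiv.arrowProdEquivProdArrow]
    refine Prod.ext ?_ ?_ <;> funext i <;> by_cases hi : i ∈ A <;> simp [hi]
  rw [e2]
  exact h2

lemma zero_of_anti {N : ℕ} (a β : ℝ) (hβ : 1 ≤ β) (ha : 0 < a) (ha1 : a ≤ 1 / 16) (A : Finset (Fin N))
    (F : Om N × Om N → ℝ) (hF : Measurable F) (h : ∀ Z, F (swp A Z) = - F Z) :
    ∫ Z, F Z ∂(PP N a β) = 0 := by
  have hs := swp_mp a β hβ ha ha1 A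
  have e : ∫ Z, F Z ∂(PP N a β) = ∫ Z, F (swp A Z) ∂(PP N a β) := by
    conv_lhs => rw [← hs.map_eq]
    exact integral_map hs.measurable.aemeasurable hF.aestronglyMeasurable
  simp only [h, integral_neg] at e
  linarith

lemma se_swp {N : ℕ} (a β : ℝ) (A : Finset (Fin N)) (j : Fin N) (h : j ∈ A ↔ pv j ∈ A)
    (Z : Om N × Om N) : se a β (swp A Z) j = se a β Z j := by
  unfold se swp
  by_cases hj : j ∈ A
  · have h2 := h.1 hj
    simp only [hj, h2, if_true]; ring
  · have h2 : pv j ∉ A := fun h3 => hj (h.2 h3)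
    simp only [hj, h2, if_false]

lemma smon_in {N : ℕ} (A : Finset (Fin N)) (k l : Fin N → ℕ) (h : ∀ i, i ∉ A → k i = 0 ∧ l i = 0)
    (Z : Om N × Om N) : smon k l (swp A Z).1 = smon k l Z.2 ∧ smon k l (swp A Z).2 = smon k l Z.1 := by
  unfold smon swp
  constructor
  · refine Finset.prod_congr rfl fun i _ => ?_
    by_cases hi : i ∈ A
    · simp [hi]
    · simp [h i hi]
  · refine Finset.prod_congr rfl fun i _ => ?_
    by_cases hi : i ∈ A
    · simp [hi]
    · simp [h i hi]

lemma smon_out {N : ℕ} (A : Finset (Fin N)) (k l : Fin N → ℕ) (h : ∀ i, i ∈ A → k i = 0 ∧ l i = 0)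
    (Z : Om N × Om N) : smon k l (swp A Z).1 = smon k l Z.1 ∧ smon k l (swp A Z).2 = smon k l Z.2 := by
  unfold smon swp
  constructor
  · refine Finset.prod_congr rfl fun i _ => ?_
    by_cases hi : i ∈ A
    · simp [h i hi]
    · simp [hi]
  · refine Finset.prod_congr rfl fun i _ => ?_
    by_cases hi : i ∈ A
    · simp [h i hi]
    · simp [hi]

/-- edge factors with the edges of `E` removed and those of `F` replaced -/
noncomputable def gg {N : ℕ} (a β : ℝ) (E F : Finset (Fin N)) (j : Fin N) (Z : Om N × Om N) : ℝ :=
  if j ∈ E then 1 else if j ∈ F then Real.exp (se a β Z j) - 1 else Real.exp (se a β Z j)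

lemma gg_meas {N : ℕ} (a β : ℝ) (E F : Finset (Fin N)) (j : Fin N) : Measurable (gg a β E F j) := by
  have := se_meas a β j
  unfold gg
  split_ifs <;> fun_prop

lemma gg_le {N : ℕ} (a β : ℝ) (hβ : 1 ≤ β) (ha : 0 < a) (E F : Finset (Fin N)) (j : Fin N)
    (Z : Om N × Om N) : |gg a β E F j Z| ≤ te a β Z.1 j * te a β Z.2 j := by
  refine le_trans ?_ (se_abs a β hβ ha Z j)
  unfold gg
  split_ifs
  · rw [abs_one]; exact Real.one_le_exp (abs_nonneg _)
  · exact exp_sub_one_abs' _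
  · rw [Real.abs_exp]; exact Real.exp_le_exp.2 (le_abs_self _)

lemma gg_int {N : ℕ} (hN : 2 ≤ N) (a β : ℝ) (hβ : 1 ≤ β) (ha : 0 < a) (ha1 : a ≤ 1 / 16)
    (k l k' l' : Fin N → ℕ)
    (hd : ∀ i, (k i = 0 ∧ l i = 0) ∨ (k' i = 0 ∧ l' i = 0)) (E F : Finset (Fin N)) :
    Integrable (fun Z => Phi k l k' l' Z * ∏ j, gg a β E F j Z) (PP N a β) :=
  phi_integrable hN a β hβ ha ha1 k l k' l' hd _ (gg_meas a β E F) (gg_le a β hβ ha E F)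

lemma gg_fw {N : ℕ} (a β : ℝ) (G : Finset (Fin N)) (Z : Om N × Om N) :
    ∏ j, gg a β ∅ G j Z = fw a β G Z := by
  unfold fw
  rw [← Finset.prod_mul_prod_compl G]
  congr 1
  · refine Finset.prod_congr rfl fun j hj => ?_
    simp [gg, hj]
  · refine Finset.prod_congr rfl fun j hj => ?_
    rw [Finset.mem_compl] at hj
    simp [gg, hj]

lemma gg_zero {N : ℕ} (a β : ℝ) (hβ : 1 ≤ β) (ha : 0 < a) (ha1 : a ≤ 1 / 16)
    (k l k' l' : Fin N → ℕ) (E F A : Finset (Fin N))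
    (hA : ∀ j, j ∉ E → (j ∈ A ↔ pv j ∈ A)) (h1 : ∀ i, i ∉ A → k i = 0 ∧ l i = 0)
    (h2 : ∀ i, i ∈ A → k' i = 0 ∧ l' i = 0) :
    ∫ Z, Phi k l k' l' Z * ∏ j, gg a β E F j Z ∂(PP N a β) = 0 := by
  refine zero_of_anti a β hβ ha ha1 A _
    ((Phi_meas k l k' l').mul (Finset.measurable_prod _ fun j _ => gg_meas a β E F j)) fun Z => ?_
  have e1 : ∏ j, gg a β E F j (swp A Z) = ∏ j, gg a β E F j Z := by
    refine Finset.prod_congr rfl fun j _ => ?_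
    unfold gg
    by_cases hj : j ∈ E
    · simp [hj]
    · rw [se_swp a β A j (hA j hj)]
  rw [e1]
  unfold Phi
  rw [(smon_in A k l h1 Z).1, (smon_in A k l h1 Z).2, (smon_out A k' l' h2 Z).1, (smon_out A k' l' h2 Z).2]
  ring

lemma prod_tri {N : ℕ} (s : Finset (Fin N)) (f w : Fin N → ℝ) (e : Fin N) :
    ∏ j ∈ s, (if j = e then 1 else if e < j then f j else w j) =
      (∏ j ∈ s with j < e, w j) * ∏ j ∈ s with e < j, f j := by
  rw [Finset.prod_filter, Finset.prod_filter, ← Finset.prod_mul_distrib]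
  refine Finset.prod_congr rfl fun j _ => ?_
  rcases lt_trichotomy j e with h | h | h
  · simp [h, h.ne, h.not_gt]
  · simp [h]
  · simp [h, h.ne', h.not_gt]

lemma telescope {N : ℕ} (s : Finset (Fin N)) (w : Fin N → ℝ) :
    ∏ j ∈ s, w j - ∏ j ∈ s, (w j - 1) =
      ∑ e ∈ s, ∏ j ∈ s, (if j = e then 1 else if e < j then w j - 1 else w j) := by
  have h := Finset.prod_add_ordered s (fun j => w j - 1) (fun _ => (1:ℝ))
  simp only [sub_add_cancel, one_mul] at h
  simp only [prod_tri s (fun j => w j - 1) w]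
  linarith

lemma fw_identity {N : ℕ} (a β : ℝ) (G1 G2 : Finset (Fin N)) (hG : Disjoint G1 G2)
    (Z : Om N × Om N) :
    fw a β ∅ Z = fw a β G1 Z + fw a β G2 Z - fw a β (G1 ∪ G2) Z +
      ∑ e1 ∈ G1, ∑ e2 ∈ G2, ∏ j, gg a β {e1, e2}
        ((G1.filter fun j => e1 < j) ∪ (G2.filter fun j => e2 < j)) j Z := by
  set w : Fin N → ℝ := fun j => Real.exp (se a β Z j) with hw
  set R := (G1 ∪ G2)ᶜ with hR
  have hsp : ∀ h : Fin N → ℝ, ∏ j, h j = (∏ j ∈ G1, h j) * (∏ j ∈ G2, h j) * ∏ j ∈ R, h j := by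
    intro h
    rw [← Finset.prod_mul_prod_compl (G1 ∪ G2), Finset.prod_union hG]
  have hd : ∀ j, j ∈ G1 → j ∉ G2 := fun j h => Finset.disjoint_left.1 hG h
  have e0 : fw a β ∅ Z = (∏ j ∈ G1, w j) * (∏ j ∈ G2, w j) * ∏ j ∈ R, w j := by
    rw [← gg_fw, hsp]; simp [gg, hw]
  have e1 : fw a β G1 Z = (∏ j ∈ G1, (w j - 1)) * (∏ j ∈ G2, w j) * ∏ j ∈ R, w j := by
    rw [← gg_fw, hsp]
    congr 1
    · congr 1
      · exact Finset.prod_congr rfl fun j hj => by simp [gg, hj, hw]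
      · exact Finset.prod_congr rfl fun j hj => by simp [gg, show j ∉ G1 from fun h => hd j h hj, hw]
    · refine Finset.prod_congr rfl fun j hj => ?_
      simp [hR] at hj
      simp [gg, hj, hw]
  have e2 : fw a β G2 Z = (∏ j ∈ G1, w j) * (∏ j ∈ G2, (w j - 1)) * ∏ j ∈ R, w j := by
    rw [← gg_fw, hsp]
    congr 1
    · congr 1
      · exact Finset.prod_congr rfl fun j hj => by simp [gg, hd j hj, hw]
      · exact Finset.prod_congr rfl fun j hj => by simp [gg, hj, hw]
    · refine Finset.prod_congr rfl fun j hj => ?_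
      simp [hR] at hj
      simp [gg, hj, hw]
  have e3 : fw a β (G1 ∪ G2) Z = (∏ j ∈ G1, (w j - 1)) * (∏ j ∈ G2, (w j - 1)) * ∏ j ∈ R, w j := by
    rw [← gg_fw, hsp]
    congr 1
    · congr 1
      · exact Finset.prod_congr rfl fun j hj => by simp [gg, hj, hw]
      · exact Finset.prod_congr rfl fun j hj => by simp [gg, hj, hw]
    · refine Finset.prod_congr rfl fun j hj => ?_
      simp [hR] at hj
      simp [gg, hj, hw]
  have e4 : ∀ e1 ∈ G1, ∀ e2 ∈ G2, ∏ j, gg a β {e1, e2}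
        ((G1.filter fun j => e1 < j) ∪ (G2.filter fun j => e2 < j)) j Z =
      (∏ j ∈ G1, (if j = e1 then 1 else if e1 < j then w j - 1 else w j)) *
      (∏ j ∈ G2, (if j = e2 then 1 else if e2 < j then w j - 1 else w j)) * ∏ j ∈ R, w j := by
    intro e1 he1 e2 he2
    rw [hsp]
    congr 1
    · congr 1
      · refine Finset.prod_congr rfl fun j hj => ?_
        have h1 : j ∉ G2 := hd j hj
        have h2 : j ≠ e2 := by rintro rfl; exact h1 he2
        simp [gg, hj, h1, h2, hw]
      · refine Finset.prod_congr rfl fun j hj => ?_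
        have h1 : j ∉ G1 := fun h => hd j h hj
        have h2 : j ≠ e1 := by rintro rfl; exact h1 he1
        simp [gg, hj, h1, h2, hw]
    · refine Finset.prod_congr rfl fun j hj => ?_
      simp only [hR, Finset.mem_compl, Finset.mem_union, not_or] at hj
      have h1 : j ≠ e1 := by rintro rfl; exact hj.1 he1
      have h2 : j ≠ e2 := by rintro rfl; exact hj.2 he2
      simp [gg, hj.1, hj.2, h1, h2, hw]
  rw [Finset.sum_congr rfl fun e1 he1 => Finset.sum_congr rfl fun e2 he2 => e4 e1 he1 e2 he2]
  have t1 := telescope G1 w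
  have t2 := telescope G2 w
  have e5 : ∑ e1 ∈ G1, ∑ e2 ∈ G2,
      (∏ j ∈ G1, (if j = e1 then 1 else if e1 < j then w j - 1 else w j)) *
      (∏ j ∈ G2, (if j = e2 then 1 else if e2 < j then w j - 1 else w j)) * ∏ j ∈ R, w j =
      (∏ j ∈ G1, w j - ∏ j ∈ G1, (w j - 1)) * (∏ j ∈ G2, w j - ∏ j ∈ G2, (w j - 1)) * ∏ j ∈ R, w j := by
    rw [t1, t2, Finset.sum_mul_sum, Finset.sum_mul]
    refine Finset.sum_congr rfl fun _ _ => ?_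
    rw [Finset.sum_mul]
  rw [e5, e0, e1, e2, e3]
  ring

lemma int_identity {N : ℕ} (hN : 2 ≤ N) (a β : ℝ) (hβ : 1 ≤ β) (ha : 0 < a) (ha1 : a ≤ 1 / 16)
    (k l k' l' : Fin N → ℕ)
    (hd : ∀ i, (k i = 0 ∧ l i = 0) ∨ (k' i = 0 ∧ l' i = 0)) (G1 G2 : Finset (Fin N))
    (hG : Disjoint G1 G2)
    (hA : ∀ e1 ∈ G1, ∀ e2 ∈ G2, ∃ A : Finset (Fin N),
      (∀ j, j ≠ e1 → j ≠ e2 → (j ∈ A ↔ pv j ∈ A)) ∧ (∀ i, i ∉ A → k i = 0 ∧ l i = 0) ∧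
      (∀ i, i ∈ A → k' i = 0 ∧ l' i = 0)) :
    ∫ Z, Phi k l k' l' Z * fw a β ∅ Z ∂(PP N a β) =
      ∫ Z, Phi k l k' l' Z * fw a β G1 Z ∂(PP N a β) + ∫ Z, Phi k l k' l' Z * fw a β G2 Z ∂(PP N a β)
      - ∫ Z, Phi k l k' l' Z * fw a β (G1 ∪ G2) Z ∂(PP N a β) := by
  have hi : ∀ G, Integrable (fun Z => Phi k l k' l' Z * fw a β G Z) (PP N a β) := by
    intro G
    have := gg_int hN a β hβ ha ha1 k l k' l' hd ∅ G
    simpa only [gg_fw] using this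
  set F : Fin N → Fin N → Finset (Fin N) := fun e1 e2 =>
    ((G1.filter fun j => e1 < j) ∪ (G2.filter fun j => e2 < j)) with hF
  have hsum : Integrable (fun Z => ∑ e1 ∈ G1, ∑ e2 ∈ G2, Phi k l k' l' Z * ∏ j, gg a β {e1, e2} (F e1 e2) j Z)
      (PP N a β) :=
    integrable_finsetSum _ fun e1 _ => integrable_finsetSum _ fun e2 _ =>
      gg_int hN a β hβ ha ha1 k l k' l' hd _ _
  have hz : ∫ Z, ∑ e1 ∈ G1, ∑ e2 ∈ G2, Phi k l k' l' Z * ∏ j, gg a β {e1, e2} (F e1 e2) j Z ∂(PP N a β) = 0 := by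
    rw [integral_finsetSum _ fun e1 _ => integrable_finsetSum _ fun e2 _ =>
      gg_int hN a β hβ ha ha1 k l k' l' hd _ _]
    refine Finset.sum_eq_zero fun e1 he1 => ?_
    rw [integral_finsetSum _ fun e2 _ => gg_int hN a β hβ ha ha1 k l k' l' hd _ _]
    refine Finset.sum_eq_zero fun e2 he2 => ?_
    obtain ⟨A, hA1, hA2, hA3⟩ := hA e1 he1 e2 he2
    refine gg_zero a β hβ ha ha1 k l k' l' _ _ A (fun j hj => ?_) hA2 hA3
    simp only [Finset.mem_insert, Finset.mem_singleton, not_or] at hj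
    exact hA1 j hj.1 hj.2
  have e : ∀ Z, Phi k l k' l' Z * fw a β ∅ Z = Phi k l k' l' Z * fw a β G1 Z + Phi k l k' l' Z * fw a β G2 Z
      - Phi k l k' l' Z * fw a β (G1 ∪ G2) Z +
      ∑ e1 ∈ G1, ∑ e2 ∈ G2, Phi k l k' l' Z * ∏ j, gg a β {e1, e2} (F e1 e2) j Z := by
    intro Z
    rw [fw_identity a β G1 G2 hG Z]
    simp only [mul_add, mul_sub, Finset.mul_sum, hF]
  have hi2 : Integrable (fun Z => Phi k l k' l' Z * fw a β G1 Z + Phi k l k' l' Z * fw a β G2 Z) (PP N a β) :=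
    (hi _).add (hi _)
  have hi3 : Integrable (fun Z => Phi k l k' l' Z * fw a β G1 Z + Phi k l k' l' Z * fw a β G2 Z
      - Phi k l k' l' Z * fw a β (G1 ∪ G2) Z) (PP N a β) := hi2.sub (hi _)
  rw [integral_congr_ae (Filter.Eventually.of_forall e), integral_add hi3 hsum, hz,
    integral_sub hi2 (hi _), integral_add (hi _) (hi _), add_zero]


lemma kap_prod {N : ℕ} (a : ℝ) (ha : 0 < a) (ha1 : a ≤ 1 / 16) (Bl G : Finset (Fin N)) (g : Fin N → Fin N)
    (n : ℕ) (hn : (G.filter fun j => g j ∈ Bl).card ≤ n) :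
    ∏ j ∈ G, kap a Bl (g j) ≤ 4 ^ G.card * (Real.sqrt a)⁻¹ ^ n := by
  have hs : Real.sqrt a ≤ 1 := Real.sqrt_le_one.2 (by linarith)
  have hs0 : 0 < Real.sqrt a := Real.sqrt_pos.2 ha
  have hs1 : 1 ≤ (Real.sqrt a)⁻¹ := (one_le_inv₀ hs0).2 hs
  calc _ ≤ ∏ j ∈ G, (4 * if g j ∈ Bl then (Real.sqrt a)⁻¹ else 1) := by
        refine Finset.prod_le_prod (fun j _ => (kap_pos a ha Bl _).le) fun j _ => ?_
        unfold kap
        split_ifs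
        · linarith
        · linarith
    _ = 4 ^ G.card * (Real.sqrt a)⁻¹ ^ (G.filter fun j => g j ∈ Bl).card := by
        rw [Finset.prod_mul_distrib, Finset.prod_const, ← Finset.prod_filter, Finset.prod_const]
    _ ≤ _ := by gcongr

lemma T_bound {N : ℕ} (hN : 2 ≤ N) (a β : ℝ) (hβ : 1 ≤ β) (ha : 0 < a) (ha1 : a ≤ 1 / 2 ^ 20)
    (S Bl G : Finset (Fin N)) (hBS : Bl ⊆ S) (h1 : (bd1 S).card ≤ 1) (h2 : (bd2 S).card ≤ 1)
    (hG : ∀ j ∈ G, j ∈ S ∧ pv j ∈ S)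
    (k l k' l' : Fin N → ℕ) (hk : ∀ i, i ∉ Bl → k i = 0 ∧ l i = 0)
    (hk' : ∀ i, i ∉ Bl → k' i = 0 ∧ l' i = 0)
    (hd : ∀ i, (k i = 0 ∧ l i = 0) ∨ (k' i = 0 ∧ l' i = 0))
    (n d M : ℕ) (hn : n ≤ 2) (hc1 : (G.filter fun j => j ∈ Bl).card ≤ n)
    (hc2 : (G.filter fun j => pv j ∈ Bl).card ≤ n) (hGd : d + n ≤ G.card)
    (hS : S.card + 1 ≤ M + 2 + G.card) :
    |∫ Z, Phi k l k' l' Z * fw a β G Z ∂(PP N a β)| ≤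
      2 ^ 42 * 256 ^ (2 * (M + 2)) * (2 ^ 20 * a) ^ d * (mom a β k l * mom a β k' l') *
        (ZA a β (Finset.univ : Finset (Fin N))).toReal ^ 2 := by
  have ha2 : a ≤ 1 / 16 := ha1.trans (by norm_num)
  set C := ∏ j ∈ G, (a * kap a Bl j * kap a Bl (pv j)) with hC
  have hs0 : 0 < Real.sqrt a := Real.sqrt_pos.2 ha
  have hss : Real.sqrt a * Real.sqrt a = a := Real.mul_self_sqrt ha.le
  have hC0 : 0 ≤ C := Finset.prod_nonneg fun i _ => by
    have := kap_pos a ha Bl i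
    have := kap_pos a ha Bl (pv i)
    positivity
  have hCb : C ≤ (16 * a) ^ G.card * a⁻¹ ^ n := by
    have e1 := kap_prod a ha ha2 Bl G (fun j => j) n hc1
    have e2 := kap_prod a ha ha2 Bl G (fun j => pv j) n hc2
    have e3 : C = a ^ G.card * ((∏ j ∈ G, kap a Bl j) * (∏ j ∈ G, kap a Bl (pv j))) := by
      rw [hC, Finset.prod_mul_distrib, Finset.prod_mul_distrib, Finset.prod_const]; ring
    rw [e3]
    calc _ ≤ a ^ G.card * ((4 ^ G.card * (Real.sqrt a)⁻¹ ^ n) * (4 ^ G.card * (Real.sqrt a)⁻¹ ^ n)) := by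
          refine mul_le_mul_of_nonneg_left (mul_le_mul e1 e2 ?_ (by positivity)) (by positivity)
          exact Finset.prod_nonneg fun i _ => (kap_pos a ha Bl _).le
      _ = _ := by
          rw [show (16:ℝ) = 4 * 4 by norm_num, mul_pow, mul_pow, show a⁻¹ = (Real.sqrt a)⁻¹ * (Real.sqrt a)⁻¹ by
            rw [← mul_inv, hss], mul_pow]
          ring
  have hb := phi_bound hN a β hβ ha ha2 S Bl hBS h1 h2 k l k' l' hk hk' hd C hC0 (fw a β G)
    (fw_dom a β hβ ha S Bl G hG)
  have hZ := ZA_ne_top hN a β hβ ha ha2 (Finset.univ : Finset (Fin N))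
  have hY : 0 ≤ mom a β k l * mom a β k' l' := mul_nonneg (mom_nonneg _ _ _ _) (mom_nonneg _ _ _ _)
  have hr : |∫ Z, Phi k l k' l' Z * fw a β G Z ∂(PP N a β)| ≤
      (4 * C * 256 ^ (2 * (S.card + 1)) * (mom a β k l * mom a β k' l')) *
        (ZA a β (Finset.univ : Finset (Fin N))).toReal ^ 2 := by
    have h := (enorm_integral_le_lintegral_enorm (μ := PP N a β) (fun Z => Phi k l k' l' Z * fw a β G Z))
    have e : ∀ x : ℝ, ‖x‖ₑ = ENNReal.ofReal |x| := fun x => by rw [← ofReal_norm]; rfl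
    simp only [e] at h
    have h2 := ENNReal.toReal_mono (by finiteness) (h.trans hb)
    rwa [ENNReal.toReal_ofReal (abs_nonneg _), ENNReal.toReal_mul, ENNReal.toReal_pow,
      ENNReal.toReal_ofReal (by positivity)] at h2
  refine hr.trans ?_
  obtain ⟨e, he⟩ := Nat.exists_eq_add_of_le hGd
  have hx1 : 2 ^ 20 * a ≤ 1 := by
    rw [le_div_iff₀ (by positivity)] at ha1; linarith
  have key : 4 * C * 256 ^ (2 * (S.card + 1)) ≤ 2 ^ 42 * 256 ^ (2 * (M + 2)) * (2 ^ 20 * a) ^ d := by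
    calc 4 * C * 256 ^ (2 * (S.card + 1)) ≤ 4 * ((16 * a) ^ G.card * a⁻¹ ^ n) * 256 ^ (2 * (M + 2 + G.card)) := by
          gcongr
          norm_num
      _ = 4 * 256 ^ (2 * (M + 2)) * ((2 ^ 20 * a) ^ d * (2 ^ 20 * a) ^ e * (2 ^ 20) ^ n) := by
          have : (2:ℝ) ^ 20 * a = 16 * a * 256 ^ 2 := by norm_num; ring
          have h20 : (2:ℝ) ^ 20 = (2 ^ 20 * a) * a⁻¹ := by field_simp
          nth_rewrite 3 [h20]
          rw [mul_pow _ (a⁻¹), mul_add 2 (M + 2), pow_add 256 (2 * (M+2)), pow_mul 256 2 G.card, this, he]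
          rw [pow_add, pow_add, pow_add, pow_add, mul_pow (16 * a), mul_pow (16 * a), mul_pow (16 * a)]
          ring
      _ ≤ 4 * 256 ^ (2 * (M + 2)) * ((2 ^ 20 * a) ^ d * 1 * (2 ^ 20) ^ 2) := by
          gcongr
          · exact pow_le_one₀ (by positivity) hx1
          · norm_num
      _ = _ := by ring
  calc _ = (4 * C * 256 ^ (2 * (S.card + 1))) * ((mom a β k l * mom a β k' l') *
        (ZA a β (Finset.univ : Finset (Fin N))).toReal ^ 2) := by ring
    _ ≤ _ := mul_le_mul_of_nonneg_right key (by positivity)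
    _ = _ := by ring

lemma card_val {N : ℕ} (P : ℕ → Prop) [DecidablePred P] :
    (Finset.univ.filter fun j : Fin N => P j).card = ((Finset.range N).filter P).card := by
  rw [← Finset.card_map Fin.valEmbedding]
  congr 1
  ext i
  simp only [Finset.mem_map, Finset.mem_filter, Finset.mem_univ, true_and, Fin.valEmbedding_apply, Finset.mem_range]
  constructor
  · rintro ⟨j, hj, rfl⟩; exact ⟨j.isLt, hj⟩
  · rintro ⟨h1, h2⟩; exact ⟨⟨i, h1⟩, h2, rfl⟩

lemma card_one {N : ℕ} (T : Finset (Fin N)) (h : ∀ i ∈ T, ∀ j ∈ T, (i : ℕ) = j) : T.card ≤ 1 :=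
  Finset.card_le_one.2 fun i hi j hj => Fin.ext (h i hi j hj)

lemma main_PP {N : ℕ} (a β : ℝ) (hβ : 1 ≤ β) (ha : 0 < a) (ha1 : a ≤ 1 / 2 ^ 20)
    (p q t u : ℕ) (hpq : p ≤ q) (hqt : q < t) (htu : t ≤ u) (huN : u < N)
    (k l k' l' : Fin N → ℕ) (hk : ∀ i : Fin N, ¬ (p ≤ (i:ℕ) ∧ (i:ℕ) ≤ q) → k i = 0 ∧ l i = 0)
    (hk' : ∀ i : Fin N, ¬ (t ≤ (i:ℕ) ∧ (i:ℕ) ≤ u) → k' i = 0 ∧ l' i = 0) :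
    |∫ Z, Phi k l k' l' Z * fw a β ∅ Z ∂(PP N a β)| ≤
      3 * (2 ^ 42 * 256 ^ (2 * ((q - p) + (u - t) + 2)) * (2 ^ 20 * a) ^ (min (t - q - 1) (N - u + p - 1)) *
        (mom a β k l * mom a β k' l') *
        (ZA a β (Finset.univ : Finset (Fin N))).toReal ^ 2) := by
  have hN : 2 ≤ N := by omega
  have ha2 : a ≤ 1 / 16 := ha1.trans (by norm_num)
  set d := min (t - q - 1) (N - u + p - 1) with hd
  have hd1 : d ≤ t - q - 1 := min_le_left _ _
  have hd2 : d ≤ N - u + p - 1 := min_le_right _ _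
  have hdis : ∀ i, (k i = 0 ∧ l i = 0) ∨ (k' i = 0 ∧ l' i = 0) := by
    intro i
    by_cases h : p ≤ (i:ℕ) ∧ (i:ℕ) ≤ q
    · right; exact hk' i (by omega)
    · left; exact hk i h
  set Bl : Finset (Fin N) := Finset.univ.filter fun i =>
    (p ≤ (i:ℕ) ∧ (i:ℕ) ≤ q) ∨ (t ≤ (i:ℕ) ∧ (i:ℕ) ≤ u) with hBl
  set G1 : Finset (Fin N) := Finset.univ.filter fun i => q + 1 ≤ (i:ℕ) ∧ (i:ℕ) ≤ t with hG1
  set G2 : Finset (Fin N) := Finset.univ.filter fun i => u + 1 ≤ (i:ℕ) ∨ (i:ℕ) ≤ p with hG2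
  set S1 : Finset (Fin N) := Finset.univ.filter fun i => p ≤ (i:ℕ) ∧ (i:ℕ) ≤ u with hS1
  set S2 : Finset (Fin N) := Finset.univ.filter fun i => t ≤ (i:ℕ) ∨ (i:ℕ) ≤ q with hS2
  have mBl : ∀ i, i ∈ Bl ↔ (p ≤ (i:ℕ) ∧ (i:ℕ) ≤ q) ∨ (t ≤ (i:ℕ) ∧ (i:ℕ) ≤ u) := by simp [hBl]
  have mG1 : ∀ i, i ∈ G1 ↔ (q + 1 ≤ (i:ℕ) ∧ (i:ℕ) ≤ t) := by simp [hG1]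
  have mG2 : ∀ i, i ∈ G2 ↔ (u + 1 ≤ (i:ℕ) ∨ (i:ℕ) ≤ p) := by simp [hG2]
  have mS1 : ∀ i, i ∈ S1 ↔ (p ≤ (i:ℕ) ∧ (i:ℕ) ≤ u) := by simp [hS1]
  have mS2 : ∀ i, i ∈ S2 ↔ (t ≤ (i:ℕ) ∨ (i:ℕ) ≤ q) := by simp [hS2]
  have hkB : ∀ i, i ∉ Bl → k i = 0 ∧ l i = 0 := fun i hi => hk i (by rw [mBl] at hi; tauto)
  have hkB' : ∀ i, i ∉ Bl → k' i = 0 ∧ l' i = 0 := fun i hi => hk' i (by rw [mBl] at hi; tauto)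
  have cG1 : G1.card = t - q := by
    rw [hG1, card_val (fun i => q + 1 ≤ i ∧ i ≤ t)]
    have : (Finset.range N).filter (fun i => q + 1 ≤ i ∧ i ≤ t) = Finset.Icc (q+1) t := by
      ext i; simp; omega
    rw [this, Nat.card_Icc]; omega
  have cS1 : S1.card = u - p + 1 := by
    rw [hS1, card_val (fun i => p ≤ i ∧ i ≤ u)]
    have : (Finset.range N).filter (fun i => p ≤ i ∧ i ≤ u) = Finset.Icc p u := by
      ext i; simp; omega
    rw [this, Nat.card_Icc]; omega
  have cG2 : G2.card = N - u + p := by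
    rw [hG2, card_val (fun i => u + 1 ≤ i ∨ i ≤ p)]
    have : (Finset.range N).filter (fun i => u + 1 ≤ i ∨ i ≤ p) = Finset.Ico (u + 1) N ∪ Finset.range (p + 1) := by
      ext i; simp; omega
    rw [this, Finset.card_union_of_disjoint, Nat.card_Ico, Finset.card_range]
    · omega
    · rw [Finset.disjoint_left]; intro i; simp; omega
  have cS2 : S2.card = N - t + q + 1 := by
    rw [hS2, card_val (fun i => t ≤ i ∨ i ≤ q)]
    have : (Finset.range N).filter (fun i => t ≤ i ∨ i ≤ q) = Finset.Ico t N ∪ Finset.range (q + 1) := by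
      ext i; simp; omega
    rw [this, Finset.card_union_of_disjoint, Nat.card_Ico, Finset.card_range]
    · omega
    · rw [Finset.disjoint_left]; intro i; simp; omega
  have hGG : Disjoint G1 G2 := by
    rw [Finset.disjoint_left]; intro i; rw [mG1, mG2]; omega
  have c1 : (G1.filter fun j => j ∈ Bl).card ≤ 1 := card_one _ fun i hi j hj => by
    simp only [Finset.mem_filter, mG1, mBl] at hi hj; omega
  have c1' : (G1.filter fun j => pv j ∈ Bl).card ≤ 1 := card_one _ fun i hi j hj => by
    simp only [Finset.mem_filter, mG1, mBl, pv_val] at hi hj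
    split_ifs at hi hj <;> omega
  have c2 : (G2.filter fun j => j ∈ Bl).card ≤ 1 := card_one _ fun i hi j hj => by
    simp only [Finset.mem_filter, mG2, mBl] at hi hj; omega
  have c2' : (G2.filter fun j => pv j ∈ Bl).card ≤ 1 := card_one _ fun i hi j hj => by
    simp only [Finset.mem_filter, mG2, mBl, pv_val] at hi hj
    have := i.isLt
    have := j.isLt
    split_ifs at hi hj <;> omega
  have b1 := T_bound hN a β hβ ha ha1 S1 Bl G1 (fun i hi => by rw [mBl] at hi; rw [mS1]; omega)
    (card_one _ fun i hi j hj => by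
      simp only [bd1, Finset.mem_filter, mS1, pv_val] at hi hj
      have := i.isLt
      have := j.isLt
      split_ifs at hi hj <;> omega)
    (card_one _ fun i hi j hj => by
      simp only [bd2, Finset.mem_filter, mS1, nx_val] at hi hj
      have := i.isLt
      have := j.isLt
      split_ifs at hi hj <;> omega)
    (fun j hj => by
      rw [mG1] at hj; rw [mS1, mS1, pv_val]
      split_ifs <;> omega)
    k l k' l' hkB hkB' hdis 1 d ((q - p) + (u - t)) (by norm_num) c1 c1' (by omega) (by omega)
  have b2 := T_bound hN a β hβ ha ha1 S2 Bl G2 (fun i hi => by rw [mBl] at hi; rw [mS2]; omega)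
    (card_one _ fun i hi j hj => by
      simp only [bd1, Finset.mem_filter, mS2, pv_val] at hi hj
      have := i.isLt
      have := j.isLt
      split_ifs at hi hj <;> omega)
    (card_one _ fun i hi j hj => by
      simp only [bd2, Finset.mem_filter, mS2, nx_val] at hi hj
      have := i.isLt
      have := j.isLt
      split_ifs at hi hj <;> omega)
    (fun j hj => by
      have := j.isLt
      rw [mG2] at hj; rw [mS2, mS2, pv_val]
      split_ifs <;> omega)
    k l k' l' hkB hkB' hdis 1 d ((q - p) + (u - t)) (by norm_num) c2 c2' (by omega) (by omega)
  have cU : (G1 ∪ G2).card = G1.card + G2.card := Finset.card_union_of_disjoint hGG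
  have b3 := T_bound hN a β hβ ha ha1 Finset.univ Bl (G1 ∪ G2) (Finset.subset_univ _)
    (by simp [bd1]) (by simp [bd2]) (by simp)
    k l k' l' hkB hkB' hdis 2 d ((q - p) + (u - t)) le_rfl
    (by rw [Finset.filter_union]; exact (Finset.card_union_le _ _).trans (by omega))
    (by rw [Finset.filter_union]; exact (Finset.card_union_le _ _).trans (by omega))
    (by omega) (by rw [Finset.card_univ, Fintype.card_fin]; omega)
  have hid := int_identity hN a β hβ ha ha2 k l k' l' hdis G1 G2 hGG (by
    intro e1 he1 e2 he2
    rw [mG1] at he1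
    rw [mG2] at he2
    have h1 := e1.isLt
    have h2 := e2.isLt
    by_cases h : (e2 : ℕ) ≤ p
    · refine ⟨Finset.univ.filter fun i => (e2 : ℕ) ≤ i ∧ (i : ℕ) < e1, ?_, ?_, ?_⟩
      · intro j hj1 hj2
        have hj1' : (j:ℕ) ≠ e1 := fun h => hj1 (Fin.ext h)
        have hj2' : (j:ℕ) ≠ e2 := fun h => hj2 (Fin.ext h)
        have := j.isLt
        simp only [Finset.mem_filter, Finset.mem_univ, true_and, pv_val]
        split_ifs <;> omega
      · intro i hi
        simp only [Finset.mem_filter, Finset.mem_univ, true_and] at hi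
        exact hk i (by omega)
      · intro i hi
        simp only [Finset.mem_filter, Finset.mem_univ, true_and] at hi
        exact hk' i (by omega)
    · refine ⟨Finset.univ.filter fun i => (e2 : ℕ) ≤ i ∨ (i : ℕ) < e1, ?_, ?_, ?_⟩
      · intro j hj1 hj2
        have hj1' : (j:ℕ) ≠ e1 := fun h => hj1 (Fin.ext h)
        have hj2' : (j:ℕ) ≠ e2 := fun h => hj2 (Fin.ext h)
        have := j.isLt
        simp only [Finset.mem_filter, Finset.mem_univ, true_and, pv_val]
        split_ifs <;> omega
      · intro i hi
        simp only [Finset.mem_filter, Finset.mem_univ, true_and] at hi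
        exact hk i (by omega)
      · intro i hi
        simp only [Finset.mem_filter, Finset.mem_univ, true_and] at hi
        exact hk' i (by omega))
  rw [hid]
  refine (abs_sub _ _).trans ((add_le_add ((abs_add_le _ _).trans (add_le_add b1 b2)) b3).trans ?_)
  linarith


/-- single site density -/
noncomputable def hs (a β : ℝ) (y : ℝ × ℝ) : ℝ := dens1 β (1 + 2 * a) 1 y.1 * dens1 β 1 0 y.2

lemma hs_pos (a β : ℝ) (y : ℝ × ℝ) : 0 < hs a β y := mul_pos (Real.exp_pos _) (Real.exp_pos _)

lemma hs_meas (a β : ℝ) : Measurable (hs a β) := by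
  have h1 := (dens1_cont β (1 + 2 * a) 1).measurable
  have h2 := (dens1_cont β 1 0).measurable
  unfold hs; fun_prop

lemma nu_eq (a β : ℝ) (hβ : 1 ≤ β) (ha : 0 < a) (ha1 : a ≤ 1 / 16) :
    ∃ c : ℝ≥0∞, c ≠ 0 ∧ c ≠ ∞ ∧
      nu a β = c • (volume : Measure (ℝ × ℝ)).withDensity (fun y => ENNReal.ofReal (hs a β y)) := by
  have z1 := zee1_upper β (1 + 2 * a) 1 hβ (by linarith) (by norm_num)
  have z2 := zee1_upper β 1 0 hβ (by linarith) (by norm_num)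
  have y1 := zee1_ne_zero β (1 + 2 * a) 1 hβ (by linarith) (by linarith) (by norm_num) (by norm_num)
  have y2 := zee1_ne_zero β 1 0 hβ (by linarith) (by linarith) (by norm_num) (by norm_num)
  refine ⟨(zee1 β (1 + 2 * a) 1)⁻¹ * (zee1 β 1 0)⁻¹, ?_, ?_, ?_⟩
  · exact mul_ne_zero (ENNReal.inv_ne_zero.2 z1) (ENNReal.inv_ne_zero.2 z2)
  · exact ENNReal.mul_ne_top (ENNReal.inv_ne_top.2 y1) (ENNReal.inv_ne_top.2 y2)
  · unfold nu nu1
    rw [Measure.prod_smul_left, Measure.prod_smul_right, prod_withDensity (dens1_meas _ _ _) (dens1_meas _ _ _),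
      smul_smul, ← Measure.volume_eq_prod]
    congr 2
    funext y
    rw [hs, ENNReal.ofReal_mul (le_of_lt (show 0 < dens1 β (1+2*a) 1 y.1 from Real.exp_pos _))]

lemma lint_pi {X : Type*} [MeasurableSpace X] (n : ℕ) (μ : Fin n → Measure X) [∀ i, SigmaFinite (μ i)]
    (f : Fin n → X → ℝ≥0∞) (hf : ∀ i, Measurable (f i)) :
    ∫⁻ x : Fin n → X, ∏ i, f i (x i) ∂(Measure.pi μ) = ∏ i, ∫⁻ x, f i x ∂(μ i) := by
  induction n with
  | zero => simp
  | succ n n_ih =>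
      calc
        _ = ∫⁻ x : X × (Fin n → X),
            f 0 x.1 * ∏ i : Fin n, f (Fin.succ i) (x.2 i)
            ∂((μ 0).prod (Measure.pi (fun i ↦ μ i.succ))) := by
          rw [← ((measurePreserving_piFinSuccAbove μ 0).symm).lintegral_comp_emb
            (MeasurableEquiv.measurableEmbedding _)]
          simp_rw [MeasurableEquiv.piFinSuccAbove_symm_apply, Fin.insertNthEquiv,
            Fin.prod_univ_succ, Fin.insertNth_zero, Equiv.coe_fn_mk, Fin.cons_succ,
            Fin.zero_succAbove, cast_eq, Fin.cons_zero]
        _ = (∫⁻ x, f 0 x ∂μ 0)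
            * ∏ i : Fin n, ∫⁻ x, f (Fin.succ i) x ∂(μ i.succ) := by
          rw [← n_ih _ _ (fun i => hf _), ← lintegral_prod_mul (hf 0).aemeasurable
            (Finset.measurable_prod _ fun i _ => (hf i.succ).comp (measurable_pi_apply i)).aemeasurable]
        _ = ∏ i, ∫⁻ x, f i x ∂(μ i) := by rw [Fin.prod_univ_succ]

lemma piN_eq (N : ℕ) (a β : ℝ) (hβ : 1 ≤ β) (ha : 0 < a) (ha1 : a ≤ 1 / 16) :
    ∃ c : ℝ≥0∞, c ≠ 0 ∧ c ≠ ∞ ∧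
      piN N a β = c • (volume : Measure (Om N)).withDensity (fun z => ENNReal.ofReal (∏ i, hs a β (z i))) := by
  obtain ⟨c, h0, h1, h⟩ := nu_eq a β hβ ha ha1
  have := nu_prob a β hβ ha ha1
  refine ⟨c ^ N, pow_ne_zero _ h0, ENNReal.pow_ne_top h1, ?_⟩
  unfold piN
  refine Measure.pi_eq fun s hs' => ?_
  have hm := hs_meas a β
  rw [Measure.smul_apply, withDensity_apply _ (MeasurableSet.univ_pi hs'), volume_pi, Measure.restrict_pi_pi]
  simp only [ENNReal.ofReal_prod_of_nonneg (fun i _ => (hs_pos a β _).le)]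
  rw [lint_pi _ _ (fun _ y => ENNReal.ofReal (hs a β y)) (fun i => by fun_prop)]
  have e : ∀ i, nu a β (s i) = c * ∫⁻ y in s i, ENNReal.ofReal (hs a β y) := by
    intro i
    rw [h, Measure.smul_apply, withDensity_apply _ (hs' i), smul_eq_mul]
  simp only [e, Finset.prod_mul_distrib, Finset.prod_const, Finset.card_univ, Fintype.card_fin, smul_eq_mul]

/-- from site coordinates to phase space -/
def toPh {N : ℕ} (z : Om N) : Phase N := (fun i => (z i).1, fun i => (z i).2)

lemma toPh_mp (N : ℕ) : MeasurePreserving (MeasurableEquiv.arrowProdEquivProdArrow ℝ ℝ (Fin N))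
    (volume : Measure (Om N)) (volume : Measure (Phase N)) :=
  measurePreserving_arrowProdEquivProdArrow ℝ ℝ (Fin N) (fun _ => volume) (fun _ => volume)

lemma ham_eq {N : ℕ} (a β : ℝ) (z : Om N) :
    Real.exp (-β * Ham N a (toPh z)) = (∏ i, hs a β (z i)) * WA a β Finset.univ z := by
  unfold hs dens1 WA Ham toPh
  simp only [← Real.exp_add, ← Real.exp_sum]
  congr 1
  have e : ∑ j : Fin N, (z (pv j)).1 ^ 2 = ∑ j : Fin N, (z j).1 ^ 2 :=
    Equiv.sum_comp (finRotate N).symm (fun j => (z j).1 ^ 2)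
  have e2 : ∑ j : Fin N, ((z j).2 ^ 2 + (z j).1 ^ 2 + a * ((z j).1 - (z (pv j)).1) ^ 2 + 1 / 2 * (z j).1 ^ 4) =
     ∑ j : Fin N, ((z j).2 ^ 2 + (1 + a) * (z j).1 ^ 2 + 1 / 2 * (z j).1 ^ 4 - 2 * a * ((z j).1 * (z (pv j)).1)) +
       a * ∑ j : Fin N, (z (pv j)).1 ^ 2 := by
    rw [Finset.mul_sum, ← Finset.sum_add_distrib]
    exact Finset.sum_congr rfl fun j _ => by ring
  rw [e2, e, Finset.mul_sum, Finset.mul_sum, ← Finset.sum_add_distrib, ← Finset.sum_add_distrib,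
    Finset.mul_sum, Finset.mul_sum]
  refine Finset.sum_congr rfl fun j _ => ?_
  ring

lemma transfer_int (N : ℕ) (a β : ℝ) (hβ : 1 ≤ β) (ha : 0 < a) (ha1 : a ≤ 1 / 16) :
    ∃ c : ℝ, c ≠ 0 ∧ ∀ X : Phase N → ℝ, ∫ z, X (toPh z) * WA a β Finset.univ z ∂(piN N a β) =
      c * ∫ z : Phase N, X z * Real.exp (-β * Ham N a z) := by
  obtain ⟨c, h0, h1, h⟩ := piN_eq N a β hβ ha ha1
  refine ⟨c.toReal, ENNReal.toReal_ne_zero.2 ⟨h0, h1⟩, fun X => ?_⟩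
  have hm := hs_meas a β
  have hm2 : Measurable (fun z : Om N => ENNReal.ofReal (∏ i, hs a β (z i))) := by fun_prop
  rw [h, integral_smul_measure, smul_eq_mul, integral_withDensity_eq_integral_toReal_smul hm2
    (Filter.Eventually.of_forall fun _ => ENNReal.ofReal_lt_top)]
  rw [← (toPh_mp N).integral_comp' (fun z => X z * Real.exp (-β * Ham N a z))]
  congr 1
  refine integral_congr_ae (Filter.Eventually.of_forall fun z => ?_)
  change _ = X (toPh z) * Real.exp (-β * Ham N a (toPh z))
  simp only
  rw [ham_eq, ENNReal.toReal_ofReal (Finset.prod_nonneg fun i _ => (hs_pos a β _).le), smul_eq_mul]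
  ring

lemma pAvg_eq (N : ℕ) (a β : ℝ) (hβ : 1 ≤ β) (ha : 0 < a) (ha1 : a ≤ 1 / 16) (X : Phase N → ℝ) :
    pAvg N a β X = (∫ z, X (toPh z) * WA a β Finset.univ z ∂(piN N a β)) /
      ∫ z, WA a β Finset.univ z ∂(piN N a β) := by
  obtain ⟨c, h0, h⟩ := transfer_int N a β hβ ha ha1
  have h1 := h fun _ => 1
  simp only [one_mul] at h1
  rw [h, h1, mul_div_mul_left _ _ h0]
  unfold pAvg gibbs
  have hm : Measurable (fun z : Phase N => ENNReal.ofReal (Real.exp (-β * Ham N a z))) := by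
    unfold Ham; fun_prop
  have hp : 0 ≤ ∫ z : Phase N, Real.exp (-β * Ham N a z) := integral_nonneg fun _ => (Real.exp_pos _).le
  rw [integral_smul_measure, smul_eq_mul, integral_withDensity_eq_integral_toReal_smul hm
    (Filter.Eventually.of_forall fun _ => ENNReal.ofReal_lt_top), ENNReal.toReal_inv,
    ENNReal.toReal_ofReal hp, div_eq_inv_mul]
  congr 1
  refine integral_congr_ae (Filter.Eventually.of_forall fun z => ?_)
  simp only [smul_eq_mul]
  rw [ENNReal.toReal_ofReal (Real.exp_pos _).le, mul_comm]


lemma WA_le_Qf {N : ℕ} (a β : ℝ) (hβ : 1 ≤ β) (ha : 0 < a) (z : Om N) :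
    WA a β Finset.univ z ≤ Qf a β Finset.univ Finset.univ z := by
  refine (WA_le a β hβ ha Finset.univ z).trans ?_
  unfold Qf Fo
  have h1 : bd1 (Finset.univ : Finset (Fin N)) = ∅ := by simp [bd1]
  have h2 : bd2 (Finset.univ : Finset (Fin N)) = ∅ := by simp [bd2]
  have h3 : offE (Finset.univ : Finset (Fin N)) = ∅ := by simp [offE]
  rw [h1, h2, h3]
  have h4 : WA a β ∅ z = 1 := by simp [WA]
  rw [h4]
  simp only [Finset.prod_empty, mul_one]
  rw [Finset.mul_sum, Real.exp_sum]
  refine Finset.prod_le_prod (fun _ _ => (Real.exp_pos _).le) fun i _ => ?_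
  have e : Real.exp (β * a * (z i).1 ^ 2) = tlt a β (z i) ^ 2 := by
    unfold tlt; rw [← Real.exp_nat_mul]; congr 1; push_cast; ring
  rw [e]
  refine le_mul_of_one_le_left (by positivity) (one_le_pow₀ ?_)
  unfold eta
  rw [if_pos (Finset.mem_univ _)]
  exact Real.one_le_exp (by positivity)

lemma smon_int {N : ℕ} (hN : 2 ≤ N) (a β : ℝ) (hβ : 1 ≤ β) (ha : 0 < a) (ha1 : a ≤ 1 / 16)
    (k l : Fin N → ℕ) :
    Integrable (fun z => smon k l z * WA a β Finset.univ z) (piN N a β) := by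
  have h := Q_bound hN a β hβ ha ha1 Finset.univ Finset.univ (by simp) (by simp [bd1]) (by simp [bd2])
    k l (by simp)
  refine ⟨((smon_meas k l).mul (WA_meas a β _)).aestronglyMeasurable, ?_⟩
  rw [hasFiniteIntegral_iff_norm]
  refine lt_of_le_of_lt (lintegral_mono fun z => ENNReal.ofReal_le_ofReal ?_) (lt_of_le_of_lt h ?_)
  · rw [norm_mul, Real.norm_eq_abs, Real.norm_eq_abs, smon_abs, abs_of_pos (WA_pos _ _ _ _)]
    exact mul_le_mul_of_nonneg_left (WA_le_Qf a β hβ ha z) (mon_nonneg _ _ _)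
  · exact ENNReal.mul_lt_top ENNReal.ofReal_lt_top (ZA_ne_top hN a β hβ ha ha1 _).lt_top

lemma WA_integral {N : ℕ} (a β : ℝ) :
    ∫ z, WA a β Finset.univ z ∂(piN N a β) = (ZA a β (Finset.univ : Finset (Fin N))).toReal := by
  rw [integral_eq_lintegral_of_nonneg_ae (Filter.Eventually.of_forall fun z => (WA_pos _ _ _ _).le)
    (WA_meas a β _).aestronglyMeasurable]
  rfl

lemma ZA_pos {N : ℕ} (hN : 2 ≤ N) (a β : ℝ) (hβ : 1 ≤ β) (ha : 0 < a) (ha1 : a ≤ 1 / 16) :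
    0 < (ZA a β (Finset.univ : Finset (Fin N))).toReal := by
  have := piN_prob N a β hβ ha ha1
  refine ENNReal.toReal_pos ?_ (ZA_ne_top hN a β hβ ha ha1 _)
  unfold ZA
  have hm := WA_meas (N := N) a β Finset.univ
  rw [Ne, lintegral_eq_zero_iff (by fun_prop)]
  intro h
  have h2 : ∀ᵐ z ∂(piN N a β), False := by
    filter_upwards [h] with z hz
    have := WA_pos a β Finset.univ z
    simp at hz
    linarith
  simp at h2
  exact IsProbabilityMeasure.ne_zero _ h2

lemma fw_empty {N : ℕ} (a β : ℝ) (Z : Om N × Om N) :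
    fw a β ∅ Z = WA a β Finset.univ Z.1 * WA a β Finset.univ Z.2 := by
  unfold fw WA se
  rw [Finset.prod_empty, one_mul, Finset.compl_empty, ← Real.exp_sum, ← Real.exp_add]
  congr 1
  rw [← mul_add, ← Finset.sum_add_distrib, ← Finset.mul_sum]

/-- unnormalised expectation of a monomial -/
noncomputable def EE {N : ℕ} (a β : ℝ) (k l : Fin N → ℕ) : ℝ :=
  ∫ z, smon k l z * WA a β Finset.univ z ∂(piN N a β)

lemma phi_split {N : ℕ} (hN : 2 ≤ N) (a β : ℝ) (hβ : 1 ≤ β) (ha : 0 < a) (ha1 : a ≤ 1 / 16)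
    (k l k' l' : Fin N → ℕ) :
    ∫ Z, Phi k l k' l' Z * fw a β ∅ Z ∂(PP N a β) =
      2 * (EE a β (k + k') (l + l') * EE (N := N) a β 0 0 - EE a β k l * EE a β k' l') := by
  have := piN_prob N a β hβ ha ha1
  have I := fun k l => smon_int hN a β hβ ha ha1 k l
  have J := fun k l k' l' => (I k l).mul_prod (I k' l')
  have e : ∀ Z : Om N × Om N, Phi k l k' l' Z * fw a β ∅ Z =
      ((smon (k + k') (l + l') Z.1 * WA a β Finset.univ Z.1) * (smon 0 0 Z.2 * WA a β Finset.univ Z.2) +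
      (smon 0 0 Z.1 * WA a β Finset.univ Z.1) * (smon (k + k') (l + l') Z.2 * WA a β Finset.univ Z.2)) -
      ((smon k l Z.1 * WA a β Finset.univ Z.1) * (smon k' l' Z.2 * WA a β Finset.univ Z.2) +
      (smon k' l' Z.1 * WA a β Finset.univ Z.1) * (smon k l Z.2 * WA a β Finset.univ Z.2)) := by
    intro Z
    rw [fw_empty, smon_add, smon_add, smon_zero, smon_zero]
    unfold Phi
    ring
  simp only [e]
  unfold PP EE
  rw [integral_sub ((J _ _ _ _).fun_add (J _ _ _ _)) ((J _ _ _ _).fun_add (J _ _ _ _)),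
    integral_add (J _ _ _ _) (J _ _ _ _), integral_add (J _ _ _ _) (J _ _ _ _)]
  have M : ∀ k l k' l' : Fin N → ℕ, ∫ Z : Om N × Om N, (smon k l Z.1 * WA a β Finset.univ Z.1) *
      (smon k' l' Z.2 * WA a β Finset.univ Z.2) ∂((piN N a β).prod (piN N a β)) = 
      (∫ z, smon k l z * WA a β Finset.univ z ∂(piN N a β)) * ∫ z, smon k' l' z * WA a β Finset.univ z ∂(piN N a β) :=
    fun k l k' l' => integral_prod_mul (fun z => smon k l z * WA a β Finset.univ z)
      (fun z => smon k' l' z * WA a β Finset.univ z)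
  rw [M, M, M, M]
  ring

lemma EE_zero {N : ℕ} (a β : ℝ) :
    EE (N := N) a β 0 0 = (ZA a β (Finset.univ : Finset (Fin N))).toReal := by
  rw [← WA_integral]; unfold EE; simp only [smon_zero, one_mul]

/-- normalised expectation of a monomial -/
noncomputable def NE {N : ℕ} (a β : ℝ) (k l : Fin N → ℕ) : ℝ :=
  EE a β k l / (ZA a β (Finset.univ : Finset (Fin N))).toReal

lemma mono_cov {N : ℕ} (a β : ℝ) (hβ : 1 ≤ β) (ha : 0 < a) (ha1 : a ≤ 1 / 2 ^ 20)
    (p q t u : ℕ) (hpq : p ≤ q) (hqt : q < t) (htu : t ≤ u) (huN : u < N)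
    (k l k' l' : Fin N → ℕ) (hk : ∀ i : Fin N, ¬ (p ≤ (i : ℕ) ∧ (i : ℕ) ≤ q) → k i = 0 ∧ l i = 0)
    (hk' : ∀ i : Fin N, ¬ (t ≤ (i : ℕ) ∧ (i : ℕ) ≤ u) → k' i = 0 ∧ l' i = 0) :
    |NE a β (k + k') (l + l') - NE a β k l * NE a β k' l'| ≤
      3 * (2 ^ 42 * 256 ^ (2 * ((q - p) + (u - t) + 2)) *
        (2 ^ 20 * a) ^ (min (t - q - 1) (N - u + p - 1)) * (mom a β k l * mom a β k' l')) := by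
  have hN : 2 ≤ N := by omega
  have ha2 : a ≤ 1 / 16 := ha1.trans (by norm_num)
  have h := main_PP a β hβ ha ha1 p q t u hpq hqt htu huN k l k' l' hk hk'
  rw [phi_split hN a β hβ ha ha2, EE_zero] at h
  have hZ := ZA_pos hN a β hβ ha ha2
  unfold NE
  set Z := (ZA a β (Finset.univ : Finset (Fin N))).toReal
  set X := 2 ^ 42 * 256 ^ (2 * ((q - p) + (u - t) + 2)) *
        (2 ^ 20 * a) ^ (min (t - q - 1) (N - u + p - 1)) * (mom a β k l * mom a β k' l')
  have e : EE a β (k + k') (l + l') / Z - EE a β k l / Z * (EE a β k' l' / Z) =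
    (EE a β (k + k') (l + l') * Z - EE a β k l * EE a β k' l') / Z ^ 2 := by
    field_simp
  rw [e, abs_div, abs_of_pos (pow_pos hZ 2), div_le_iff₀ (pow_pos hZ 2)]
  rw [abs_mul, abs_two] at h
  have := abs_nonneg (EE a β (k + k') (l + l') * Z - EE a β k l * EE a β k' l')
  linarith

lemma mom_le {N : ℕ} (a β : ℝ) (hβ : 1 ≤ β) (ha1 : a ≤ 1 / 16)
    (k l : Fin N → ℕ) (r : ℕ) (hr : ∑ i, (k i + l i) = 2 * r) :
    mom a β k l ≤ r.factorial * (2 / (β * (1 - 2 * a))) ^ r := by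
  unfold mom
  have hp : 0 < β * (1 - 2 * a) := mul_pos (by linarith) (by linarith)
  rw [Finset.prod_mul_distrib, Finset.prod_pow_eq_pow_sum, hr, pow_mul]
  have h1 : Lam a β ^ 2 = 2 / (β * (1 - 2 * a)) := Real.sq_sqrt (by positivity)
  rw [h1]
  refine mul_le_mul_of_nonneg_right ?_ (by positivity)
  refine (gamma_prod_le Finset.univ (fun i => ((k i + l i : ℕ) : ℝ) / 2) fun i => by positivity).trans ?_
  rw [← Finset.sum_div, ← Nat.cast_sum, hr]
  rw [show ((2 * r : ℕ) : ℝ) / 2 = r by push_cast; ring, Real.Gamma_nat_eq_factorial]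


/-- exponents of the positions -/
def kx {N : ℕ} (d : (Fin N ⊕ Fin N) →₀ ℕ) : Fin N → ℕ := fun i => d (Sum.inl i)
/-- exponents of the momenta -/
def ky {N : ℕ} (d : (Fin N ⊕ Fin N) →₀ ℕ) : Fin N → ℕ := fun i => d (Sum.inr i)

lemma eval_smon {N : ℕ} (f : Pol N) (z : Om N) :
    MvPolynomial.eval (Sum.elim (toPh z).1 (toPh z).2) f =
      ∑ d ∈ f.support, MvPolynomial.coeff d f * smon (kx d) (ky d) z := by
  rw [MvPolynomial.eval_eq']
  refine Finset.sum_congr rfl fun d _ => ?_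
  rw [Fintype.prod_sum_type]
  unfold smon
  rw [Finset.prod_mul_distrib]
  rfl

lemma gAvg_eq {N : ℕ} (hN : 2 ≤ N) (a β : ℝ) (hβ : 1 ≤ β) (ha : 0 < a) (ha1 : a ≤ 1 / 16) (f : Pol N) :
    gAvg N a β f = ∑ d ∈ f.support, MvPolynomial.coeff d f * NE a β (kx d) (ky d) := by
  unfold gAvg
  rw [pAvg_eq N a β hβ ha ha1, WA_integral]
  simp only [eval_smon, Finset.sum_mul, mul_assoc]
  rw [integral_finsetSum _ fun d _ => (smon_int hN a β hβ ha ha1 _ _).const_mul _, Finset.sum_div]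
  refine Finset.sum_congr rfl fun d _ => ?_
  rw [integral_const_mul, mul_div_assoc]
  rfl

lemma gAvg_mul {N : ℕ} (hN : 2 ≤ N) (a β : ℝ) (hβ : 1 ≤ β) (ha : 0 < a) (ha1 : a ≤ 1 / 16) (f g : Pol N) :
    gAvg N a β (f * g) = ∑ d ∈ f.support, ∑ d' ∈ g.support, MvPolynomial.coeff d f * MvPolynomial.coeff d' g *
      NE a β (kx d + kx d') (ky d + ky d') := by
  unfold gAvg
  rw [pAvg_eq N a β hβ ha ha1, WA_integral]
  have e : ∀ z : Om N, MvPolynomial.eval (Sum.elim (toPh z).1 (toPh z).2) (f * g) * WA a β Finset.univ z =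
     ∑ d ∈ f.support, ∑ d' ∈ g.support, (MvPolynomial.coeff d f * MvPolynomial.coeff d' g) *
      (smon (kx d + kx d') (ky d + ky d') z * WA a β Finset.univ z) := by
    intro z
    rw [map_mul, eval_smon, eval_smon, Finset.sum_mul_sum, Finset.sum_mul]
    refine Finset.sum_congr rfl fun d _ => ?_
    rw [Finset.sum_mul]
    refine Finset.sum_congr rfl fun d' _ => ?_
    rw [smon_add]; ring
  simp only [e]
  have I := fun (d d' : (Fin N ⊕ Fin N) →₀ ℕ) => (smon_int hN a β hβ ha ha1 (kx d + kx d') (ky d + ky d')).const_mul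
    (MvPolynomial.coeff d f * MvPolynomial.coeff d' g)
  rw [integral_finsetSum _ fun d _ => integrable_finsetSum _ fun d' _ => I d d', Finset.sum_div]
  refine Finset.sum_congr rfl fun d _ => ?_
  rw [integral_finsetSum _ fun d' _ => I d d', Finset.sum_div]
  refine Finset.sum_congr rfl fun d' _ => ?_
  rw [integral_const_mul, mul_div_assoc]
  rfl

lemma pow_aux (x1 x2 x3 K K2 D a mu : ℝ) (h1 : 0 ≤ x1) (h2 : 0 ≤ x2) (h3 : 0 ≤ x3) (ha : 0 ≤ a) (hK : 0 ≤ K)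
    (c1 : x1 ≤ K ^ 4) (c2 : x2 ≤ K) (c3 : x3 ≤ K ^ 2) (hK2 : 1 ≤ K2) (hD : K ≤ D) (hmu : a ≤ mu) (m d : ℕ) :
    x1 * x2 ^ m * x3 ^ d * a ^ d ≤ K2 * D ^ (m + 2 * d + 4) * mu ^ d := by
  have hD0 : 0 ≤ D := hK.trans hD
  have hK20 : 0 ≤ K2 := by linarith
  calc x1 * x2 ^ m * x3 ^ d * a ^ d ≤ K ^ 4 * K ^ m * (K ^ 2) ^ d * a ^ d := by gcongr
    _ = 1 * K ^ (m + 2 * d + 4) * a ^ d := by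
        rw [pow_add, pow_add, pow_mul]; ring
    _ ≤ _ := by gcongr

lemma const_aux (K e : ℝ) (hK : 1 ≤ K) (he0 : 0 < e) (he1 : e ≤ 1 / 4) :
    1 ≤ (4 * (2 * K) ^ ((2 : ℝ) + 8 * e) / ((1 - 2 * e) ^ 4 * (1 - e) ^ 6)) := by
  have p1 : 0 < (1 - 2 * e) ^ 4 := pow_pos (by linarith) _
  have p2 : 0 < (1 - e) ^ 6 := pow_pos (by linarith) _
  rw [one_le_div (mul_pos p1 p2)]
  have h1 : (1:ℝ) ≤ (2 * K) ^ ((2 : ℝ) + 8 * e) := Real.one_le_rpow (by linarith) (by linarith)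
  have h2 : (1 - 2 * e) ^ 4 ≤ 1 := pow_le_one₀ (by linarith) (by linarith)
  have h3 : (1 - e) ^ 6 ≤ 1 := pow_le_one₀ (by linarith) (by linarith)
  have h4 := mul_le_mul h2 h3 p2.le zero_le_one
  linarith

lemma const_bound (a β K e : ℝ) (hβ : 1 < β) (ha : 0 < a) (hK1 : 1 ≤ K)
    (he0 : 0 < e) (he1 : e ≤ 1 / 4)
    (c1 : 3 * 2 ^ 42 * 256 ^ 4 ≤ K ^ 4) (c2 : 65536 ≤ K) (c3 : 2 ^ 20 ≤ K ^ 2) (m d : ℕ) :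
    3 * (2 ^ 42 * 256 ^ (2 * (m + 2)) * (2 ^ 20 * a) ^ d) ≤
      (4 * (2 * K) ^ ((2 : ℝ) + 8 * e) / ((1 - 2 * e) ^ 4 * (1 - e) ^ 6)) *
          (K * Real.sqrt (1 + 4 * a) / (1 - 3 / (4 * β ^ 2))) ^ (m + 2 * d + 4) *
          (a * (2 + a)) ^ d := by
  have hB0 : 0 < 3 / (4 * β ^ 2) := by positivity
  have hB1 : 3 / (4 * β ^ 2) < 1 := by
    rw [div_lt_one (by positivity)]; nlinarith
  have hs : 1 ≤ Real.sqrt (1 + 4 * a) := by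
    rw [Real.one_le_sqrt]; linarith
  have hD : K ≤ K * Real.sqrt (1 + 4 * a) / (1 - 3 / (4 * β ^ 2)) := by
    rw [le_div_iff₀ (by linarith)]
    have h1 : K * (1 - 3 / (4 * β ^ 2)) ≤ K * 1 := mul_le_mul_of_nonneg_left (by linarith) (by linarith)
    have h2 : K * 1 ≤ K * Real.sqrt (1 + 4 * a) := mul_le_mul_of_nonneg_left hs (by linarith)
    linarith
  have hK := const_aux K e hK1 he0 he1
  have hmu : a ≤ a * (2 + a) := by nlinarith
  have hK0 : 0 ≤ K := by linarith
  have e1 : 3 * (2 ^ 42 * 256 ^ (2 * (m + 2)) * (2 ^ 20 * a) ^ d) =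
      (3 * 2 ^ 42 * 256 ^ 4) * (65536 ^ m) * (2 ^ 20) ^ d * a ^ d := by
    rw [mul_pow (2 ^ 20) a, show (65536:ℝ) = 256 ^ 2 by norm_num, ← pow_mul 256,
      show 2 * (m + 2) = 2 * m + 4 by ring, pow_add 256]
    generalize (256:ℝ) ^ (2 * m) = A
    generalize ((2:ℝ) ^ 20) ^ d = B
    ring
  rw [e1]
  exact pow_aux _ _ _ K _ _ a _ (by norm_num) (by norm_num) (by norm_num) ha.le hK0 c1 c2 c3 hK hD hmu m d

lemma final_bound (N : ℕ) (a β : ℝ) (r s : ℕ) (φ ψ : Pol N) (p q t u : ℕ)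
        (ha : 0 < a) (ha0 : a < 1 / 2 ^ 20) (hβ : 1 < β)
        (hφ : φ.IsHomogeneous (2 * r)) (hψ : ψ.IsHomogeneous (2 * s))
        (hpq : p ≤ q) (hqt : q < t) (htu : t ≤ u) (huN : u < N)
        (hφsupp : ∀ dm ∈ φ.support, ∀ l ∈ siteSupport dm, p ≤ (l : ℕ) ∧ (l : ℕ) ≤ q)
        (hψsupp : ∀ dm ∈ ψ.support, ∀ l ∈ siteSupport dm, t ≤ (l : ℕ) ∧ (l : ℕ) ≤ u) :
    |gAvg N a β (φ * ψ) - gAvg N a β φ * gAvg N a β ψ| ≤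
      3 * (2 ^ 42 * 256 ^ (2 * ((q - p) + (u - t) + 2)) *
        (2 ^ 20 * a) ^ (min (t - q - 1) (N - u + p - 1))) *
          ((2 : ℝ) ^ (r + s) * (r.factorial : ℝ) * (s.factorial : ℝ) /
            ((1 - 2 * a) * β) ^ (r + s)) * pnorm φ * pnorm ψ := by
  have hN : 2 ≤ N := by omega
  have ha2 : a ≤ 1 / 16 := ha0.le.trans (by norm_num)
  have supp : ∀ (f : Pol N) (x y : ℕ), (∀ dm ∈ f.support, ∀ l ∈ siteSupport dm, x ≤ (l : ℕ) ∧ (l : ℕ) ≤ y) →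
      ∀ d ∈ f.support, ∀ i : Fin N, ¬ (x ≤ (i : ℕ) ∧ (i : ℕ) ≤ y) → kx d i = 0 ∧ ky d i = 0 := by
    intro f x y h d hd i hi
    by_contra hc
    refine hi (h d hd i ?_)
    unfold siteSupport
    rw [Finset.mem_filter]
    refine ⟨Finset.mem_univ _, ?_⟩
    unfold kx ky at hc
    tauto
  have deg : ∀ (f : Pol N) (n : ℕ), f.IsHomogeneous n → ∀ d ∈ f.support, ∑ i, (kx d i + ky d i) = n := by
    intro f n h d hd
    have h1 := h (MvPolynomial.mem_support_iff.1 hd)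
    rw [Finsupp.weight_apply, Finsupp.sum_fintype _ _ (by simp), Fintype.sum_sum_type] at h1
    rw [Finset.sum_add_distrib]
    simpa [kx, ky] using h1
  have hp : 0 < (1 - 2 * a) * β := mul_pos (by linarith) (by linarith)
  set C : ℝ := 3 * (2 ^ 42 * 256 ^ (2 * ((q - p) + (u - t) + 2)) *
        (2 ^ 20 * a) ^ (min (t - q - 1) (N - u + p - 1))) with hC
  set Mo : ℝ := ((2 : ℝ) ^ (r + s) * (r.factorial : ℝ) * (s.factorial : ℝ) /
            ((1 - 2 * a) * β) ^ (r + s)) with hMo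
  have hC0 : 0 ≤ C := by positivity
  have key : ∀ d ∈ φ.support, ∀ d' ∈ ψ.support,
      |NE a β (kx d + kx d') (ky d + ky d') - NE a β (kx d) (ky d) * NE a β (kx d') (ky d')| ≤ C * Mo := by
    intro d hd d' hd'
    refine (mono_cov a β hβ.le ha ha0.le p q t u hpq hqt htu huN _ _ _ _ (supp φ p q hφsupp d hd)
      (supp ψ t u hψsupp d' hd')).trans ?_
    have m1 := mom_le a β hβ.le ha2 (kx d) (ky d) r (deg φ _ hφ d hd)
    have m2 := mom_le a β hβ.le ha2 (kx d') (ky d') s (deg ψ _ hψ d' hd')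
    have m3 := mul_le_mul m1 m2 (mom_nonneg _ _ _ _) ((mom_nonneg _ _ _ _).trans m1)
    have e : (r.factorial * (2 / (β * (1 - 2 * a))) ^ r) * (s.factorial * (2 / (β * (1 - 2 * a))) ^ s) = Mo := by
      rw [hMo, mul_comm β, div_pow, div_pow, pow_add, pow_add]
      field_simp
    rw [e] at m3
    calc _ = C * (mom a β (kx d) (ky d) * mom a β (kx d') (ky d')) := by rw [hC]; ring
      _ ≤ _ := mul_le_mul_of_nonneg_left m3 hC0
  rw [gAvg_mul hN a β hβ.le ha ha2, gAvg_eq hN a β hβ.le ha ha2, gAvg_eq hN a β hβ.le ha ha2, Finset.sum_mul_sum,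
    ← Finset.sum_sub_distrib]
  simp only [← Finset.sum_sub_distrib]
  refine (Finset.abs_sum_le_sum_abs _ _).trans ?_
  have e2 : C * Mo * pnorm φ * pnorm ψ = ∑ d ∈ φ.support, ∑ d' ∈ ψ.support,
      |MvPolynomial.coeff d φ| * |MvPolynomial.coeff d' ψ| * (C * Mo) := by
    unfold pnorm
    rw [mul_assoc, Finset.sum_mul_sum, Finset.mul_sum]
    refine Finset.sum_congr rfl fun d _ => ?_
    rw [Finset.mul_sum]
    exact Finset.sum_congr rfl fun d' _ => by ring
  rw [e2]
  refine Finset.sum_le_sum fun d hd => (Finset.abs_sum_le_sum_abs _ _).trans (Finset.sum_le_sum fun d' hd' => ?_)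
  have e3 : MvPolynomial.coeff d φ * MvPolynomial.coeff d' ψ * NE a β (kx d + kx d') (ky d + ky d') -
      MvPolynomial.coeff d φ * NE a β (kx d) (ky d) * (MvPolynomial.coeff d' ψ * NE a β (kx d') (ky d')) =
      MvPolynomial.coeff d φ * MvPolynomial.coeff d' ψ *
      (NE a β (kx d + kx d') (ky d + ky d') - NE a β (kx d) (ky d) * NE a β (kx d') (ky d')) := by ring
  rw [e3, abs_mul, abs_mul]
  exact mul_le_mul_of_nonneg_left (key d hd d' hd') (by positivity)


/-- decay of correlations: there exist constants `a0 < 1/2`, `β0`,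
`K1 > 2`, independent of the chain length `N`, such that, with
`K2 = 4(2K1)^{2+8a0}/((1−2a0)⁴(1−a0)⁶)`, `μ# = a(2+a)`, `A1 = √(1+4a)`,
`A2 = √(1−2a)`, `B = 1−3/(4β²)`, `D = K1 A1/B`, for homogeneous polynomials `φ, ψ` of
degrees `2r, 2s` whose (site) supports lie in `{p,…,q}` and `{t,…,u}` respectively
(so with interaction lengths `m = q−p`, `m' = u−t`) and are disjoint at distance
`d = min(t−q−1, N−u+p−1)`, one has for all `β > β0`, `0 < a < a0`:
`|⟨φψ⟩ − ⟨φ⟩⟨ψ⟩| ≤ K2 · D^{m+m'+2d+4} · μ#^d · [2^{r+s} r! s!/(A2²β)^{r+s}] · ‖φ‖‖ψ‖`. -/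
theorem stmt13 :
    ∃ a0 β0 K1 : ℝ, 0 < a0 ∧ a0 < 1 / 2 ∧ 0 < β0 ∧ 2 < K1 ∧
      ∀ (N : ℕ) (a β : ℝ) (r s : ℕ) (φ ψ : Pol N) (p q t u : ℕ)
        (_ha : 0 < a) (_ha0 : a < a0) (_hβ : β0 < β)
        (_hφ : φ.IsHomogeneous (2 * r)) (_hψ : ψ.IsHomogeneous (2 * s))
        (_hpq : p ≤ q) (_hqt : q < t) (_htu : t ≤ u) (_huN : u < N)
        (_hφsupp : ∀ dm ∈ φ.support, ∀ l ∈ siteSupport dm, p ≤ (l : ℕ) ∧ (l : ℕ) ≤ q)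
        (_hψsupp : ∀ dm ∈ ψ.support, ∀ l ∈ siteSupport dm, t ≤ (l : ℕ) ∧ (l : ℕ) ≤ u),
        |gAvg N a β (φ * ψ) - gAvg N a β φ * gAvg N a β ψ| ≤
          (4 * (2 * K1) ^ ((2 : ℝ) + 8 * a0) / ((1 - 2 * a0) ^ 4 * (1 - a0) ^ 6)) *
          (K1 * Real.sqrt (1 + 4 * a) / (1 - 3 / (4 * β ^ 2))) ^
            ((q - p) + (u - t) + 2 * min (t - q - 1) (N - u + p - 1) + 4) *
          (a * (2 + a)) ^ (min (t - q - 1) (N - u + p - 1)) *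
          ((2 : ℝ) ^ (r + s) * (r.factorial : ℝ) * (s.factorial : ℝ) /
            ((1 - 2 * a) * β) ^ (r + s)) *
          pnorm φ * pnorm ψ := by
  refine ⟨1 / 2 ^ 20, 1, 2 ^ 60, by norm_num, by norm_num, by norm_num, by norm_num, ?_⟩
  intro N a β r s φ ψ p q t u ha ha0 hβ hφ hψ hpq hqt htu huN hφs hψs
  refine (final_bound N a β r s φ ψ p q t u ha ha0 hβ hφ hψ hpq hqt htu huN hφs hψs).trans ?_
  have hp : 0 < (1 - 2 * a) * β := mul_pos (by linarith) (by linarith)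
  have n1 : 0 ≤ pnorm φ := Finset.sum_nonneg fun _ _ => abs_nonneg _
  have n2 : 0 ≤ pnorm ψ := Finset.sum_nonneg fun _ _ => abs_nonneg _
  have c := const_bound a β (2 ^ 60) (1 / 2 ^ 20) hβ ha (by norm_num) (by norm_num) (by norm_num)
    (by norm_num) (by norm_num) (by norm_num) ((q - p) + (u - t)) (min (t - q - 1) (N - u + p - 1))
  refine mul_le_mul_of_nonneg_right (mul_le_mul_of_nonneg_right
    (mul_le_mul_of_nonneg_right c (by positivity)) n1) n2
end
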